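/- If a simplexwise linear immersion of a triangulated non-orientable surface Δ into ℝ³ has odd Euler characteristic and Δ contains no three pairwise vertex-disjoint triangles satisfying the piercing condition (at most 4 of the 6 adjacent triangles of each pair having all vertices among the pair's six vertices), then Δ admits no simplexwise linear immersion into ℝ³ with vertices in general position. -/

import Mathlib

open scoped Classical

/-- A finite combinatorial closed surface (triangulation of a closed surface):
a nonempty finite family of 3-element faces on a finite vertex set such that every
edge lies in exactly two faces, every vertex lies in a face, the surface is connected,
and the link of every vertex is connected (so every vertex link is a single cycle). -/
structure CombClosedSurface (V : Type*) [DecidableEq V] [Fintype V] where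
  faces : Finset (Finset V)
  faces_nonempty : faces.Nonempty
  face_card : ∀ t ∈ faces, t.card = 3
  edge_in_two_faces : ∀ e : Finset V, e.card = 2 → (∃ t ∈ faces, e ⊆ t) →
    (faces.filter fun t => e ⊆ t).card = 2
  vertex_in_face : ∀ v : V, ∃ t ∈ faces, v ∈ t
  connected : (SimpleGraph.fromRel fun u w => ∃ t ∈ faces, u ∈ t ∧ w ∈ t).Connected
  link_connected : ∀ v : V,
    ((SimpleGraph.fromRel fun u w => insert v ({u, w} : Finset V) ∈ faces).induce
      {u : V | u ≠ v ∧ ∃ t ∈ faces, v ∈ t ∧ u ∈ t}).Connected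

/-- The edges of a combinatorial closed surface. -/
def CombClosedSurface.edgeSet {V : Type*} [DecidableEq V] [Fintype V]
    (S : CombClosedSurface V) : Finset (Finset V) :=
  (Finset.powersetCard 2 (Finset.univ : Finset V)).filter fun e => ∃ t ∈ S.faces, e ⊆ t

/-- The combinatorial piercing condition for a pair of vertex-disjoint triangles
`t₁, t₂`: at most `4` of the `6` triangles adjacent to `t₁` or `t₂` (i.e. sharing one
of their six edges) have all three of their vertices among the six vertices of the
pair.  This is the necessary condition for the pair to intersect nondegenerately in a
simplexwise linear immersion. -/
def CombClosedSurface.PiercingCond {V : Type*} [DecidableEq V] [Fintype V]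
    (S : CombClosedSurface V) (t₁ t₂ : Finset V) : Prop :=
  ((Finset.powersetCard 2 t₁ ∪ Finset.powersetCard 2 t₂).filter
      fun e => ∃ t ∈ S.faces, e ⊆ t ∧ t ≠ t₁ ∧ t ≠ t₂ ∧ t ⊆ t₁ ∪ t₂).card ≤ 4

namespace NoTriple
open Module

/-- An alternating bilinear form has even rank. -/
theorem alt_even {K M : Type*} [Field K] [AddCommGroup M] [Module K M] [FiniteDimensional K M] :
    ∀ (m : ℕ) (B : M →ₗ[K] M →ₗ[K] K), (∀ x, B x x = 0) →
      finrank K (LinearMap.range B) = m → Even m := by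
  intro m
  induction m using Nat.strong_induction_on with
  | _ m ih =>
    intro B hB hm
    by_cases h0 : B = 0
    · subst h0
      rw [LinearMap.range_zero, finrank_bot] at hm
      rw [← hm]; exact Even.zero
    obtain ⟨x, y, hxy⟩ : ∃ x y, B x y = 1 := by
      by_contra hcon
      push Not at hcon
      apply h0
      ext x y
      by_contra hne
      have hne' : B x y ≠ 0 := hne
      exact hcon x ((B x y)⁻¹ • y) (by simp [hne'])
    have hanti : ∀ u v, B u v = - B v u := by
      intro u v
      have := hB (u + v)
      simp only [map_add, LinearMap.add_apply, hB] at this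
      linear_combination this
    have hyx : B y x = -1 := by rw [hanti, hxy]
    let C : M →ₗ[K] M →ₗ[K] K :=
      LinearMap.mk₂ K (fun u v => B u v - (B x u * B y v - B y u * B x v))
        (by intros; simp; ring) (by intros; simp; ring) (by intros; simp; ring)
        (by intros; simp; ring)
    have hC : ∀ u v, C u v = B u v - (B x u * B y v - B y u * B x v) := fun u v => rfl
    have hCalt : ∀ u, C u u = 0 := by intro u; rw [hC, hB]; ring
    let g : LinearMap.ker C →ₗ[K] K × K :=
      (LinearMap.prod (B x) (B y)).comp (LinearMap.ker C).subtype
    have hker : LinearMap.ker g = Submodule.comap (LinearMap.ker C).subtype (LinearMap.ker B) := by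
      ext ⟨u, hu⟩
      rw [LinearMap.mem_ker] at hu
      simp only [LinearMap.mem_ker, Submodule.mem_comap, Submodule.subtype_apply, g,
        LinearMap.comp_apply, LinearMap.prod_apply, Function.prod_apply, Prod.mk_eq_zero]
      constructor
      · rintro ⟨h1, h2⟩
        ext v
        have := LinearMap.congr_fun hu v
        rw [hC] at this
        simp only [h1, h2] at this
        simpa using this
      · intro h
        rw [hanti x u, hanti y u, h]; simp
    have hle : LinearMap.ker B ≤ LinearMap.ker C := by
      intro u hu
      rw [LinearMap.mem_ker] at hu ⊢
      ext v
      rw [hC, hanti x u, hanti y u, hu]; simp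
    have hsurj : LinearMap.range g = ⊤ := by
      rw [eq_top_iff]
      rintro ⟨p, q⟩ -
      have hx : x ∈ LinearMap.ker C := by
        rw [LinearMap.mem_ker]; ext v; rw [hC, hB, hyx]; simp
      have hy : y ∈ LinearMap.ker C := by
        rw [LinearMap.mem_ker]; ext v; rw [hC, hB, hxy]; simp
      refine ⟨p • ⟨y, hy⟩ - q • ⟨x, hx⟩, ?_⟩
      simp [g, hB, hxy, hyx]
    have e1 := g.finrank_range_add_finrank_ker
    rw [hsurj, finrank_top, hker, (Submodule.comapSubtypeEquivOfLe hle).finrank_eq,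
      finrank_prod, finrank_self] at e1
    have e2 := B.finrank_range_add_finrank_ker
    have e3 := C.finrank_range_add_finrank_ker
    have := ih (finrank K (LinearMap.range C)) (by omega) C hCalt rfl
    have hmm : m = finrank K (LinearMap.range C) + 2 := by omega
    rw [hmm]
    exact this.add (by decide)

/-- A symmetric form over `𝔽₂` with an isotropic characteristic vector has even rank. -/
theorem char_even {M : Type*} [AddCommGroup M] [Module (ZMod 2) M] [FiniteDimensional (ZMod 2) M]
    (B : M →ₗ[ZMod 2] M →ₗ[ZMod 2] ZMod 2) (n : M)
    (hs : ∀ x y, B x y = B y x)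
    (hn : ∀ x, B x x = B n x) (h0 : B n n = 0) :
    Even (finrank (ZMod 2) (LinearMap.range B)) := by
  let C : M →ₗ[ZMod 2] M →ₗ[ZMod 2] ZMod 2 :=
    LinearMap.mk₂ (ZMod 2) (fun u v => B u v - B n u * B n v)
      (by intros; simp; ring) (by intros; simp; ring) (by intros; simp; ring)
      (by intros; simp; ring)
  have hC : ∀ u v, C u v = B u v - B n u * B n v := fun u v => rfl
  have hCalt : ∀ u, C u u = 0 := by
    intro u; rw [hC, hn]; generalize B n u = z; revert z; decide
  have hker : LinearMap.ker C = LinearMap.ker B := by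
    ext u
    simp only [LinearMap.mem_ker]
    constructor
    · intro h
      have h1 := LinearMap.congr_fun h n
      rw [hC, h0, hs u n] at h1
      have h2 : B n u = 0 := by simpa using h1
      ext v
      have := LinearMap.congr_fun h v
      rw [hC, h2] at this
      simpa using this
    · intro h
      ext v
      rw [hC, hs n u, h]; simp
  have e2 := B.finrank_range_add_finrank_ker
  have e3 := C.finrank_range_add_finrank_ker
  rw [hker] at e3
  have : finrank (ZMod 2) (LinearMap.range B) = finrank (ZMod 2) (LinearMap.range C) := by omega
  rw [this]
  exact alt_even _ C hCalt rfl

end NoTriple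

namespace NoTriple

/-- Indicator of a proposition with values in `𝔽₂`. -/
noncomputable def ind (P : Prop) : ZMod 2 := if P then 1 else 0

theorem ind_true {P : Prop} (h : P) : ind P = 1 := by simp [ind, h]
theorem ind_false {P : Prop} (h : ¬ P) : ind P = 0 := by simp [ind, h]
theorem ind_congr {P Q : Prop} (h : P ↔ Q) : ind P = ind Q := by simp [ind, h]
theorem add_self2 (z : ZMod 2) : z + z = 0 := by revert z; decide
theorem eq_of_add2 {z w : ZMod 2} (h : z + w = 0) : z = w := by revert z w; decide

/-- The left half of the one dimensional parity lemma. -/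
theorem left_half {ι : Type*} [Fintype ι] (u w : ι → ℝ)
    (H : ∀ τ : ℝ, 0 < τ → τ < 1 → ∀ i j, i ≠ j → (1 - τ) * u i + τ * w i = 0 →
      (1 - τ) * u j + τ * w j = 0 → (∀ k, 0 ≤ (1 - τ) * u k + τ * w k) → False) :
    ind (∀ i, 0 < u i ∨ (u i = 0 ∧ 0 < w i)) +
      ∑ i, ind (u i < w i ∧ ∃ τ : ℝ, 0 < τ ∧ τ < 1 ∧ (1 - τ) * u i + τ * w i = 0 ∧
        ∀ j, j ≠ i → 0 < (1 - τ) * u j + τ * w j) =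
      ind (∃ τ : ℝ, 0 < τ ∧ τ < 1 ∧ ∀ i, 0 < (1 - τ) * u i + τ * w i) := by
  by_cases hU : ∃ τ : ℝ, 0 < τ ∧ τ < 1 ∧ ∀ i, 0 < (1 - τ) * u i + τ * w i
  · rw [ind_true hU]
    obtain ⟨σ, hσ0, hσ1, hσ⟩ := hU
    by_cases hG : ∀ i, 0 < u i ∨ (u i = 0 ∧ 0 < w i)
    · rw [ind_true hG, Finset.sum_eq_zero, add_zero]
      intro i _
      apply ind_false
      rintro ⟨hlt, τ, h0, h1, he, -⟩
      rcases hG i with h | ⟨h, h'⟩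
      · nlinarith
      · nlinarith
    · rw [ind_false hG, zero_add]
      -- the indices with negative value at the left end
      have hneg : ∃ i, u i < 0 := by
        push Not at hG
        obtain ⟨i, hi1, hi2⟩ := hG
        refine ⟨i, lt_of_le_of_ne hi1 fun h => ?_⟩
        have := hi2 h
        have := hσ i
        nlinarith
      obtain ⟨i₀, hi₀, hmax⟩ := Finset.exists_max_image (Finset.univ.filter fun i => u i < 0)
        (fun i => u i / (u i - w i)) (by obtain ⟨i, hi⟩ := hneg; exact ⟨i, by simp [hi]⟩)
      simp only [Finset.mem_filter, Finset.mem_univ, true_and] at hi₀ hmax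
      have hw : ∀ i, u i < 0 → u i < w i := by
        intro i hi; have := hσ i; by_contra hc; push Not at hc; nlinarith
      set τ := u i₀ / (u i₀ - w i₀) with hτ
      have hd : u i₀ - w i₀ < 0 := by linarith [hw _ hi₀]
      have hz : (1 - τ) * u i₀ + τ * w i₀ = 0 := by
        have := div_mul_cancel₀ (u i₀) hd.ne
        rw [← hτ] at this
        linarith
      have hτ0 : 0 < τ := div_pos_of_neg_of_neg hi₀ hd
      have hτσ : τ < σ := by
        by_contra hc; push Not at hc; have := hσ i₀; nlinarith
      have hnn : ∀ k, 0 ≤ (1 - τ) * u k + τ * w k := by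
        intro k
        by_cases hk : u k < 0
        · have h1 := hmax k hk
          have hdk : u k - w k < 0 := by linarith [hw _ hk]
          have h2 : u k ≥ τ * (u k - w k) := by
            rw [div_le_iff_of_neg hdk] at h1; exact h1
          nlinarith
        · push Not at hk
          have := hσ k
          by_cases hwk : 0 ≤ w k
          · have : 0 ≤ (1 - τ) * u k := mul_nonneg (by linarith) hk
            have : 0 ≤ τ * w k := mul_nonneg hτ0.le hwk
            linarith
          · push Not at hwk
            nlinarith
      rw [Finset.sum_eq_single i₀]
      · apply ind_true
        refine ⟨hw _ hi₀, τ, hτ0, by linarith, hz, fun j hj => ?_⟩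
        exact lt_of_le_of_ne (hnn j) fun h =>
          H τ hτ0 (by linarith) i₀ j hj.symm hz h.symm hnn
      · intro j _ hj
        apply ind_false
        rintro ⟨hlt, τ', h0', h1', hz', hp'⟩
        have a1 := hp' i₀ hj.symm
        have a2 := hnn j
        have a3 : τ < τ' := by
          by_contra hc; push Not at hc; nlinarith
        nlinarith
      · intro h; exact absurd (Finset.mem_univ _) h
  · rw [ind_false hU, ind_false, zero_add, Finset.sum_eq_zero]
    · intro i _
      apply ind_false
      rintro ⟨hlt, τ, h0, h1, hz, hp⟩
      apply hU
      -- move slightly to the right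
      have : ∀ᶠ σ in nhdsWithin τ (Set.Ioi τ), σ < 1 ∧ ∀ j, j ≠ i →
          0 < (1 - σ) * u j + σ * w j := by
        apply Filter.Eventually.and
        · exact (eventually_lt_nhds h1).filter_mono nhdsWithin_le_nhds
        · rw [Filter.eventually_all]
          intro j
          by_cases hj : j = i
          · simp [hj]
          · have hc : ContinuousAt (fun σ : ℝ => (1 - σ) * u j + σ * w j) τ := by fun_prop
            filter_upwards [(hc.eventually (lt_mem_nhds (hp j hj))).filter_mono
              nhdsWithin_le_nhds] with σ hσ _ using hσ
      obtain ⟨σ, ⟨hs1, hs⟩, hgt⟩ := (this.and self_mem_nhdsWithin).exists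
      have hgt' : τ < σ := hgt
      refine ⟨σ, by linarith, hs1, fun j => ?_⟩
      by_cases hj : j = i
      · subst hj; nlinarith
      · exact hs j hj
    · intro hG
      apply hU
      have : ∀ᶠ σ in nhdsWithin (0 : ℝ) (Set.Ioi 0), σ < 1 ∧ ∀ j,
          0 < (1 - σ) * u j + σ * w j := by
        apply Filter.Eventually.and
        · exact (eventually_lt_nhds one_pos).filter_mono nhdsWithin_le_nhds
        · rw [Filter.eventually_all]
          intro j
          rcases hG j with h | ⟨h, h'⟩
          · have hc : ContinuousAt (fun σ : ℝ => (1 - σ) * u j + σ * w j) 0 := by fun_prop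
            exact (hc.eventually (lt_mem_nhds (by simpa using h))).filter_mono
              nhdsWithin_le_nhds
          · filter_upwards [self_mem_nhdsWithin] with σ hσ
            have : 0 < σ := hσ
            rw [h]; nlinarith
      obtain ⟨σ, ⟨hs1, hs⟩, hgt⟩ := (this.and self_mem_nhdsWithin).exists
      exact ⟨σ, hgt, hs1, hs⟩

/-- The one dimensional parity lemma: the set where finitely many affine functions on an
interval are all positive is an interval, and its two ends are either ends of the given
interval or transversal zeros of exactly one of the functions. -/
theorem one_dim {ι : Type*} [Fintype ι] (u w : ι → ℝ)
    (H : ∀ τ : ℝ, 0 < τ → τ < 1 → ∀ i j, i ≠ j → (1 - τ) * u i + τ * w i = 0 →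
      (1 - τ) * u j + τ * w j = 0 → (∀ k, 0 ≤ (1 - τ) * u k + τ * w k) → False)
    (H' : ∀ i, (∃ τ : ℝ, 0 < τ ∧ τ < 1 ∧ (1 - τ) * u i + τ * w i = 0 ∧
        ∀ j, j ≠ i → 0 < (1 - τ) * u j + τ * w j) → ¬ (u i = 0 ∧ w i = 0)) :
    ind (∀ i, 0 < u i ∨ (u i = 0 ∧ 0 < w i)) + ind (∀ i, 0 < w i ∨ (w i = 0 ∧ 0 < u i)) +
      ∑ i, ind (∃ τ : ℝ, 0 < τ ∧ τ < 1 ∧ (1 - τ) * u i + τ * w i = 0 ∧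
        ∀ j, j ≠ i → 0 < (1 - τ) * u j + τ * w j) = 0 := by
  have h1 := left_half u w H
  have h2 := left_half w u (by
    intro τ h0 h1 i j hij hi hj hk
    refine H (1 - τ) (by linarith) (by linarith) i j hij (by linarith) (by linarith)
      fun k => by linarith [hk k])
  have flip : ∀ P : ℝ → Prop, (∃ τ : ℝ, 0 < τ ∧ τ < 1 ∧ P τ) ↔
      (∃ τ : ℝ, 0 < τ ∧ τ < 1 ∧ P (1 - τ)) := by
    intro P
    constructor
    · rintro ⟨τ, a, b, c⟩
      exact ⟨1 - τ, by linarith, by linarith, by simpa using c⟩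
    · rintro ⟨τ, a, b, c⟩
      exact ⟨1 - τ, by linarith, by linarith, c⟩
  have e1 : (∃ τ : ℝ, 0 < τ ∧ τ < 1 ∧ ∀ i, 0 < (1 - τ) * w i + τ * u i) ↔
      (∃ τ : ℝ, 0 < τ ∧ τ < 1 ∧ ∀ i, 0 < (1 - τ) * u i + τ * w i) := by
    rw [flip]
    simp only [sub_sub_cancel]
    simp only [add_comm]
  have e2 : ∀ i, (∃ τ : ℝ, 0 < τ ∧ τ < 1 ∧ (1 - τ) * w i + τ * u i = 0 ∧
        ∀ j, j ≠ i → 0 < (1 - τ) * w j + τ * u j) ↔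
      (∃ τ : ℝ, 0 < τ ∧ τ < 1 ∧ (1 - τ) * u i + τ * w i = 0 ∧
        ∀ j, j ≠ i → 0 < (1 - τ) * u j + τ * w j) := by
    intro i
    rw [flip]
    simp only [sub_sub_cancel]
    simp only [add_comm]
  have e3 : ∑ i, ind (∃ τ : ℝ, 0 < τ ∧ τ < 1 ∧ (1 - τ) * u i + τ * w i = 0 ∧
        ∀ j, j ≠ i → 0 < (1 - τ) * u j + τ * w j) =
      ∑ i, ind (u i < w i ∧ ∃ τ : ℝ, 0 < τ ∧ τ < 1 ∧ (1 - τ) * u i + τ * w i = 0 ∧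
        ∀ j, j ≠ i → 0 < (1 - τ) * u j + τ * w j) +
      ∑ i, ind (w i < u i ∧ ∃ τ : ℝ, 0 < τ ∧ τ < 1 ∧ (1 - τ) * w i + τ * u i = 0 ∧
        ∀ j, j ≠ i → 0 < (1 - τ) * w j + τ * u j) := by
    rw [← Finset.sum_add_distrib]
    refine Finset.sum_congr rfl fun i _ => ?_
    rw [e2 i]
    by_cases hZ : ∃ τ : ℝ, 0 < τ ∧ τ < 1 ∧ (1 - τ) * u i + τ * w i = 0 ∧
        ∀ j, j ≠ i → 0 < (1 - τ) * u j + τ * w j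
    · have hne := H' i hZ
      have hne2 : u i ≠ w i := by
        intro h
        obtain ⟨τ, _, _, h3, _⟩ := hZ
        apply hne
        have : w i = 0 := by rw [h] at h3; linarith
        exact ⟨by rw [h]; exact this, this⟩
      rcases lt_or_gt_of_ne hne2 with h | h
      · rw [ind_true hZ, ind_true ⟨h, hZ⟩, ind_false (fun c => absurd c.1 (not_lt.2 h.le)),
          add_zero]
      · rw [ind_true hZ, ind_true (P := _ ∧ _) ⟨h, hZ⟩,
          ind_false (P := _ < _ ∧ _) (fun c => absurd c.1 (not_lt.2 h.le)), zero_add]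
    · rw [ind_false hZ, ind_false (fun c => hZ c.2), ind_false (fun c => hZ c.2), add_zero]
  rw [e1] at h2
  rw [e3]
  calc _ = _ := by abel
    _ = _ := congrArg₂ (· + ·) h1 h2
    _ = 0 := add_self2 _

end NoTriple

namespace NoTriple

section Comb
variable {V : Type*} [DecidableEq V] [Fintype V] (S : CombClosedSurface V)

theorem mem_edgeSet {e : Finset V} :
    e ∈ S.edgeSet ↔ e.card = 2 ∧ ∃ t ∈ S.faces, e ⊆ t := by
  simp [CombClosedSurface.edgeSet, Finset.mem_powersetCard]

theorem erase_mem_edgeSet {t : Finset V} (ht : t ∈ S.faces) {i : V} (hi : i ∈ t) :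
    t.erase i ∈ S.edgeSet := by
  rw [mem_edgeSet]
  refine ⟨?_, t, ht, Finset.erase_subset _ _⟩
  rw [Finset.card_erase_of_mem hi, S.face_card t ht]

theorem pair_mem_edgeSet {t : Finset V} (ht : t ∈ S.faces) {i j : V} (hi : i ∈ t) (hj : j ∈ t)
    (hij : i ≠ j) : ({i, j} : Finset V) ∈ S.edgeSet := by
  rw [mem_edgeSet]
  refine ⟨Finset.card_pair hij, t, ht, ?_⟩
  intro x hx
  simp only [Finset.mem_insert, Finset.mem_singleton] at hx
  rcases hx with rfl | rfl <;> assumption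

theorem face_eq_of_subset {t t' : Finset V} (ht : t ∈ S.faces) (ht' : t' ∈ S.faces)
    (h : t ⊆ t') : t = t' :=
  Finset.eq_of_subset_of_card_le h (by rw [S.face_card t ht, S.face_card t' ht'])

theorem two_faces {e : Finset V} (he : e ∈ S.edgeSet) :
    ∃ t t', t ≠ t' ∧ (S.faces.filter fun t => e ⊆ t) = {t, t'} := by
  rw [mem_edgeSet] at he
  have := S.edge_in_two_faces e he.1 he.2
  rw [Finset.card_eq_two] at this
  obtain ⟨x, y, hxy, h⟩ := this
  exact ⟨x, y, hxy, h⟩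

/-- The face on the other side of an edge. -/
theorem other_face {e t : Finset V} (he : e.card = 2) (ht : t ∈ S.faces) (het : e ⊆ t) :
    ∃ t' ∈ S.faces, e ⊆ t' ∧ t' ≠ t ∧ (S.faces.filter fun r => e ⊆ r) = {t, t'} := by
  obtain ⟨x, y, hxy, h⟩ := two_faces S (e := e) (by rw [mem_edgeSet]; exact ⟨he, t, ht, het⟩)
  have hx : x ∈ S.faces.filter fun r => e ⊆ r := by rw [h]; simp
  have hy : y ∈ S.faces.filter fun r => e ⊆ r := by rw [h]; simp
  have htt : t ∈ S.faces.filter fun r => e ⊆ r := by simp [ht, het]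
  rw [h] at htt
  simp only [Finset.mem_filter] at hx hy
  simp only [Finset.mem_insert, Finset.mem_singleton] at htt
  rcases htt with rfl | rfl
  · exact ⟨y, hy.1, hy.2, hxy.symm, h⟩
  · exact ⟨x, hx.1, hx.2, hxy, by rw [h, Finset.pair_comm]⟩

theorem eq_or_of_filter {e t t' r : Finset V}
    (h : (S.faces.filter fun r => e ⊆ r) = {t, t'}) (hr : r ∈ S.faces) (her : e ⊆ r) :
    r = t ∨ r = t' := by
  have : r ∈ S.faces.filter fun r => e ⊆ r := by simp [hr, her]
  rw [h] at this
  simpa using this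

/-- Double counting of the incident pairs (edge, face). -/
theorem edge_face_sum {R : Type*} [AddCommMonoid R] (φ : Finset V → Finset V → R) :
    ∑ e ∈ S.edgeSet, ∑ t ∈ S.faces.filter (fun t => e ⊆ t), φ e t =
      ∑ t ∈ S.faces, ∑ i ∈ t, φ (t.erase i) t := by
  rw [Finset.sum_comm' (t' := S.faces) (s' := fun t => S.edgeSet.filter fun e => e ⊆ t)]
  · refine Finset.sum_congr rfl fun t ht => ?_
    symm
    refine Finset.sum_bij (fun i _ => t.erase i) ?_ ?_ ?_ ?_
    · intro i hi
      simp [erase_mem_edgeSet S ht hi, Finset.erase_subset]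
    · intro i hi j hj h
      by_contra hne
      have : j ∈ t.erase i := Finset.mem_erase.2 ⟨Ne.symm hne, hj⟩
      rw [h] at this
      simp at this
    · intro e he
      simp only [Finset.mem_filter, mem_edgeSet] at he
      have h1 : (t \ e).card = 1 := by
        rw [Finset.card_sdiff_of_subset he.2, S.face_card t ht, he.1.1]
      obtain ⟨i, hi⟩ := Finset.card_eq_one.1 h1
      refine ⟨i, ?_, ?_⟩
      · have : i ∈ t \ e := by rw [hi]; simp
        exact (Finset.mem_sdiff.1 this).1
      · rw [Finset.erase_eq, ← hi, Finset.sdiff_sdiff_eq_self he.2]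
    · intros; rfl
  · intro e t
    simp only [Finset.mem_filter]
    tauto

theorem edge_sum_two {R : Type*} [CommSemiring R] (Φ : Finset V → R) :
    ∑ t ∈ S.faces, ∑ i ∈ t, Φ (t.erase i) = 2 * ∑ e ∈ S.edgeSet, Φ e := by
  rw [← edge_face_sum S (fun e _ => Φ e), Finset.mul_sum]
  refine Finset.sum_congr rfl fun e he => ?_
  obtain ⟨x, y, hxy, h⟩ := two_faces S he
  rw [h, Finset.sum_pair hxy, two_mul]

theorem edge_parity (Φ : Finset V → ZMod 2) :
    ∑ t ∈ S.faces, ∑ i ∈ t, Φ (t.erase i) = 0 := by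
  rw [edge_sum_two]
  have : (2 : ZMod 2) = 0 := rfl
  rw [this, zero_mul]

theorem sum_erase_tri {R : Type*} [AddCommMonoid R] (Φ : Finset V → R) {a b c : V} (hab : a ≠ b)
    (hac : a ≠ c) (hbc : b ≠ c) :
    ∑ i ∈ ({a, b, c} : Finset V), Φ (({a, b, c} : Finset V).erase i) =
      Φ {b, c} + (Φ {a, c} + Φ {a, b}) := by
  rw [Finset.sum_insert (by simp [hab, hac]), Finset.sum_pair hbc]
  congr 2
  · congr 1; ext x; simp; grind
  · congr 1; ext x; simp; grind
  · congr 1; ext x; simp; grind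

/-- A function on faces that does not change across edges through `v` is constant on the
star of `v`. -/
theorem star_const {α : Type*} (v : V) (φ : Finset V → α)
    (h : ∀ e ∈ S.edgeSet, v ∈ e → ∀ t ∈ S.faces, ∀ t' ∈ S.faces, e ⊆ t → e ⊆ t' → φ t = φ t') :
    ∀ t ∈ S.faces, v ∈ t → ∀ t' ∈ S.faces, v ∈ t' → φ t = φ t' := by
  set G := ((SimpleGraph.fromRel fun u w => insert v ({u, w} : Finset V) ∈ S.faces).induce
      {u : V | u ≠ v ∧ ∃ t ∈ S.faces, v ∈ t ∧ u ∈ t}) with hG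
  have hc : G.Connected := S.link_connected v
  have key : ∀ (x y : {u : V | u ≠ v ∧ ∃ t ∈ S.faces, v ∈ t ∧ u ∈ t}), G.Reachable x y →
      ∀ t ∈ S.faces, v ∈ t → x.1 ∈ t → ∀ t' ∈ S.faces, v ∈ t' → y.1 ∈ t' → φ t = φ t' := by
    intro x y hxy
    obtain ⟨p⟩ := hxy
    induction p with
    | nil =>
      rename_i x
      intro t ht hvt hxt t' ht' hvt' hxt'
      have hx : x.1 ≠ v := x.2.1
      refine h {v, x.1} (pair_mem_edgeSet S ht hvt hxt hx.symm) (by simp) t ht t' ht' ?_ ?_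
      · intro z hz; simp at hz; rcases hz with rfl | rfl <;> assumption
      · intro z hz; simp at hz; rcases hz with rfl | rfl <;> assumption
    | cons hadj p ih =>
      rename_i x z y
      intro t ht hvt hxt t' ht' hvt' hyt'
      have hx : x.1 ≠ v := x.2.1
      have hface : ∃ r ∈ S.faces, v ∈ r ∧ x.1 ∈ r ∧ z.1 ∈ r := by
        simp only [hG, SimpleGraph.induce_adj, SimpleGraph.fromRel_adj] at hadj
        rcases hadj.2 with h1 | h1
        · exact ⟨_, h1, by simp, by simp, by simp⟩
        · exact ⟨_, h1, by simp, by simp, by simp⟩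
      obtain ⟨r, hr, hvr, hxr, hzr⟩ := hface
      have h1 : φ t = φ r := by
        refine h {v, x.1} (pair_mem_edgeSet S ht hvt hxt hx.symm) (by simp) t ht r hr ?_ ?_
        · intro z hz; simp at hz; rcases hz with rfl | rfl <;> assumption
        · intro z hz; simp at hz; rcases hz with rfl | rfl <;> assumption
      rw [h1]
      exact ih r hr hvr hzr t' ht' hvt' hyt'
  intro t ht hvt t' ht' hvt'
  have ex : ∀ r ∈ S.faces, v ∈ r → ∃ u ∈ r, u ≠ v := by
    intro r hr hvr
    have : 1 < r.card := by rw [S.face_card r hr]; norm_num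
    exact Finset.exists_mem_ne this v
  obtain ⟨u, hu, huv⟩ := ex t ht hvt
  obtain ⟨w, hw, hwv⟩ := ex t' ht' hvt'
  exact key ⟨u, huv, t, ht, hvt, hu⟩ ⟨w, hwv, t', ht', hvt', hw⟩ (hc.preconnected _ _)
    t ht hvt hu t' ht' hvt' hw

theorem vertex_const {α : Type*} (f : V → α)
    (h : ∀ t ∈ S.faces, ∀ u ∈ t, ∀ w ∈ t, f u = f w) : ∀ u w, f u = f w := by
  intro u w
  obtain ⟨p⟩ := S.connected.preconnected u w
  induction p with
  | nil => rfl
  | cons hadj p ih =>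
    rw [← ih]
    rw [SimpleGraph.fromRel_adj] at hadj
    rcases hadj.2 with ⟨t, ht, h1, h2⟩ | ⟨t, ht, h1, h2⟩
    · exact h t ht _ h1 _ h2
    · exact h t ht _ h2 _ h1

/-- A function on faces that does not change across edges is constant. -/
theorem face_const {α : Type*} (φ : Finset V → α)
    (h : ∀ e ∈ S.edgeSet, ∀ t ∈ S.faces, ∀ t' ∈ S.faces, e ⊆ t → e ⊆ t' → φ t = φ t') :
    ∀ t ∈ S.faces, ∀ t' ∈ S.faces, φ t = φ t' := by
  have hs := fun v => star_const S v φ (fun e he _ => h e he)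
  choose r hr hvr using S.vertex_in_face
  have hv := vertex_const S (fun v => φ (r v)) (by
    intro t ht u hu w hw
    rw [hs u (r u) (hr u) (hvr u) t ht hu, hs w t ht hw (r w) (hr w) (hvr w)])
  intro t ht t' ht'
  have ex : ∀ r ∈ S.faces, ∃ u, u ∈ r := by
    intro r hr
    have : 0 < r.card := by rw [S.face_card r hr]; norm_num
    exact Finset.card_pos.1 this
  obtain ⟨u, hu⟩ := ex t ht
  obtain ⟨w, hw⟩ := ex t' ht'
  rw [hs u t ht hu (r u) (hr u) (hvr u), hs w t' ht' hw (r w) (hr w) (hvr w)]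
  exact hv u w

end Comb
end NoTriple

namespace NoTriple

section Abs
variable {V : Type*} [DecidableEq V] [Fintype V] (S : CombClosedSurface V)

/-- An ordering of the vertices of every face compatible with an injective rank. -/
structure Ord where
  rk : V → ℕ
  inj : Function.Injective rk
  a : Finset V → V
  b : Finset V → V
  c : Finset V → V
  hab : ∀ t ∈ S.faces, rk (a t) < rk (b t)
  hbc : ∀ t ∈ S.faces, rk (b t) < rk (c t)
  heq : ∀ t ∈ S.faces, t = {a t, b t, c t}

theorem exists_ord : Nonempty (Ord S) := by
  obtain ⟨rk, hrk⟩ : ∃ rk : V → ℕ, Function.Injective rk :=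
    ⟨fun v => (Fintype.equivFin V v : ℕ), fun x y h => by
      have := Fin.ext h
      exact (Fintype.equivFin V).injective this⟩
  have key : ∀ t : Finset V, ∃ p : V × V × V, t ∈ S.faces →
      rk p.1 < rk p.2.1 ∧ rk p.2.1 < rk p.2.2 ∧ t = {p.1, p.2.1, p.2.2} := by
    intro t
    by_cases ht : t ∈ S.faces
    · obtain ⟨x, y, z, hxy, hxz, hyz, h⟩ := Finset.card_eq_three.1 (S.face_card t ht)
      have h1 : rk x ≠ rk y := fun h => hxy (hrk h)
      have h2 : rk x ≠ rk z := fun h => hxz (hrk h)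
      have h3 : rk y ≠ rk z := fun h => hyz (hrk h)
      rcases lt_or_gt_of_ne h1 with h1 | h1 <;> rcases lt_or_gt_of_ne h2 with h2 | h2 <;>
        rcases lt_or_gt_of_ne h3 with h3 | h3
      · exact ⟨(x, y, z), fun _ => ⟨h1, h3, h⟩⟩
      · exact ⟨(x, z, y), fun _ => ⟨h2, h3, by rw [h]; ext; simp; tauto⟩⟩
      · omega
      · exact ⟨(z, x, y), fun _ => ⟨h2, h1, by rw [h]; ext; simp; tauto⟩⟩
      · exact ⟨(y, x, z), fun _ => ⟨h1, h2, by rw [h]; ext; simp; tauto⟩⟩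
      · omega
      · exact ⟨(y, z, x), fun _ => ⟨h3, h2, by rw [h]; ext; simp; tauto⟩⟩
      · exact ⟨(z, y, x), fun _ => ⟨h3, h1, by rw [h]; ext; simp; tauto⟩⟩
    · obtain ⟨t0, ht0⟩ := S.faces_nonempty
      obtain ⟨x, _⟩ := Finset.card_pos.1 (show 0 < t0.card by rw [S.face_card t0 ht0]; norm_num)
      exact ⟨(x, x, x), fun h => absurd h ht⟩
  choose p hp using key
  exact ⟨⟨rk, hrk, fun t => (p t).1, fun t => (p t).2.1, fun t => (p t).2.2,
    fun t ht => (hp t ht).1, fun t ht => (hp t ht).2.1, fun t ht => (hp t ht).2.2⟩⟩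

variable {S} (O : Ord S)

theorem Ord.ne_ab {t} (ht : t ∈ S.faces) : O.a t ≠ O.b t := fun h => by
  have := O.hab t ht; rw [h] at this; omega
theorem Ord.ne_bc {t} (ht : t ∈ S.faces) : O.b t ≠ O.c t := fun h => by
  have := O.hbc t ht; rw [h] at this; omega
theorem Ord.ne_ac {t} (ht : t ∈ S.faces) : O.a t ≠ O.c t := fun h => by
  have := O.hbc t ht; have := O.hab t ht; rw [h] at this; omega
theorem Ord.mem_a {t} (ht : t ∈ S.faces) : O.a t ∈ t := by
  have := O.heq t ht
  have h : O.a t ∈ ({O.a t, O.b t, O.c t} : Finset V) := by simp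
  rwa [← this] at h
theorem Ord.mem_b {t} (ht : t ∈ S.faces) : O.b t ∈ t := by
  have := O.heq t ht
  have h : O.b t ∈ ({O.a t, O.b t, O.c t} : Finset V) := by simp
  rwa [← this] at h
theorem Ord.mem_c {t} (ht : t ∈ S.faces) : O.c t ∈ t := by
  have := O.heq t ht
  have h : O.c t ∈ ({O.a t, O.b t, O.c t} : Finset V) := by simp
  rwa [← this] at h
theorem Ord.mem_iff {t} (ht : t ∈ S.faces) (v : V) : v ∈ t ↔ v = O.a t ∨ v = O.b t ∨ v = O.c t := by
  have := O.heq t ht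
  constructor
  · intro h; rw [this] at h; simpa using h
  · rintro (rfl | rfl | rfl)
    · exact O.mem_a ht
    · exact O.mem_b ht
    · exact O.mem_c ht

theorem Ord.sum_erase {R : Type*} [AddCommMonoid R] (Φ : Finset V → R) {t} (ht : t ∈ S.faces) :
    ∑ i ∈ t, Φ (t.erase i) = Φ {O.b t, O.c t} + (Φ {O.a t, O.c t} + Φ {O.a t, O.b t}) := by
  have := sum_erase_tri Φ (O.ne_ab ht) (O.ne_ac ht) (O.ne_bc ht)
  rw [← O.heq t ht] at this
  exact this

/-- Sum over edges and incident faces, in terms of the ordering. -/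
theorem Ord.edge_face {R : Type*} [AddCommMonoid R] (φ : Finset V → Finset V → R) :
    ∑ e ∈ S.edgeSet, ∑ t ∈ S.faces.filter (fun t => e ⊆ t), φ e t =
      ∑ t ∈ S.faces, (φ {O.b t, O.c t} t + (φ {O.a t, O.c t} t + φ {O.a t, O.b t} t)) := by
  rw [edge_face_sum]
  exact Finset.sum_congr rfl fun t ht => O.sum_erase (fun e => φ e t) ht

def Ord.IsZ (x : Finset V → ZMod 2) : Prop :=
  ∀ t ∈ S.faces, x {O.b t, O.c t} + (x {O.a t, O.c t} + x {O.a t, O.b t}) = 0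

def Ord.Q (x y : Finset V → ZMod 2) : ZMod 2 :=
  ∑ t ∈ S.faces, x {O.a t, O.b t} * y {O.b t, O.c t}

theorem Ord.Q_symm {x y} (hx : O.IsZ x) (hy : O.IsZ y) : O.Q x y = O.Q y x := by
  apply eq_of_add2
  unfold Ord.Q
  rw [← Finset.sum_add_distrib, ← edge_parity S (fun e => x e * y e)]
  refine Finset.sum_congr rfl fun t ht => ?_
  rw [O.sum_erase (fun e => x e * y e) ht]
  have h1 := hx t ht
  have h2 := hy t ht
  generalize x {O.a t, O.b t} = p at *
  generalize x {O.b t, O.c t} = q at *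
  generalize x {O.a t, O.c t} = r at *
  generalize y {O.a t, O.b t} = p' at *
  generalize y {O.b t, O.c t} = q' at *
  generalize y {O.a t, O.c t} = r' at *
  revert p q r p' q' r'
  decide

theorem Ord.Q_self {x} (hx : O.IsZ x) (fold s : Finset V → ZMod 2)
    (hfold : ∀ e ∈ S.edgeSet, fold e = 1 + ∑ t ∈ S.faces.filter (fun t => e ⊆ t),
      ((if e = {O.a t, O.c t} then 1 else 0) + s t)) :
    O.Q x x = ∑ e ∈ S.edgeSet, fold e * x e := by
  have h1 : ∑ e ∈ S.edgeSet, fold e * x e = ∑ e ∈ S.edgeSet, x e +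
      ∑ e ∈ S.edgeSet, ∑ t ∈ S.faces.filter (fun t => e ⊆ t),
        ((if e = {O.a t, O.c t} then 1 else 0) + s t) * x e := by
    rw [← Finset.sum_add_distrib]
    refine Finset.sum_congr rfl fun e he => ?_
    rw [hfold e he, add_mul, one_mul, Finset.sum_mul]
  have h2 : ∑ e ∈ S.edgeSet, ∑ t ∈ S.faces.filter (fun t => e ⊆ t),
        ((if e = {O.a t, O.c t} then 1 else 0) + s t) * x e = ∑ t ∈ S.faces, x {O.a t, O.c t} := by
    rw [O.edge_face (fun e t => ((if e = {O.a t, O.c t} then 1 else 0) + s t) * x e)]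
    refine Finset.sum_congr rfl fun t ht => ?_
    have n1 : ({O.b t, O.c t} : Finset V) ≠ {O.a t, O.c t} := by
      intro h
      have : O.a t ∈ ({O.b t, O.c t} : Finset V) := by rw [h]; simp
      simp [O.ne_ab ht, O.ne_ac ht] at this
    have n2 : ({O.a t, O.b t} : Finset V) ≠ {O.a t, O.c t} := by
      intro h
      have : O.c t ∈ ({O.a t, O.b t} : Finset V) := by rw [h]; simp
      simp [(O.ne_bc ht).symm, (O.ne_ac ht).symm] at this
    simp only [n1, n2, if_true, if_false]
    have := hx t ht
    linear_combination s t * this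
  have h3 : ∑ e ∈ S.edgeSet, (x e).val = ∑ t ∈ S.faces, (x {O.a t, O.c t}).val +
      ∑ t ∈ S.faces, (x {O.a t, O.b t}).val * (x {O.b t, O.c t}).val := by
    have h4 := edge_sum_two S (fun e => (x e).val)
    have h5 : ∑ t ∈ S.faces, ∑ i ∈ t, (x (t.erase i)).val =
        2 * (∑ t ∈ S.faces, (x {O.a t, O.c t}).val +
      ∑ t ∈ S.faces, (x {O.a t, O.b t}).val * (x {O.b t, O.c t}).val) := by
      rw [← Finset.sum_add_distrib, Finset.mul_sum]
      refine Finset.sum_congr rfl fun t ht => ?_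
      rw [O.sum_erase (fun e => (x e).val) ht]
      have h1 := hx t ht
      generalize x {O.a t, O.b t} = p at *
      generalize x {O.b t, O.c t} = q at *
      generalize x {O.a t, O.c t} = r at *
      revert p q r
      decide
    omega
  have h4 := congrArg (Nat.cast : ℕ → ZMod 2) h3
  push_cast at h4
  simp only [ZMod.natCast_val, ZMod.cast_id', id_eq] at h4
  rw [h1, h2, h4]
  unfold Ord.Q
  generalize ∑ t ∈ S.faces, x {O.a t, O.c t} = p
  generalize ∑ t ∈ S.faces, x {O.a t, O.b t} * x {O.b t, O.c t} = q
  revert p q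
  decide

theorem Ord.exists_min : ∃ mn : Finset V → V, ∀ v w, O.rk v < O.rk w → mn {v, w} = v := by
  obtain ⟨t0, ht0⟩ := S.faces_nonempty
  have : Nonempty V := ⟨O.a t0⟩
  refine ⟨fun e => Classical.epsilon fun v => v ∈ e ∧ ∀ w ∈ e, O.rk v ≤ O.rk w, ?_⟩
  intro v w hvw
  have h : ∃ v', v' ∈ ({v, w} : Finset V) ∧ ∀ w' ∈ ({v, w} : Finset V), O.rk v' ≤ O.rk w' := by
    refine ⟨v, by simp, ?_⟩
    intro w' hw'
    simp at hw'
    rcases hw' with rfl | rfl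
    · exact le_rfl
    · exact hvw.le
  have := Classical.epsilon_spec h
  obtain ⟨h1, h2⟩ := this
  replace h1 := Finset.mem_insert.1 h1
  rw [Finset.mem_singleton] at h1
  rcases h1 with h1 | h1
  · exact h1
  · have := h2 v (by simp)
    rw [h1] at this
    omega

theorem Ord.Q_left (fold : Finset V → ZMod 2) (o : Finset V → V → ZMod 2) (n : Finset V → ZMod 2)
    (h1 : ∀ e ∈ S.edgeSet, ∀ v ∈ e, fold e = ∑ t ∈ S.faces.filter (fun t => e ⊆ t), o t v)
    (h2 : ∀ t ∈ S.faces, ∀ v ∈ t, ∀ w ∈ t, v ≠ w → o t v + o t w = n {v, w})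
    {x} (hx : O.IsZ x) : O.Q n x = ∑ e ∈ S.edgeSet, fold e * x e := by
  obtain ⟨mn, hmn⟩ := O.exists_min
  have hmem : ∀ e ∈ S.edgeSet, mn e ∈ e := by
    intro e he
    obtain ⟨u, w, huw, rfl⟩ := Finset.card_eq_two.1 ((mem_edgeSet S).1 he).1
    rcases lt_or_gt_of_ne (fun h => huw (O.inj h) : O.rk u ≠ O.rk w) with h | h
    · rw [hmn u w h]; simp
    · rw [Finset.pair_comm, hmn w u h]; simp
  have h3 : ∑ e ∈ S.edgeSet, fold e * x e = ∑ e ∈ S.edgeSet,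
      ∑ t ∈ S.faces.filter (fun t => e ⊆ t), o t (mn e) * x e := by
    refine Finset.sum_congr rfl fun e he => ?_
    rw [h1 e he (mn e) (hmem e he), Finset.sum_mul]
  rw [h3, O.edge_face (fun e t => o t (mn e) * x e)]
  refine Finset.sum_congr rfl fun t ht => ?_
  rw [hmn _ _ (O.hab t ht), hmn _ _ (O.hbc t ht), hmn _ _ ((O.hab t ht).trans (O.hbc t ht)),
    ← h2 t ht _ (O.mem_a ht) _ (O.mem_b ht) (O.ne_ab ht)]
  have := hx t ht
  generalize x {O.a t, O.b t} = p at *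
  generalize x {O.b t, O.c t} = q at *
  generalize x {O.a t, O.c t} = r at *
  generalize o t (O.a t) = p' at *
  generalize o t (O.b t) = q' at *
  revert p q r p' q'
  decide

end Abs
end NoTriple

namespace NoTriple

section AbsLin
variable {V : Type*} [DecidableEq V] [Fintype V] (S : CombClosedSurface V)

open Module

/-- Extension of an edge cochain by zero. -/
def extC : (↥S.edgeSet → ZMod 2) →ₗ[ZMod 2] (Finset V → ZMod 2) where
  toFun x e := if h : e ∈ S.edgeSet then x ⟨e, h⟩ else 0
  map_add' x y := by ext e; by_cases h : e ∈ S.edgeSet <;> simp [h]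
  map_smul' r x := by ext e; by_cases h : e ∈ S.edgeSet <;> simp [h]

theorem extC_mem (x : ↥S.edgeSet → ZMod 2) {e} (h : e ∈ S.edgeSet) : extC S x e = x ⟨e, h⟩ := by
  simp [extC, h]

def d0 : (V → ZMod 2) →ₗ[ZMod 2] (↥S.edgeSet → ZMod 2) where
  toFun f e := ∑ v ∈ e.1, f v
  map_add' x y := by ext e; simp [Finset.sum_add_distrib]
  map_smul' r x := by ext e; simp [Finset.mul_sum]

def d1 : (↥S.edgeSet → ZMod 2) →ₗ[ZMod 2] (↥S.faces → ZMod 2) where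
  toFun y t := ∑ i ∈ t.1, extC S y (t.1.erase i)
  map_add' x y := by ext e; simp [Finset.sum_add_distrib]
  map_smul' r x := by ext e; simp [Finset.mul_sum]

theorem d0_pair (f : V → ZMod 2) {u w : V} (huw : u ≠ w) (h : ({u, w} : Finset V) ∈ S.edgeSet) :
    extC S (d0 S f) {u, w} = f u + f w := by
  rw [extC_mem S _ h]
  simp [d0, Finset.sum_pair huw]

theorem functional_form (φ : (↥S.faces → ZMod 2) →ₗ[ZMod 2] ZMod 2) :
    ∃ c : Finset V → ZMod 2, (∀ z, φ z = ∑ t : ↥S.faces, c t.1 * z t) := by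
  refine ⟨fun t => if h : t ∈ S.faces then φ (Pi.single ⟨t, h⟩ 1) else 0, fun z => ?_⟩
  rw [LinearMap.pi_apply_eq_sum_univ φ z]
  refine Finset.sum_congr rfl fun t _ => ?_
  have : (fun j => if t = j then (1 : ZMod 2) else 0) = Pi.single t 1 := by
    ext j
    simp [Pi.single_apply, eq_comm]
  simp only [t.2, dif_pos, smul_eq_mul, this, mul_comm]

theorem functional_single (φ : (↥S.faces → ZMod 2) →ₗ[ZMod 2] ZMod 2) (c : Finset V → ZMod 2)
    (h : ∀ z, φ z = ∑ t : ↥S.faces, c t.1 * z t) {e} (he : e ∈ S.edgeSet) :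
    φ (d1 S (Pi.single ⟨e, he⟩ 1)) = ∑ t ∈ S.faces.filter (fun t => e ⊆ t), c t := by
  rw [h]
  have h1 : ∀ e', extC S (Pi.single ⟨e, he⟩ 1) e' = if e' = e then 1 else 0 := by
    intro e'
    by_cases h' : e' ∈ S.edgeSet
    · rw [extC_mem S _ h', Pi.single_apply]
      simp
    · have : e' ≠ e := fun h => h' (h ▸ he)
      simp [extC, h', this]
  have h2 := edge_face_sum S (fun e' t => c t * if e' = e then 1 else 0)
  have h3 : ∑ e' ∈ S.edgeSet, ∑ t ∈ S.faces.filter (fun t => e' ⊆ t),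
      (c t * if e' = e then 1 else 0) = ∑ t ∈ S.faces.filter (fun t => e ⊆ t), c t := by
    rw [Finset.sum_eq_single_of_mem e he]
    · simp
    · intro b _ hb; simp [hb]
  rw [← h3, h2, ← Finset.sum_coe_sort S.faces]
  refine Finset.sum_congr rfl fun t _ => ?_
  simp only [d1, LinearMap.coe_mk, AddHom.coe_mk, h1, Finset.mul_sum]

theorem pair_sum_zero {c : Finset V → ZMod 2} {e : Finset V}
    (hc : ∑ t ∈ S.faces.filter (fun t => e ⊆ t), c t = 0) :
    e ∈ S.edgeSet → ∀ t ∈ S.faces, ∀ t' ∈ S.faces, e ⊆ t → e ⊆ t' → c t = c t' := by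
  intro he t ht t' ht' het het'
  obtain ⟨x, y, hxy, h⟩ := two_faces S he
  rw [h, Finset.sum_pair hxy] at hc
  have hc := eq_of_add2 hc
  rcases eq_or_of_filter S h ht het with rfl | rfl <;>
    rcases eq_or_of_filter S h ht' het' with rfl | rfl <;> simp [hc]

theorem finrank_range_d1 : finrank (ZMod 2) (LinearMap.range (d1 S)) + 1 = S.faces.card := by
  let σ : (↥S.faces → ZMod 2) →ₗ[ZMod 2] ZMod 2 := ∑ t, LinearMap.proj t
  have hσ : ∀ z, σ z = ∑ t : ↥S.faces, (fun _ => (1 : ZMod 2)) t.1 * z t := by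
    intro z; simp [σ]
  have hcomp : ∀ y, σ (d1 S y) = 0 := by
    intro y
    simp only [hσ, one_mul]
    simp only [d1, LinearMap.coe_mk, AddHom.coe_mk]
    have := Finset.sum_coe_sort S.faces (fun t => ∑ i ∈ t, extC S y (t.erase i))
    rw [this]
    exact edge_parity S _
  have hσ0 : σ ≠ 0 := by
    obtain ⟨t, ht⟩ := S.faces_nonempty
    intro h
    have h1 : σ (Pi.single ⟨t, ht⟩ 1) = 0 := by rw [h]; rfl
    simp [σ] at h1
  have hker : LinearMap.ker (d1 S).dualMap = Submodule.span (ZMod 2) {σ} := by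
    apply le_antisymm
    · intro φ hφ
      have hφ' : ∀ y, φ (d1 S y) = 0 := fun y => by
        have := LinearMap.mem_ker.1 hφ
        have := congrArg (fun ψ => ψ y) this
        simpa using this
      obtain ⟨c, hc⟩ := functional_form S φ
      obtain ⟨t0, ht0⟩ := S.faces_nonempty
      have hconst := face_const S c (fun e he => pair_sum_zero S (by
        rw [← functional_single S φ c hc he]; exact hφ' _) he)
      rw [Submodule.mem_span_singleton]
      refine ⟨c t0, ?_⟩
      apply LinearMap.ext
      intro z
      rw [hc]
      simp only [LinearMap.smul_apply, hσ, smul_eq_mul, one_mul, Finset.mul_sum]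
      exact Finset.sum_congr rfl fun t _ => by rw [hconst t0 ht0 t.1 t.2]
    · rw [Submodule.span_singleton_le_iff_mem, LinearMap.mem_ker]
      apply LinearMap.ext
      intro y
      simp [hcomp]
  have h1 := LinearMap.finrank_range_add_finrank_ker (d1 S).dualMap
  rw [LinearMap.finrank_range_dualMap_eq_finrank_range, hker, finrank_span_singleton hσ0,
    Subspace.dual_finrank_eq] at h1
  simpa using h1

theorem finrank_range_d0 : finrank (ZMod 2) (LinearMap.range (d0 S)) + 1 = Fintype.card V := by
  obtain ⟨t0, ht0⟩ := S.faces_nonempty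
  obtain ⟨v0, hv0⟩ := Finset.card_pos.1 (show 0 < t0.card by rw [S.face_card t0 ht0]; norm_num)
  let w : V → ZMod 2 := fun _ => 1
  have hw : w ≠ 0 := fun h => by
    have := congrFun h v0
    simp [w] at this
  have hker : LinearMap.ker (d0 S) = Submodule.span (ZMod 2) {w} := by
    apply le_antisymm
    · intro f hf
      have hf := LinearMap.mem_ker.1 hf
      have hc := vertex_const S f (by
        intro t ht u hu v hv
        by_cases huv : u = v
        · rw [huv]
        have h1 := d0_pair S f huv (pair_mem_edgeSet S ht hu hv huv)
        rw [hf] at h1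
        simp at h1
        exact eq_of_add2 h1.symm)
      rw [Submodule.mem_span_singleton]
      refine ⟨f v0, ?_⟩
      ext v
      simp [w, hc v v0]
    · rw [Submodule.span_singleton_le_iff_mem, LinearMap.mem_ker]
      ext e
      have := ((mem_edgeSet S).1 e.2).1
      simp [d0, w, this]
      rfl
  have h1 := LinearMap.finrank_range_add_finrank_ker (d0 S)
  rw [hker, finrank_span_singleton hw] at h1
  simpa using h1

variable {S} (O : Ord S)

theorem Ord.isZ_iff (x : ↥S.edgeSet → ZMod 2) : x ∈ LinearMap.ker (d1 S) ↔ O.IsZ (extC S x) := by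
  rw [LinearMap.mem_ker]
  constructor
  · intro h t ht
    have := congrFun h ⟨t, ht⟩
    simp only [d1, LinearMap.coe_mk, AddHom.coe_mk] at this
    rw [O.sum_erase _ ht] at this
    exact this
  · intro h
    ext t
    simp only [d1, LinearMap.coe_mk, AddHom.coe_mk]
    rw [O.sum_erase _ t.2]
    exact h t.1 t.2

theorem Ord.edge_ab {t} (ht : t ∈ S.faces) : ({O.a t, O.b t} : Finset V) ∈ S.edgeSet :=
  pair_mem_edgeSet S ht (O.mem_a ht) (O.mem_b ht) (O.ne_ab ht)
theorem Ord.edge_bc {t} (ht : t ∈ S.faces) : ({O.b t, O.c t} : Finset V) ∈ S.edgeSet :=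
  pair_mem_edgeSet S ht (O.mem_b ht) (O.mem_c ht) (O.ne_bc ht)
theorem Ord.edge_ac {t} (ht : t ∈ S.faces) : ({O.a t, O.c t} : Finset V) ∈ S.edgeSet :=
  pair_mem_edgeSet S ht (O.mem_a ht) (O.mem_c ht) (O.ne_ac ht)

theorem Ord.range_le (O : Ord S) : LinearMap.range (d0 S) ≤ LinearMap.ker (d1 S) := by
  rintro _ ⟨f, rfl⟩
  rw [O.isZ_iff]
  intro t ht
  rw [d0_pair S f (O.ne_bc ht) (O.edge_bc ht), d0_pair S f (O.ne_ac ht) (O.edge_ac ht),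
    d0_pair S f (O.ne_ab ht) (O.edge_ab ht)]
  generalize f (O.a t) = p
  generalize f (O.b t) = q
  generalize f (O.c t) = r
  revert p q r
  decide

theorem Ord.Q_coboundary (f : V → ZMod 2) {x} (hx : O.IsZ x) :
    O.Q (extC S (d0 S f)) x = 0 := by
  rw [O.Q_left (fun _ => 0) (fun _ v => f v) (extC S (d0 S f)) ?_ ?_ hx]
  · simp
  · intro e he v hv
    obtain ⟨p, q, hpq, h⟩ := two_faces S he
    rw [h, Finset.sum_pair hpq, add_self2]
  · intro t ht v hv w hw hvw
    rw [d0_pair S f hvw (pair_mem_edgeSet S ht hv hw hvw)]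

theorem Ord.ker_Q (x : ↥S.edgeSet → ZMod 2) (hx : O.IsZ (extC S x))
    (h : ∀ y ∈ LinearMap.ker (d1 S), O.Q (extC S x) (extC S y) = 0) :
    x ∈ LinearMap.range (d0 S) := by
  let q : (↥S.edgeSet → ZMod 2) →ₗ[ZMod 2] ZMod 2 :=
    { toFun := fun y => O.Q (extC S x) (extC S y)
      map_add' := fun y z => by simp [Ord.Q, mul_add, Finset.sum_add_distrib]
      map_smul' := fun r y => by simp [Ord.Q, Finset.mul_sum, mul_left_comm] }
  have hq : q ∈ LinearMap.range (d1 S).dualMap := by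
    rw [LinearMap.range_dualMap_eq_dualAnnihilator_ker, Submodule.mem_dualAnnihilator]
    exact h
  obtain ⟨φ, hφ⟩ := hq
  obtain ⟨c, hc⟩ := functional_form S φ
  -- value on a single edge
  have hsingle : ∀ e ∈ S.edgeSet, ∑ t ∈ S.faces.filter (fun t => e ⊆ t),
      (c t + if {O.b t, O.c t} = e then extC S x {O.a t, O.b t} else 0) = 0 := by
    intro e he
    have h1 := functional_single S φ c hc he
    have h2 : φ (d1 S (Pi.single ⟨e, he⟩ 1)) = q (Pi.single ⟨e, he⟩ 1) := by rw [← hφ]; rfl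
    have h3 : q (Pi.single ⟨e, he⟩ 1) = ∑ t ∈ S.faces.filter (fun t => e ⊆ t),
        if {O.b t, O.c t} = e then extC S x {O.a t, O.b t} else 0 := by
      simp only [q, LinearMap.coe_mk, AddHom.coe_mk, Ord.Q]
      rw [Finset.sum_filter]
      refine Finset.sum_congr rfl fun t ht => ?_
      rw [extC_mem S _ (O.edge_bc ht), Pi.single_apply]
      by_cases h : ({O.b t, O.c t} : Finset V) = e
      · have hsub : e ⊆ t := by
          rw [← h]
          intro z hz
          rw [O.mem_iff ht]
          simp at hz
          tauto
        simp [h, hsub]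
      · simp [h]
    rw [Finset.sum_add_distrib, ← h1, h2, ← h3, add_self2]
  let x' : V → V → ZMod 2 := fun u w => if u = w then 0 else extC S x {u, w}
  have hx' : ∀ t ∈ S.faces, ∀ v ∈ t, ∀ w ∈ t, v ≠ w →
      x' (O.a t) v + x' (O.a t) w = extC S x {v, w} := by
    intro t ht v hv w hw hvw
    have hz := hx t ht
    rw [O.mem_iff ht] at hv hw
    have n1 := O.ne_ab ht
    have n2 := O.ne_ac ht
    have e1 : ({O.b t, O.a t} : Finset V) = {O.a t, O.b t} := Finset.pair_comm _ _
    have e2 : ({O.c t, O.a t} : Finset V) = {O.a t, O.c t} := Finset.pair_comm _ _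
    have e3 : ({O.c t, O.b t} : Finset V) = {O.b t, O.c t} := Finset.pair_comm _ _
    rcases hv with rfl | rfl | rfl <;> rcases hw with rfl | rfl | rfl <;>
      first
      | exact absurd rfl hvw
      | (simp only [x', n1, n2, if_true, if_false, e1, e2, e3, zero_add, add_zero]
         try (
          generalize extC S x {O.a t, O.b t} = p at *
          generalize extC S x {O.b t, O.c t} = q at *
          generalize extC S x {O.a t, O.c t} = r at *
          revert p q r
          decide))
  have hcross : ∀ v w, O.rk v < O.rk w → ({v, w} : Finset V) ∈ S.edgeSet → ∀ t ∈ S.faces,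
      ∀ t' ∈ S.faces, {v, w} ⊆ t → {v, w} ⊆ t' → c t + x' (O.a t) v = c t' + x' (O.a t') v := by
    intro v w hvw he
    have hterm : ∀ t ∈ S.faces, {v, w} ⊆ t → (c t + if {O.b t, O.c t} = ({v, w} : Finset V) then
        extC S x {O.a t, O.b t} else 0) = c t + x' (O.a t) v := by
      intro t ht hsub
      have hv := hsub (show v ∈ ({v, w} : Finset V) by simp)
      have hw := hsub (show w ∈ ({v, w} : Finset V) by simp)
      rw [O.mem_iff ht] at hv hw
      have k1 := O.hab t ht
      have k2 := O.hbc t ht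
      have n1 := O.ne_ab ht
      have n2 := O.ne_ac ht
      rcases hv with rfl | hv | hv
      · have : ({O.b t, O.c t} : Finset V) ≠ {O.a t, w} := by
          intro h
          have : O.a t ∈ ({O.b t, O.c t} : Finset V) := by rw [h]; simp
          simp [n1, n2] at this
        simp [x', this]
      · have hw : w = O.c t := by
          rcases hw with rfl | rfl | rfl
          · rw [hv] at hvw; omega
          · rw [hv] at hvw; omega
          · rfl
        subst hw hv
        simp [x', n1]
      · rw [hv] at hvw
        rcases hw with rfl | rfl | rfl <;> omega
    have hs := hsingle _ he
    rw [Finset.sum_congr rfl (g := fun t => c t + x' (O.a t) v) (by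
      intro t ht
      rw [Finset.mem_filter] at ht
      exact hterm t ht.1 ht.2)] at hs
    exact pair_sum_zero S (c := fun t => c t + x' (O.a t) v) hs he
  have hcross' : ∀ v w, v ≠ w → ({v, w} : Finset V) ∈ S.edgeSet → ∀ t ∈ S.faces,
      ∀ t' ∈ S.faces, {v, w} ⊆ t → {v, w} ⊆ t' → c t + x' (O.a t) v = c t' + x' (O.a t') v := by
    intro v w hvw he t ht t' ht' hs hs'
    rcases lt_or_gt_of_ne (fun h => hvw (O.inj h) : O.rk v ≠ O.rk w) with h | h
    · exact hcross v w h he t ht t' ht' hs hs'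
    · have hp := Finset.pair_comm v w
      have := hcross w v h (hp ▸ he) t ht t' ht' (hp ▸ hs) (hp ▸ hs')
      have h1 := hx' t ht v (hs (by simp)) w (hs (by simp)) hvw
      have h2 := hx' t' ht' v (hs' (by simp)) w (hs' (by simp)) hvw
      have h3 : x' (O.a t) v + x' (O.a t) w = x' (O.a t') v + x' (O.a t') w := h1.trans h2.symm
      linear_combination h3 + this - add_self2 (x' (O.a t) w) + add_self2 (x' (O.a t') w)
  have hstar : ∀ v, ∀ t ∈ S.faces, v ∈ t → ∀ t' ∈ S.faces, v ∈ t' →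
      c t + x' (O.a t) v = c t' + x' (O.a t') v := by
    intro v
    apply star_const S v (fun t => c t + x' (O.a t) v)
    intro e he hve t ht t' ht' hs hs'
    obtain ⟨p, q, hpq, rfl⟩ := Finset.card_eq_two.1 ((mem_edgeSet S).1 he).1
    simp only [Finset.mem_insert, Finset.mem_singleton] at hve
    rcases hve with rfl | rfl
    · exact hcross' v q hpq he t ht t' ht' hs hs'
    · have hp := Finset.pair_comm p v
      exact hcross' v p hpq.symm (hp ▸ he) t ht t' ht' (hp ▸ hs) (hp ▸ hs')
  choose r hr hvr using S.vertex_in_face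
  refine ⟨fun v => c (r v) + x' (O.a (r v)) v, ?_⟩
  ext e
  obtain ⟨he2, t, ht, hsub⟩ := (mem_edgeSet S).1 e.2
  obtain ⟨v, w, hvw, hew⟩ := Finset.card_eq_two.1 he2
  have hv : v ∈ t := hsub (by rw [hew]; simp)
  have hw : w ∈ t := hsub (by rw [hew]; simp)
  have h1 : (d0 S fun v => c (r v) + x' (O.a (r v)) v) e =
      (c (r v) + x' (O.a (r v)) v) + (c (r w) + x' (O.a (r w)) w) := by
    simp only [d0, LinearMap.coe_mk, AddHom.coe_mk]
    rw [hew, Finset.sum_pair hvw]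
  rw [h1, hstar v (r v) (hr v) (hvr v) t ht hv, hstar w (r w) (hr w) (hvr w) t ht hw]
  have h2 := hx' t ht v hv w hw hvw
  have h3 : extC S x {v, w} = x e := by
    have : ({v, w} : Finset V) ∈ S.edgeSet := hew ▸ e.2
    rw [extC_mem S _ this]
    congr 1
    exact Subtype.ext hew.symm
  rw [← h3, ← h2]
  linear_combination add_self2 (c t)

/-- The combinatorial core: parity of the Euler characteristic. -/
theorem Ord.euler_even (fold s : Finset V → ZMod 2) (o : Finset V → V → ZMod 2)
    (n : Finset V → ZMod 2)
    (hfold : ∀ e ∈ S.edgeSet, fold e = 1 + ∑ t ∈ S.faces.filter (fun t => e ⊆ t),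
      ((if e = {O.a t, O.c t} then 1 else 0) + s t))
    (h1 : ∀ e ∈ S.edgeSet, ∀ v ∈ e, fold e = ∑ t ∈ S.faces.filter (fun t => e ⊆ t), o t v)
    (h2 : ∀ t ∈ S.faces, ∀ v ∈ t, ∀ w ∈ t, v ≠ w → o t v + o t w = n {v, w})
    (h3 : ∑ e ∈ S.edgeSet, fold e * n e = 0) :
    Even ((Fintype.card V : ℤ) - S.edgeSet.card + S.faces.card) := by
  let n1 : ↥S.edgeSet → ZMod 2 := fun e => n e.1
  have hn1 : ∀ e ∈ S.edgeSet, extC S n1 e = n e := fun e he => by rw [extC_mem S _ he]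
  have h2' : ∀ t ∈ S.faces, ∀ v ∈ t, ∀ w ∈ t, v ≠ w → o t v + o t w = extC S n1 {v, w} := by
    intro t ht v hv w hw hvw
    rw [h2 t ht v hv w hw hvw, hn1 _ (pair_mem_edgeSet S ht hv hw hvw)]
  have hnZ : O.IsZ (extC S n1) := by
    intro t ht
    rw [← h2' t ht _ (O.mem_b ht) _ (O.mem_c ht) (O.ne_bc ht),
      ← h2' t ht _ (O.mem_a ht) _ (O.mem_c ht) (O.ne_ac ht),
      ← h2' t ht _ (O.mem_a ht) _ (O.mem_b ht) (O.ne_ab ht)]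
    generalize o t (O.a t) = p
    generalize o t (O.b t) = q
    generalize o t (O.c t) = r
    revert p q r
    decide
  let Z := LinearMap.ker (d1 S)
  let B : Z →ₗ[ZMod 2] Z →ₗ[ZMod 2] ZMod 2 :=
    LinearMap.mk₂ (ZMod 2) (fun x y => O.Q (extC S x.1) (extC S y.1))
      (by intros; simp [Ord.Q, add_mul, Finset.sum_add_distrib])
      (by intros; simp [Ord.Q, Finset.mul_sum, mul_assoc])
      (by intros; simp [Ord.Q, mul_add, Finset.sum_add_distrib])
      (by intros; simp [Ord.Q, Finset.mul_sum, mul_left_comm])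
  have hB : ∀ x y, B x y = O.Q (extC S x.1) (extC S y.1) := fun x y => rfl
  have hZ : ∀ x : Z, O.IsZ (extC S x.1) := fun x => (O.isZ_iff x.1).1 x.2
  let N : Z := ⟨n1, (O.isZ_iff n1).2 hnZ⟩
  have hNx : ∀ x : Z, B N x = ∑ e ∈ S.edgeSet, fold e * extC S x.1 e := fun x =>
    O.Q_left fold o (extC S n1) h1 h2' (hZ x)
  have hev := char_even B N (fun x y => O.Q_symm (hZ x) (hZ y))
    (fun x => by rw [hNx]; exact O.Q_self (hZ x) fold s hfold)
    (by
      rw [hNx]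
      show ∑ e ∈ S.edgeSet, fold e * extC S n1 e = 0
      rw [← h3]
      exact Finset.sum_congr rfl fun e he => by rw [hn1 e he])
  have hker : LinearMap.ker B = Submodule.comap Z.subtype (LinearMap.range (d0 S)) := by
    ext x
    rw [LinearMap.mem_ker, Submodule.mem_comap]
    constructor
    · intro hx
      refine O.ker_Q x.1 (hZ x) fun y hy => ?_
      have : B x ⟨y, hy⟩ = 0 := by rw [hx]; rfl
      exact this
    · rintro ⟨f, hf⟩
      apply LinearMap.ext
      intro y
      rw [hB]
      have hf' : d0 S f = x.1 := hf
      rw [← hf']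
      exact O.Q_coboundary f (hZ y)
  have r1 := LinearMap.finrank_range_add_finrank_ker B
  rw [hker, (Submodule.comapSubtypeEquivOfLe O.range_le).finrank_eq] at r1
  have r2 := finrank_range_d0 S
  have r3 := finrank_range_d1 S
  have r4 := LinearMap.finrank_range_add_finrank_ker (d1 S)
  have r5 : finrank (ZMod 2) (↥S.edgeSet → ZMod 2) = S.edgeSet.card := by simp
  obtain ⟨k, hk⟩ := hev
  refine ⟨1 - k, ?_⟩
  have : finrank (ZMod 2) Z = finrank (ZMod 2) (LinearMap.ker (d1 S)) := rfl
  omega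

end AbsLin
end NoTriple

namespace NoTriple

set_option linter.unusedSectionVars false

section Geom
variable {V : Type*} [DecidableEq V] [Fintype V]

abbrev E3 := EuclideanSpace ℝ (Fin 3)

/-- Linear combination of vertex images. -/
noncomputable def bc (ψ : V → E3) (l : V → ℝ) : E3 := ∑ i, l i • ψ i

/-- `p` lies in the closed simplex spanned by `t`. -/
def Hull (ψ : V → E3) (t : Finset V) (p : E3) : Prop :=
  ∃ l : V → ℝ, (∀ i, i ∉ t → l i = 0) ∧ (∀ i, 0 ≤ l i) ∧ ∑ i, l i = 1 ∧ bc ψ l = p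

/-- `p` lies in the open simplex spanned by `t`. -/
def Rel (ψ : V → E3) (t : Finset V) (p : E3) : Prop :=
  ∃ l : V → ℝ, (∀ i, i ∉ t → l i = 0) ∧ (∀ i ∈ t, 0 < l i) ∧ ∑ i, l i = 1 ∧ bc ψ l = p

def Pierce (ψ : V → E3) (e s : Finset V) : Prop := ∃ p, Rel ψ e p ∧ Rel ψ s p

noncomputable def pp (ψ : V → E3) (e s : Finset V) : E3 :=
  if h : Pierce ψ e s then h.choose else 0

theorem pp_spec {ψ : V → E3} {e s : Finset V} (h : Pierce ψ e s) :
    Rel ψ e (pp ψ e s) ∧ Rel ψ s (pp ψ e s) := by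
  unfold pp
  rw [dif_pos h]
  exact h.choose_spec

structure Geo (S : CombClosedSurface V) (ψ : V → E3) (d : E3) (X : Set E3) : Prop where
  gp : ∀ s : Finset V, s.card = 4 → AffineIndependent ℝ (fun v : s => ψ v.1)
  imm : ∀ t₁ ∈ S.faces, ∀ t₂ ∈ S.faces, t₁ ≠ t₂ → ¬ Disjoint t₁ t₂ →
        convexHull ℝ (ψ '' ↑t₁) ∩ convexHull ℝ (ψ '' ↑t₂) ⊆
          convexHull ℝ (ψ '' ↑(t₁ ∩ t₂))
  hψ : ∀ v, ψ v ∈ X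
  hpp : ∀ e s, Pierce ψ e s → pp ψ e s ∈ X
  hd : ∀ x ∈ X, ∀ y ∈ X, ∀ z ∈ X, ∀ α β γ : ℝ, α • (x - y) + β • (z - y) = γ • d → γ = 0

theorem bc_add (ψ : V → E3) (l m : V → ℝ) : bc ψ (fun i => l i + m i) = bc ψ l + bc ψ m := by
  simp [bc, add_smul, Finset.sum_add_distrib]
theorem bc_sub (ψ : V → E3) (l m : V → ℝ) : bc ψ (fun i => l i - m i) = bc ψ l - bc ψ m := by
  simp [bc, sub_smul, Finset.sum_sub_distrib]
theorem bc_smul (ψ : V → E3) (c : ℝ) (l : V → ℝ) : bc ψ (fun i => c * l i) = c • bc ψ l := by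
  simp [bc, mul_smul, Finset.smul_sum]
theorem bc_single (ψ : V → E3) (v : V) : bc ψ (Pi.single v 1) = ψ v := by
  unfold bc
  rw [Finset.sum_eq_single v]
  · simp
  · intro b _ hb; simp [hb]
  · simp
theorem sum_single (v : V) : ∑ i, (Pi.single v 1 : V → ℝ) i = 1 := by simp

theorem Rel.hull {ψ : V → E3} {t : Finset V} {p : E3} (h : Rel ψ t p) : Hull ψ t p := by
  obtain ⟨l, h1, h2, h3, h4⟩ := h
  refine ⟨l, h1, fun i => ?_, h3, h4⟩
  by_cases hi : i ∈ t
  · exact (h2 i hi).le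
  · rw [h1 i hi]

theorem Hull.mono {ψ : V → E3} {t t' : Finset V} {p : E3} (h : Hull ψ t p) (ht : t ⊆ t') :
    Hull ψ t' p := by
  obtain ⟨l, h1, h2, h3, h4⟩ := h
  exact ⟨l, fun i hi => h1 i fun h => hi (ht h), h2, h3, h4⟩

theorem mem_hull (ψ : V → E3) (t : Finset V) (p : E3) :
    p ∈ convexHull ℝ (ψ '' ↑t) ↔ Hull ψ t p := by
  constructor
  · intro h
    have hc : Convex ℝ {p | Hull ψ t p} := by
      rintro x ⟨l, h1, h2, h3, h4⟩ y ⟨m, k1, k2, k3, k4⟩ a b ha hb hab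
      refine ⟨fun i => a * l i + b * m i, ?_, ?_, ?_, ?_⟩
      · intro i hi; simp [h1 i hi, k1 i hi]
      · intro i
        have := mul_nonneg ha (h2 i)
        have := mul_nonneg hb (k2 i)
        linarith
      · rw [Finset.sum_add_distrib, ← Finset.mul_sum, ← Finset.mul_sum, h3, k3]; linarith
      · rw [bc_add, bc_smul, bc_smul, h4, k4]
    have : convexHull ℝ (ψ '' ↑t) ⊆ {p | Hull ψ t p} := by
      apply convexHull_min _ hc
      rintro _ ⟨v, hv, rfl⟩
      refine ⟨Pi.single v 1, ?_, ?_, sum_single v, bc_single ψ v⟩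
      · intro i hi
        have : i ≠ v := fun h => hi (h ▸ hv)
        simp [this]
      · intro i
        by_cases h : i = v
        · subst h; simp
        · simp [h]
    exact this h
  · rintro ⟨l, h1, h2, h3, rfl⟩
    have hs : ∑ i ∈ t, l i = 1 := by
      rw [← h3]
      exact Finset.sum_subset (Finset.subset_univ _) fun i _ hi => h1 i hi
    have hb : bc ψ l = ∑ i ∈ t, l i • ψ i := by
      unfold bc
      symm
      exact Finset.sum_subset (Finset.subset_univ _) fun i _ hi => by rw [h1 i hi, zero_smul]
    rw [hb]
    exact (convex_convexHull ℝ _).sum_mem (fun i _ => h2 i) hs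
      (fun i hi => subset_convexHull ℝ _ ⟨i, hi, rfl⟩)

variable {S : CombClosedSurface V} {ψ : V → E3} {d : E3} {X : Set E3}

theorem four_le_card (S : CombClosedSurface V) : 4 ≤ Fintype.card V := by
  obtain ⟨t, ht⟩ := S.faces_nonempty
  obtain ⟨v, hv⟩ := Finset.card_pos.1 (show 0 < t.card by rw [S.face_card t ht]; norm_num)
  have h1 := erase_mem_edgeSet S ht hv
  obtain ⟨t', ht', hs, hne, _⟩ := other_face S ((mem_edgeSet S).1 h1).1 ht (Finset.erase_subset _ _)
  have hss : t ⊂ t ∪ t' := by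
    refine Finset.ssubset_iff_subset_ne.2 ⟨Finset.subset_union_left, fun h => hne ?_⟩
    refine face_eq_of_subset S ht' ht ?_
    rw [h]
    exact Finset.subset_union_right
  have h2 := Finset.card_lt_card hss
  rw [S.face_card t ht] at h2
  have h3 := Finset.card_le_univ (t ∪ t')
  omega

/-- General position: no affine dependency with at most four points. -/
theorem Geo.indep (G : Geo S ψ d X) (u : Finset V) (hu : u.card ≤ 4) (m : V → ℝ) (hm : ∀ i, i ∉ u → m i = 0)
    (h0 : ∑ i, m i = 0) (hb : bc ψ m = 0) : ∀ i, m i = 0 := by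
  obtain ⟨s, hus, hs⟩ := Finset.exists_superset_card_eq hu (four_le_card S)
  have hi := affineIndependent_iff.1 (G.gp s hs) Finset.univ (fun v => m v.1) (by
    rw [Finset.sum_coe_sort s m, ← h0]
    exact Finset.sum_subset (Finset.subset_univ _) fun i _ hi => hm i fun h => hi (hus h)) (by
    rw [Finset.sum_coe_sort s (fun v => m v • ψ v), ← hb]
    exact Finset.sum_subset (Finset.subset_univ _) fun i _ hi => by
      rw [hm i fun h => hi (hus h), zero_smul])
  intro i
  by_cases h : i ∈ s
  · exact hi ⟨i, h⟩ (Finset.mem_univ _)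
  · exact hm i fun h' => h (hus h')

theorem Geo.indep2 (G : Geo S ψ d X) (u : Finset V) (hu : u.card ≤ 4) (l m : V → ℝ) (hl : ∀ i, i ∉ u → l i = 0)
    (hm : ∀ i, i ∉ u → m i = 0) (h0 : ∑ i, l i = ∑ i, m i) (hb : bc ψ l = bc ψ m) :
    ∀ i, l i = m i := by
  have := G.indep u hu (fun i => l i - m i) (fun i hi => by rw [hl i hi, hm i hi, sub_zero])
    (by rw [Finset.sum_sub_distrib, h0, sub_self]) (by rw [bc_sub, hb, sub_self])
  intro i
  linarith [this i]

/-- Immersion: closed faces sharing a vertex meet with equal weights. -/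
theorem Geo.imm_eq (G : Geo S ψ d X) {t t' : Finset V} (ht : t ∈ S.faces) (ht' : t' ∈ S.faces)
    (hdis : ¬ Disjoint t t') {l m : V → ℝ}
    (l1 : ∀ i, i ∉ t → l i = 0) (l2 : ∀ i, 0 ≤ l i) (l3 : ∑ i, l i = 1)
    (m1 : ∀ i, i ∉ t' → m i = 0) (m2 : ∀ i, 0 ≤ m i) (m3 : ∑ i, m i = 1)
    (hb : bc ψ l = bc ψ m) : ∀ i, l i = m i := by
  have c1 : t.card ≤ 4 := by rw [S.face_card t ht]; norm_num
  have c2 : t'.card ≤ 4 := by rw [S.face_card t' ht']; norm_num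
  by_cases htt : t = t'
  · subst htt
    exact G.indep2 t c1 l m l1 m1 (by rw [l3, m3]) hb
  have h1 : bc ψ l ∈ convexHull ℝ (ψ '' ↑t) := (mem_hull ψ t _).2 ⟨l, l1, l2, l3, rfl⟩
  have h2 : bc ψ l ∈ convexHull ℝ (ψ '' ↑t') := (mem_hull ψ t' _).2 ⟨m, m1, m2, m3, hb.symm⟩
  have h3 := G.imm t ht t' ht' htt hdis ⟨h1, h2⟩
  obtain ⟨n, n1, n2, n3, n4⟩ := (mem_hull ψ (t ∩ t') _).1 h3
  have e1 := G.indep2 t c1 l n l1 (fun i hi => n1 i fun h => hi (Finset.mem_inter.1 h).1)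
    (by rw [l3, n3]) n4.symm
  have e2 := G.indep2 t' c2 m n m1 (fun i hi => n1 i fun h => hi (Finset.mem_inter.1 h).2)
    (by rw [m3, n3]) (by rw [← hb, n4])
  intro i
  rw [e1, e2]

theorem Geo.gen (G : Geo S ψ d X) (u : Finset V) (hu : u.card ≤ 3) (m : V → ℝ) (hm : ∀ i, i ∉ u → m i = 0)
    (h0 : ∑ i, m i = 0) (h : ℝ) (hb : bc ψ m = h • d) : h = 0 ∧ ∀ i, m i = 0 := by
  obtain ⟨s, hus, hs⟩ := Finset.exists_superset_card_eq hu
    (le_trans (by norm_num) (four_le_card S))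
  obtain ⟨x, y, z, hxy, hxz, hyz, rfl⟩ := Finset.card_eq_three.1 hs
  have hm' : ∀ i, i ∉ ({x, y, z} : Finset V) → m i = 0 := fun i hi => hm i fun h => hi (hus h)
  have s1 : ∑ i ∈ ({x, y, z} : Finset V), m i = 0 := by
    rw [← h0]
    exact Finset.sum_subset (Finset.subset_univ _) fun i _ hi => hm' i hi
  have s2 : ∑ i ∈ ({x, y, z} : Finset V), m i • ψ i = h • d := by
    rw [← hb]
    exact Finset.sum_subset (Finset.subset_univ _) fun i _ hi => by rw [hm' i hi, zero_smul]
  rw [Finset.sum_insert (by simp [hxy, hxz]), Finset.sum_pair hyz] at s1 s2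
  have h1 : m x • (ψ x - ψ y) + m z • (ψ z - ψ y) = h • d := by
    rw [← s2]
    have : m y = -(m x + m z) := by linarith
    rw [this]
    module
  have h2 := G.hd _ (G.hψ x) _ (G.hψ y) _ (G.hψ z) _ _ _ h1
  refine ⟨h2, G.indep u (by omega) m hm h0 ?_⟩
  rw [hb, h2, zero_smul]

theorem Geo.exists_LH (G : Geo S ψ d X) {r : Finset V} (hr : r ∈ S.faces) (p : E3) :
    ∃ lh : (V → ℝ) × ℝ, (∀ i, i ∉ r → lh.1 i = 0) ∧ ∑ i, lh.1 i = 1 ∧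
      bc ψ lh.1 = p + lh.2 • d := by
  let ex : (↥r → ℝ) → V → ℝ := fun x i => if h : i ∈ r then x ⟨i, h⟩ else 0
  have ex_sum : ∀ x, ∑ i, ex x i = ∑ i, x i := by
    intro x
    rw [← Finset.sum_subset (Finset.subset_univ r) (fun i _ hi => by simp [ex, hi]),
      ← Finset.sum_coe_sort r]
    exact Finset.sum_congr rfl fun i _ => by simp [ex]
  have ex_bc : ∀ x, bc ψ (ex x) = ∑ i, x i • ψ i.1 := by
    intro x
    unfold bc
    rw [← Finset.sum_subset (Finset.subset_univ r) (fun i _ hi => by simp [ex, hi]),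
      ← Finset.sum_coe_sort r]
    exact Finset.sum_congr rfl fun i _ => by simp [ex]
  let f : ((↥r → ℝ) × ℝ) →ₗ[ℝ] (E3 × ℝ) :=
    { toFun := fun xh => (∑ i, xh.1 i • ψ i.1 - xh.2 • d, ∑ i, xh.1 i)
      map_add' := fun x y => by
        ext1
        · simp [add_smul, Finset.sum_add_distrib]; abel
        · simp [Finset.sum_add_distrib]
      map_smul' := fun c x => by
        ext1
        · simp [mul_smul, Finset.smul_sum, smul_sub]
        · simp [Finset.mul_sum] }
  have hinj : Function.Injective f := by
    rw [← LinearMap.ker_eq_bot, LinearMap.ker_eq_bot']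
    rintro ⟨x, h⟩ hx
    have h1 : ∑ i, x i • ψ i.1 - h • d = 0 := congrArg Prod.fst hx
    have h2 : ∑ i, x i = 0 := congrArg Prod.snd hx
    obtain ⟨h3, h4⟩ := G.gen r (by rw [S.face_card r hr]) (ex x) (fun i hi => by simp [ex, hi])
      (by rw [ex_sum, h2]) h (by rw [ex_bc]; exact sub_eq_zero.1 h1)
    ext i
    · have := h4 i.1
      simp [ex] at this
      simpa using this
    · exact h3
  have hdim : Module.finrank ℝ ((↥r → ℝ) × ℝ) = Module.finrank ℝ (E3 × ℝ) := by
    simp [S.face_card r hr]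
  have hsurj := (LinearMap.injective_iff_surjective_of_finrank_eq_finrank hdim).1 hinj
  obtain ⟨⟨x, h⟩, hx⟩ := hsurj (p, 1)
  have h1 : ∑ i, x i • ψ i.1 - h • d = p := congrArg Prod.fst hx
  have h2 : ∑ i, x i = 1 := congrArg Prod.snd hx
  refine ⟨(ex x, h), fun i hi => by simp [ex, hi], by rw [ex_sum, h2], ?_⟩
  rw [ex_bc, ← h1]
  simp

end Geom
end NoTriple

namespace NoTriple

set_option linter.unusedSectionVars false

section Coord
variable {V : Type*} [DecidableEq V] [Fintype V]

noncomputable def LHc (ψ : V → E3) (d : E3) (r : Finset V) (p : E3) : (V → ℝ) × ℝ :=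
  if h : ∃ lh : (V → ℝ) × ℝ, (∀ i, i ∉ r → lh.1 i = 0) ∧ ∑ i, lh.1 i = 1 ∧
      bc ψ lh.1 = p + lh.2 • d then h.choose else (0, 0)

/-- Barycentric coordinates of the projection of `p` along `d` to the plane of `r`. -/
noncomputable def LL (ψ : V → E3) (d : E3) (r : Finset V) (p : E3) : V → ℝ := (LHc ψ d r p).1

/-- Height of the plane of `r` over `p` in direction `d`. -/
noncomputable def HH (ψ : V → E3) (d : E3) (r : Finset V) (p : E3) : ℝ := (LHc ψ d r p).2

noncomputable def pt (x y : E3) (τ : ℝ) : E3 := (1 - τ) • x + τ • y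

variable {S : CombClosedSurface V} {ψ : V → E3} {d : E3} {X : Set E3}

theorem Geo.LH_spec (G : Geo S ψ d X) {r : Finset V} (hr : r ∈ S.faces) (p : E3) :
    (∀ i, i ∉ r → LL ψ d r p i = 0) ∧ ∑ i, LL ψ d r p i = 1 ∧
      bc ψ (LL ψ d r p) = p + HH ψ d r p • d := by
  have h := G.exists_LH hr p
  unfold LL HH LHc
  rw [dif_pos h]
  exact h.choose_spec

theorem Geo.LH_uniq (G : Geo S ψ d X) {r : Finset V} (hr : r ∈ S.faces) (p : E3) (l : V → ℝ)
    (h : ℝ) (h1 : ∀ i, i ∉ r → l i = 0) (h2 : ∑ i, l i = 1) (h3 : bc ψ l = p + h • d) :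
    (∀ i, LL ψ d r p i = l i) ∧ HH ψ d r p = h := by
  obtain ⟨k1, k2, k3⟩ := G.LH_spec hr p
  obtain ⟨e1, e2⟩ := G.gen r (by rw [S.face_card r hr]) (fun i => LL ψ d r p i - l i)
    (fun i hi => by rw [k1 i hi, h1 i hi, sub_zero])
    (by rw [Finset.sum_sub_distrib, k2, h2, sub_self]) (HH ψ d r p - h)
    (by rw [bc_sub, k3, h3]; module)
  exact ⟨fun i => by linarith [e2 i], by linarith⟩

theorem bc_fun_sum (ψ : V → E3) (l : V → ℝ) (m : V → V → ℝ) :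
    bc ψ (fun i => ∑ j, l j * m j i) = ∑ j, l j • bc ψ (m j) := by
  unfold bc
  simp only [Finset.sum_smul, Finset.smul_sum]
  rw [Finset.sum_comm]
  simp only [mul_smul]

theorem Geo.LH_bc (G : Geo S ψ d X) {r : Finset V} (hr : r ∈ S.faces) (l : V → ℝ)
    (hl : ∑ i, l i = 1) :
    (∀ i, LL ψ d r (bc ψ l) i = ∑ j, l j * LL ψ d r (ψ j) i) ∧
      HH ψ d r (bc ψ l) = ∑ j, l j * HH ψ d r (ψ j) := by
  apply G.LH_uniq hr
  · intro i hi
    exact Finset.sum_eq_zero fun j _ => by rw [(G.LH_spec hr (ψ j)).1 i hi, mul_zero]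
  · rw [Finset.sum_comm]
    rw [← hl]
    exact Finset.sum_congr rfl fun j _ => by
      rw [← Finset.mul_sum, (G.LH_spec hr (ψ j)).2.1, mul_one]
  · rw [bc_fun_sum ψ l (fun j => LL ψ d r (ψ j)), Finset.sum_smul]
    unfold bc
    rw [← Finset.sum_add_distrib]
    refine Finset.sum_congr rfl fun j _ => ?_
    have := (G.LH_spec hr (ψ j)).2.2
    unfold bc at this
    rw [this, smul_add, mul_smul]

theorem Geo.LH_pt (G : Geo S ψ d X) {r : Finset V} (hr : r ∈ S.faces) (x y : E3) (τ : ℝ) :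
    (∀ i, LL ψ d r (pt x y τ) i = (1 - τ) * LL ψ d r x i + τ * LL ψ d r y i) ∧
      HH ψ d r (pt x y τ) = (1 - τ) * HH ψ d r x + τ * HH ψ d r y := by
  obtain ⟨k1, k2, k3⟩ := G.LH_spec hr x
  obtain ⟨m1, m2, m3⟩ := G.LH_spec hr y
  apply G.LH_uniq hr
  · intro i hi; rw [k1 i hi, m1 i hi]; ring
  · rw [Finset.sum_add_distrib, ← Finset.mul_sum, ← Finset.mul_sum, k2, m2]; ring
  · rw [bc_add, bc_smul, bc_smul, k3, m3]; unfold pt; module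

/-- Points in the plane of `r`. -/
theorem Geo.LH_of_bc (G : Geo S ψ d X) {r : Finset V} (hr : r ∈ S.faces) {p : E3} {l : V → ℝ}
    (h1 : ∀ i, i ∉ r → l i = 0) (h2 : ∑ i, l i = 1) (h3 : bc ψ l = p) :
    (∀ i, LL ψ d r p i = l i) ∧ HH ψ d r p = 0 :=
  G.LH_uniq hr p l 0 h1 h2 (by rw [h3]; simp)

theorem Geo.LH_vert (G : Geo S ψ d X) {r : Finset V} (hr : r ∈ S.faces) {j : V} (hj : j ∈ r) :
    LL ψ d r (ψ j) j = 1 ∧ (∀ i, i ≠ j → LL ψ d r (ψ j) i = 0) ∧ HH ψ d r (ψ j) = 0 := by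
  obtain ⟨h1, h2⟩ := G.LH_of_bc hr (p := ψ j) (l := Pi.single j 1)
    (fun i hi => by
      have : i ≠ j := fun h => hi (h ▸ hj)
      simp [this]) (sum_single j) (bc_single ψ j)
  refine ⟨by rw [h1]; simp, fun i hi => by rw [h1]; simp [hi], h2⟩

theorem Geo.LL_zero (G : Geo S ψ d X) {r : Finset V} (hr : r ∈ S.faces) {i j : V} (hi : i ∈ r)
    (h : LL ψ d r (ψ j) i = 0) : j ∈ r.erase i := by
  by_contra hj
  obtain ⟨k1, k2, k3⟩ := G.LH_spec hr (ψ j)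
  obtain ⟨_, e⟩ := G.gen (insert j (r.erase i))
    (le_trans (Finset.card_insert_le _ _) (by
      rw [Finset.card_erase_of_mem hi, S.face_card r hr]))
    (fun k => LL ψ d r (ψ j) k - Pi.single (M := fun _ => ℝ) j 1 k)
    (fun k hk => by
      simp only [Finset.mem_insert, Finset.mem_erase, not_or, not_and] at hk
      have : LL ψ d r (ψ j) k = 0 := by
        by_cases hki : k = i
        · rw [hki, h]
        · exact k1 k (hk.2 hki)
      simp [this, hk.1])
    (by rw [Finset.sum_sub_distrib, k2, sum_single, sub_self]) (HH ψ d r (ψ j))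
    (by rw [bc_sub, k3, bc_single]; simp)
  have h1 := e j
  have h2 : LL ψ d r (ψ j) j = 0 := by
    by_cases hji : j = i
    · rw [hji] at h ⊢; exact h
    · exact k1 j fun hjr => hj (Finset.mem_erase.2 ⟨hji, hjr⟩)
  simp [h2] at h1

theorem Geo.HH_zero (G : Geo S ψ d X) {r : Finset V} (hr : r ∈ S.faces) {j : V}
    (h : HH ψ d r (ψ j) = 0) : j ∈ r := by
  by_contra hj
  obtain ⟨k1, k2, k3⟩ := G.LH_spec hr (ψ j)
  have e := G.indep2 (insert j r)
    (le_trans (Finset.card_insert_le _ _) (by rw [S.face_card r hr]))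
    (LL ψ d r (ψ j)) (Pi.single j 1)
    (fun k hk => k1 k fun h => hk (Finset.mem_insert_of_mem h))
    (fun k hk => by
      have : k ≠ j := fun h => hk (by rw [h]; simp)
      simp [this])
    (by rw [k2, sum_single])
    (by rw [k3, bc_single, h]; simp)
  have h1 := e j
  rw [k1 j hj] at h1
  simp at h1

theorem Geo.hull_of (G : Geo S ψ d X) {r : Finset V} (hr : r ∈ S.faces) {p : E3}
    (h : HH ψ d r p = 0) (h2 : ∀ i ∈ r, 0 ≤ LL ψ d r p i) : Hull ψ r p := by
  obtain ⟨k1, k2, k3⟩ := G.LH_spec hr p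
  refine ⟨LL ψ d r p, k1, fun i => ?_, k2, by rw [k3, h]; simp⟩
  by_cases hi : i ∈ r
  · exact h2 i hi
  · rw [k1 i hi]

theorem Geo.rel_of (G : Geo S ψ d X) {r : Finset V} (hr : r ∈ S.faces) {p : E3}
    (h : HH ψ d r p = 0) (h2 : ∀ i ∈ r, 0 < LL ψ d r p i) : Rel ψ r p := by
  obtain ⟨k1, k2, k3⟩ := G.LH_spec hr p
  exact ⟨LL ψ d r p, k1, h2, k2, by rw [k3, h]; simp⟩

def Germ (ψ : V → E3) (d : E3) (r u : Finset V) (x y : E3) : Prop :=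
  (∀ i ∈ u, 0 < LL ψ d r x i ∨ (LL ψ d r x i = 0 ∧ 0 < LL ψ d r y i)) ∧
    (0 < HH ψ d r x ∨ (HH ψ d r x = 0 ∧ 0 < HH ψ d r y))

def EO (ψ : V → E3) (d : E3) (g u : Finset V) (x y : E3) : Prop :=
  ∃ τ : ℝ, 0 < τ ∧ τ < 1 ∧ ∃ h : ℝ, 0 < h ∧ ∃ l : V → ℝ, (∀ i, i ∉ g → l i = 0) ∧
    (∀ i ∈ u, 0 < l i) ∧ ∑ i, l i = 1 ∧ bc ψ l = pt x y τ + h • d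

def Cr (ψ : V → E3) (d : E3) (r u : Finset V) (x y : E3) : Prop :=
  ∃ τ : ℝ, 0 < τ ∧ τ < 1 ∧ HH ψ d r (pt x y τ) = 0 ∧ ∀ i ∈ u, 0 < LL ψ d r (pt x y τ) i

/-- One-dimensional parity count along a segment. -/
theorem Geo.GL (G : Geo S ψ d X) {r : Finset V} (hr : r ∈ S.faces) (u : Finset V) (hu : u ⊆ r)
    (x y : E3)
    (ha : ∀ τ : ℝ, 0 < τ → τ < 1 → ∀ i ∈ u, ∀ j ∈ u, i ≠ j → LL ψ d r (pt x y τ) i = 0 →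
      LL ψ d r (pt x y τ) j = 0 → False)
    (hb : ∀ τ : ℝ, 0 < τ → τ < 1 → ∀ i ∈ u, LL ψ d r (pt x y τ) i = 0 →
      HH ψ d r (pt x y τ) = 0 → (∀ i ∈ u, 0 ≤ LL ψ d r (pt x y τ) i) → False)
    (hc : ∀ i ∈ u, LL ψ d r x i = 0 → LL ψ d r y i = 0 → False)
    (hd : Cr ψ d r u x y → HH ψ d r x = 0 → HH ψ d r y = 0 → False) :
    ind (Germ ψ d r u x y) + ind (Germ ψ d r u y x) + ind (Cr ψ d r u x y) +
      ∑ i ∈ u, ind (EO ψ d (r.erase i) (u.erase i) x y) = 0 := by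
  let U : Option ↥u → ℝ := fun o => o.elim (HH ψ d r x) (fun i => LL ψ d r x i.1)
  let W : Option ↥u → ℝ := fun o => o.elim (HH ψ d r y) (fun i => LL ψ d r y i.1)
  have hL : ∀ τ (i : ↥u), (1 - τ) * U (some i) + τ * W (some i) = LL ψ d r (pt x y τ) i.1 :=
    fun τ i => ((G.LH_pt hr x y τ).1 i.1).symm
  have hH : ∀ τ, (1 - τ) * U none + τ * W none = HH ψ d r (pt x y τ) :=
    fun τ => ((G.LH_pt hr x y τ).2).symm
  have key := one_dim U W ?_ ?_
  · rw [Fintype.sum_option] at key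
    have e1 : ind (∀ i, 0 < U i ∨ (U i = 0 ∧ 0 < W i)) = ind (Germ ψ d r u x y) := by
      apply ind_congr
      rw [Option.forall]
      constructor
      · rintro ⟨h1, h2⟩
        exact ⟨fun i hi => h2 ⟨i, hi⟩, h1⟩
      · rintro ⟨h1, h2⟩
        exact ⟨h2, fun i => h1 i.1 i.2⟩
    have e2 : ind (∀ i, 0 < W i ∨ (W i = 0 ∧ 0 < U i)) = ind (Germ ψ d r u y x) := by
      apply ind_congr
      rw [Option.forall]
      constructor
      · rintro ⟨h1, h2⟩
        exact ⟨fun i hi => h2 ⟨i, hi⟩, h1⟩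
      · rintro ⟨h1, h2⟩
        exact ⟨h2, fun i => h1 i.1 i.2⟩
    have e3 : ind (∃ τ, 0 < τ ∧ τ < 1 ∧ (1 - τ) * U none + τ * W none = 0 ∧
        ∀ j, j ≠ none → 0 < (1 - τ) * U j + τ * W j) = ind (Cr ψ d r u x y) := by
      apply ind_congr
      constructor
      · rintro ⟨τ, h1, h2, h3, h4⟩
        refine ⟨τ, h1, h2, by rw [← hH, h3], fun i hi => ?_⟩
        rw [← hL τ ⟨i, hi⟩]
        exact h4 _ (by simp)
      · rintro ⟨τ, h1, h2, h3, h4⟩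
        refine ⟨τ, h1, h2, by rw [hH, h3], ?_⟩
        rintro (_ | i) hi
        · exact absurd rfl hi
        · rw [hL]; exact h4 i.1 i.2
    have e4 : ∀ i : ↥u, ind (∃ τ, 0 < τ ∧ τ < 1 ∧ (1 - τ) * U (some i) + τ * W (some i) = 0 ∧
        ∀ j, j ≠ some i → 0 < (1 - τ) * U j + τ * W j) =
        ind (EO ψ d (r.erase i.1) (u.erase i.1) x y) := by
      intro i
      apply ind_congr
      constructor
      · rintro ⟨τ, h1, h2, h3, h4⟩
        obtain ⟨k1, k2, k3⟩ := G.LH_spec hr (pt x y τ)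
        refine ⟨τ, h1, h2, HH ψ d r (pt x y τ), ?_, LL ψ d r (pt x y τ), ?_, ?_, k2, k3⟩
        · rw [← hH]; exact h4 none (by simp)
        · intro j hj
          by_cases hji : j = i.1
          · rw [hji, ← hL τ i, h3]
          · exact k1 j fun hjr => hj (Finset.mem_erase.2 ⟨hji, hjr⟩)
        · intro j hj
          rw [Finset.mem_erase] at hj
          rw [← hL τ ⟨j, hj.2⟩]
          refine h4 _ ?_
          intro h
          exact hj.1 (congrArg Subtype.val (Option.some.inj h))
      · rintro ⟨τ, h1, h2, h, hh, l, l1, l2, l3, l4⟩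
        obtain ⟨k1, k2⟩ := G.LH_uniq hr (pt x y τ) l h
          (fun j hj => l1 j fun hj' => hj (Finset.mem_erase.1 hj').2) l3 l4
        refine ⟨τ, h1, h2, ?_, ?_⟩
        · rw [hL, k1]; exact l1 _ (by simp)
        · rintro (_ | j) hj
          · rw [hH, k2]; exact hh
          · rw [hL, k1]
            refine l2 _ (Finset.mem_erase.2 ⟨fun h => hj ?_, j.2⟩)
            rw [Subtype.ext h]
    rw [e1, e2, e3, Finset.sum_congr rfl (fun i _ => e4 i),
      Finset.sum_coe_sort u (fun i => ind (EO ψ d (r.erase i) (u.erase i) x y)), ← add_assoc] at key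
    exact key
  · intro τ h1 h2 i j hij hi hj hall
    have hall' : ∀ i ∈ u, 0 ≤ LL ψ d r (pt x y τ) i := fun i hi => by
      rw [← hL τ ⟨i, hi⟩]; exact hall _
    rcases i with _ | i <;> rcases j with _ | j
    · exact hij rfl
    · rw [hH] at hi; rw [hL] at hj; exact hb τ h1 h2 j.1 j.2 hj hi hall'
    · rw [hL] at hi; rw [hH] at hj; exact hb τ h1 h2 i.1 i.2 hi hj hall'
    · rw [hL] at hi hj
      exact ha τ h1 h2 i.1 i.2 j.1 j.2 (fun h => hij (by rw [Subtype.ext h])) hi hj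
  · rintro (_ | i) ⟨τ, h1, h2, h3, h4⟩ ⟨h5, h6⟩
    · refine hd ⟨τ, h1, h2, by rw [← hH, h3], fun i hi => ?_⟩ h5 h6
      rw [← hL τ ⟨i, hi⟩]
      exact h4 _ (by simp)
    · exact hc i.1 i.2 h5 h6

end Coord
end NoTriple

namespace NoTriple

set_option linter.unusedSectionVars false

section Corner
variable {V : Type*} [DecidableEq V] [Fintype V]

def lex3 (p q s : ℝ) : Prop := 0 < p ∨ (p = 0 ∧ (0 < q ∨ (q = 0 ∧ 0 < s)))

def Lex (ψ : V → E3) (d : E3) (r : Finset V) (v w x : V) : Prop :=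
  (∀ i ∈ r, lex3 (LL ψ d r (ψ v) i) (LL ψ d r (ψ w) i) (LL ψ d r (ψ x) i)) ∧
    lex3 (HH ψ d r (ψ v)) (HH ψ d r (ψ w)) (HH ψ d r (ψ x))

def FO (ψ : V → E3) (d : E3) (t : Finset V) (a x : V) : Prop :=
  0 < LL ψ d t (ψ x) a ∧ 0 < HH ψ d t (ψ x)

/-- Parity of the number of faces above the corner of `t` at `v` (near the side `vw`). -/
noncomputable def KK (S : CombClosedSurface V) (ψ : V → E3) (d : E3) (t : Finset V) (v w : V) :
    ZMod 2 :=
  ∑ r ∈ S.faces.erase t, ind (∃ x ∈ t, x ≠ v ∧ x ≠ w ∧ Lex ψ d r v w x)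

/-- Two faces sharing the edge `vw`. -/
structure Wing (S : CombClosedSurface V) (t t' : Finset V) (v w x a : V) : Prop where
  ht : t ∈ S.faces
  ht' : t' ∈ S.faces
  et : t = {v, w, x}
  et' : t' = {v, w, a}
  vw : v ≠ w
  vx : v ≠ x
  wx : w ≠ x
  va : v ≠ a
  wa : w ≠ a
  xa : x ≠ a
  hf : (S.faces.filter fun r => {v, w} ⊆ r) = {t, t'}

theorem tri_of_mem {t : Finset V} (ht : t.card = 3) {v w : V} (hv : v ∈ t) (hw : w ∈ t)
    (hvw : v ≠ w) : ∃ x, v ≠ x ∧ w ≠ x ∧ t = {v, w, x} := by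
  have h1 : ((t.erase v).erase w).card = 1 := by
    rw [Finset.card_erase_of_mem (Finset.mem_erase.2 ⟨hvw.symm, hw⟩), Finset.card_erase_of_mem hv,
      ht]
  obtain ⟨x, hx⟩ := Finset.card_eq_one.1 h1
  have hxm : x ∈ (t.erase v).erase w := by rw [hx]; simp
  simp only [Finset.mem_erase] at hxm
  refine ⟨x, hxm.2.1.symm, hxm.1.symm, ?_⟩
  rw [← Finset.insert_erase hv, ← Finset.insert_erase (Finset.mem_erase.2 ⟨hvw.symm, hw⟩), hx]

variable {S : CombClosedSurface V} {ψ : V → E3} {d : E3} {X : Set E3}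

theorem exists_wing {t : Finset V} (ht : t ∈ S.faces) {v w : V} (hv : v ∈ t) (hw : w ∈ t)
    (hvw : v ≠ w) : ∃ t' x a, Wing S t t' v w x a := by
  have hs : ({v, w} : Finset V) ⊆ t := by
    intro z hz; simp at hz; rcases hz with rfl | rfl <;> assumption
  obtain ⟨t', ht', hs', hne, hf⟩ := other_face S (Finset.card_pair hvw) ht hs
  obtain ⟨x, h1, h2, h3⟩ := tri_of_mem (S.face_card t ht) hv hw hvw
  obtain ⟨a, k1, k2, k3⟩ := tri_of_mem (S.face_card t' ht') (hs' (show v ∈ _ by simp))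
    (hs' (show w ∈ _ by simp)) hvw
  refine ⟨t', x, a, ht, ht', h3, k3, hvw, h1, h2, k1, k2, ?_, hf⟩
  rintro rfl
  exact hne (k3.trans h3.symm)

theorem Wing.ne {t t' v w x a} (W : Wing S t t' v w x a) : t ≠ t' := by
  intro h
  have : x ∈ t' := by rw [← h, W.et]; simp
  rw [W.et'] at this
  simp [W.vx.symm, W.wx.symm, W.xa] at this

theorem Wing.swap {t t' v w x a} (W : Wing S t t' v w x a) : Wing S t' t v w a x :=
  ⟨W.ht', W.ht, W.et', W.et, W.vw, W.va, W.wa, W.vx, W.wx, W.xa.symm, by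
    rw [W.hf, Finset.pair_comm]⟩

theorem Wing.flip {t t' v w x a} (W : Wing S t t' v w x a) : Wing S t t' w v x a :=
  ⟨W.ht, W.ht', by rw [W.et, Finset.insert_comm], by rw [W.et', Finset.insert_comm], W.vw.symm,
    W.wx, W.vx, W.wa, W.va, W.xa, by rw [Finset.pair_comm, W.hf]⟩

theorem Wing.not_sub {t t' v w x a} (W : Wing S t t' v w x a) {r}
    (hr : r ∈ (S.faces.erase t).erase t') : r ∈ S.faces ∧ ¬ (v ∈ r ∧ w ∈ r) := by
  simp only [Finset.mem_erase] at hr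
  refine ⟨hr.2.2, fun h => ?_⟩
  rcases eq_or_of_filter S W.hf hr.2.2 (by
    intro z hz; simp at hz; rcases hz with rfl | rfl; exacts [h.1, h.2]) with h1 | h1
  · exact hr.2.1 h1
  · exact hr.1 h1

theorem Geo.lex_FO (G : Geo S ψ d X) {t t' v w x a} (W : Wing S t t' v w x a) :
    Lex ψ d t' v w x ↔ FO ψ d t' a x := by
  have hv : v ∈ t' := by rw [W.et']; simp
  have hw : w ∈ t' := by rw [W.et']; simp
  have ha : a ∈ t' := by rw [W.et']; simp
  obtain ⟨v1, v2, v3⟩ := G.LH_vert W.ht' hv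
  obtain ⟨w1, w2, w3⟩ := G.LH_vert W.ht' hw
  have e1 : LL ψ d t' (ψ v) a = 0 := v2 a W.va.symm
  have e2 : LL ψ d t' (ψ w) a = 0 := w2 a W.wa.symm
  constructor
  · rintro ⟨h1, h2⟩
    have h1 := h1 a ha
    unfold lex3 at h1 h2
    rw [e1, e2] at h1
    rw [v3, w3] at h2
    simp only [lt_irrefl, false_or, true_and] at h1 h2
    exact ⟨h1, h2⟩
  · rintro ⟨h1, h2⟩
    refine ⟨fun i hi => ?_, Or.inr ⟨v3, Or.inr ⟨w3, h2⟩⟩⟩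
    rw [W.et'] at hi
    simp only [Finset.mem_insert, Finset.mem_singleton] at hi
    rcases hi with rfl | rfl | rfl
    · left; rw [v1]; norm_num
    · right; refine ⟨v2 _ W.vw.symm, Or.inl ?_⟩; rw [w1]; norm_num
    · exact Or.inr ⟨e1, Or.inr ⟨e2, h1⟩⟩

theorem Geo.lex_germ (G : Geo S ψ d X) {r v w} (hr : r ∈ S.faces) (h : ¬ (v ∈ r ∧ w ∈ r))
    (hvw : v ≠ w) (x : V) : Lex ψ d r v w x ↔ Germ ψ d r r (ψ v) (ψ w) := by
  have h1 : ∀ i ∈ r, ¬ (LL ψ d r (ψ v) i = 0 ∧ LL ψ d r (ψ w) i = 0) := by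
    rintro i hi ⟨h1, h2⟩
    exact h ⟨Finset.mem_of_mem_erase (G.LL_zero hr hi h1),
      Finset.mem_of_mem_erase (G.LL_zero hr hi h2)⟩
  have h2 : ¬ (HH ψ d r (ψ v) = 0 ∧ HH ψ d r (ψ w) = 0) := by
    rintro ⟨h1, h2⟩
    exact h ⟨G.HH_zero hr h1, G.HH_zero hr h2⟩
  unfold Lex Germ lex3
  refine and_congr (forall₂_congr fun i hi => ?_) ?_
  · have := h1 i hi
    tauto
  · tauto

theorem Geo.K_eq (G : Geo S ψ d X) {t v w x} (et : t = {v, w, x}) (vx : v ≠ x) (wx : w ≠ x) :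
    KK S ψ d t v w = ∑ r ∈ S.faces.erase t, ind (Lex ψ d r v w x) := by
  unfold KK
  refine Finset.sum_congr rfl fun r _ => ind_congr ?_
  subst et
  simp only [Finset.mem_insert, Finset.mem_singleton]
  constructor
  · rintro ⟨y, rfl | rfl | rfl, h1, h2, h3⟩
    · exact absurd rfl h1
    · exact absurd rfl h2
    · exact h3
  · intro h
    exact ⟨x, by simp, vx.symm, wx.symm, h⟩

theorem Geo.K_split (G : Geo S ψ d X) {t t' v w x a} (W : Wing S t t' v w x a) :
    KK S ψ d t v w = ind (FO ψ d t' a x) +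
      ∑ r ∈ (S.faces.erase t).erase t', ind (Germ ψ d r r (ψ v) (ψ w)) := by
  rw [G.K_eq W.et W.vx W.wx, ← Finset.add_sum_erase _ _ (Finset.mem_erase.2 ⟨W.ne.symm, W.ht'⟩)]
  congr 1
  · exact ind_congr (G.lex_FO W)
  · refine Finset.sum_congr rfl fun r hr => ind_congr ?_
    obtain ⟨h1, h2⟩ := W.not_sub hr
    exact G.lex_germ h1 h2 W.vw x

theorem Geo.K_fold (G : Geo S ψ d X) {t t' v w x a} (W : Wing S t t' v w x a) :
    KK S ψ d t v w + KK S ψ d t' v w = ind (FO ψ d t' a x) + ind (FO ψ d t x a) := by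
  rw [G.K_split W, G.K_split W.swap, Finset.erase_right_comm]
  linear_combination add_self2 (∑ r ∈ (S.faces.erase t').erase t, ind (Germ ψ d r r (ψ v) (ψ w)))

theorem pt_bc (v w : V) (τ : ℝ) : pt (ψ v) (ψ w) τ =
    bc ψ (fun i => (1 - τ) * (Pi.single v 1 : V → ℝ) i + τ * (Pi.single w 1 : V → ℝ) i) := by
  rw [bc_add, bc_smul, bc_smul, bc_single, bc_single]; rfl

theorem pt_sum (v w : V) (τ : ℝ) :
    ∑ i, ((1 - τ) * (Pi.single v 1 : V → ℝ) i + τ * (Pi.single w 1 : V → ℝ) i) = 1 := by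
  rw [Finset.sum_add_distrib, ← Finset.mul_sum, ← Finset.mul_sum, sum_single, sum_single]; ring

/-- No point of a face is strictly below an edge of that face. -/
theorem Geo.EO_false (G : Geo S ψ d X) {r g u : Finset V} (hr : r ∈ S.faces) (hg : g ⊆ r)
    {x y : E3} (hx : HH ψ d r x = 0) (hy : HH ψ d r y = 0) : ¬ EO ψ d g u x y := by
  rintro ⟨τ, h1, h2, h, hh, l, l1, l2, l3, l4⟩
  have := (G.LH_uniq hr (pt x y τ) l h (fun i hi => l1 i fun h => hi (hg h)) l3 l4).2
  rw [(G.LH_pt hr x y τ).2, hx, hy] at this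
  simp at this
  linarith

theorem Rel.single_pair {v w : V} (hvw : v ≠ w) {p : E3} (h : Rel ψ {v, w} p) :
    ∃ τ : ℝ, 0 < τ ∧ τ < 1 ∧ p = pt (ψ v) (ψ w) τ := by
  obtain ⟨l, l1, l2, l3, l4⟩ := h
  have hs : l v + l w = 1 := by
    rw [← Finset.sum_pair hvw, ← l3]
    exact Finset.sum_subset (Finset.subset_univ _) fun i _ hi => l1 i hi
  have hb : p = l v • ψ v + l w • ψ w := by
    rw [← l4, ← Finset.sum_pair (f := fun i => l i • ψ i) hvw]
    symm
    exact Finset.sum_subset (Finset.subset_univ _) fun i _ hi => by rw [l1 i hi, zero_smul]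
  have := l2 v (by simp)
  have := l2 w (by simp)
  refine ⟨l w, by linarith, by linarith, ?_⟩
  rw [hb, pt]
  congr 2
  linarith

theorem rel_pair {v w : V} (hvw : v ≠ w) {τ : ℝ} (h0 : 0 < τ) (h1 : τ < 1) :
    Rel ψ {v, w} (pt (ψ v) (ψ w) τ) := by
  refine ⟨_, ?_, ?_, pt_sum v w τ, (pt_bc v w τ).symm⟩
  · intro i hi
    simp only [Finset.mem_insert, Finset.mem_singleton, not_or] at hi
    simp [hi.1, hi.2]
  · intro i hi
    simp only [Finset.mem_insert, Finset.mem_singleton] at hi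
    rcases hi with rfl | rfl
    · simp [hvw]; exact h1
    · simp [hvw.symm]; exact h0

theorem Geo.Cr_iff (G : Geo S ψ d X) {r : Finset V} (hr : r ∈ S.faces) {v w : V} (hvw : v ≠ w) :
    Cr ψ d r r (ψ v) (ψ w) ↔ Pierce ψ {v, w} r := by
  constructor
  · rintro ⟨τ, h1, h2, h3, h4⟩
    exact ⟨_, rel_pair hvw h1 h2, G.rel_of hr h3 h4⟩
  · rintro ⟨p, hp, l, l1, l2, l3, l4⟩
    obtain ⟨τ, h1, h2, rfl⟩ := hp.single_pair hvw
    obtain ⟨e1, e2⟩ := G.LH_of_bc hr l1 l3 l4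
    exact ⟨τ, h1, h2, e2, fun i hi => by rw [e1]; exact l2 i hi⟩

/-- `Pierce e s` forces the faces through `e` to be disjoint from `s`. -/
theorem Geo.pierce_disj (G : Geo S ψ d X) {e t s : Finset V} (ht : t ∈ S.faces) (hs : s ∈ S.faces)
    (het : e ⊆ t) (he : e.card = 2) (h : Pierce ψ e s) : Disjoint t s := by
  by_contra hdis
  obtain ⟨p, ⟨l, l1, l2, l3, l4⟩, m, m1, m2, m3, m4⟩ := h
  have hl : ∀ i, 0 ≤ l i := fun i => by
    by_cases hi : i ∈ e
    · exact (l2 i hi).le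
    · rw [l1 i hi]
  have hm : ∀ i, 0 ≤ m i := fun i => by
    by_cases hi : i ∈ s
    · exact (m2 i hi).le
    · rw [m1 i hi]
  have := G.imm_eq ht hs hdis (fun i hi => l1 i fun h => hi (het h)) hl l3 m1 hm m3
    (by rw [l4, m4])
  have hsub : s ⊆ e := by
    intro i hi
    by_contra hie
    have h1 := m2 i hi
    rw [← this i, l1 i hie] at h1
    exact lt_irrefl _ h1
  have := Finset.card_le_card hsub
  rw [S.face_card s hs] at this
  omega

noncomputable def nn (S : CombClosedSurface V) (ψ : V → E3) (e : Finset V) : ZMod 2 :=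
  ∑ s ∈ S.faces, ind (Pierce ψ e s)

theorem single_pos_coeff {v w : V} {τ : ℝ} (hvw : v ≠ w) :
    ((1 - τ) * (Pi.single v 1 : V → ℝ) v + τ * (Pi.single w 1 : V → ℝ) v = 1 - τ) ∧
    ((1 - τ) * (Pi.single v 1 : V → ℝ) w + τ * (Pi.single w 1 : V → ℝ) w = τ) := by
  simp [hvw, hvw.symm]

/-- If a coordinate `LL r (pt) i` vanishes at an interior point of the edge `vw` lying in the
plane of `r`, then `v, w ∈ r.erase i`. -/
theorem Geo.edge_on_edge (G : Geo S ψ d X) {r : Finset V} (hr : r ∈ S.faces) {v w : V}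
    (hvw : v ≠ w) {τ : ℝ} (h0 : 0 < τ) (h1 : τ < 1) {i : V} (hi : i ∈ r)
    (hL : LL ψ d r (pt (ψ v) (ψ w) τ) i = 0) (hH : HH ψ d r (pt (ψ v) (ψ w) τ) = 0) :
    v ∈ r.erase i ∧ w ∈ r.erase i := by
  obtain ⟨k1, k2, k3⟩ := G.LH_spec hr (pt (ψ v) (ψ w) τ)
  have hk : ∀ j, j ∉ r.erase i → LL ψ d r (pt (ψ v) (ψ w) τ) j = 0 := by
    intro j hj
    by_cases hji : j = i
    · rw [hji, hL]
    · exact k1 j fun h => hj (Finset.mem_erase.2 ⟨hji, h⟩)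
  have hcard : ({v, w} ∪ r.erase i).card ≤ 4 := by
    refine le_trans (Finset.card_union_le _ _) ?_
    rw [Finset.card_erase_of_mem hi, S.face_card r hr]
    have := Finset.card_le_two (a := v) (b := w)
    omega
  have e := G.indep2 _ hcard (LL ψ d r (pt (ψ v) (ψ w) τ))
    (fun i => (1 - τ) * (Pi.single v 1 : V → ℝ) i + τ * (Pi.single w 1 : V → ℝ) i)
    (fun j hj => hk j fun h => hj (Finset.mem_union_right _ h))
    (fun j hj => by
      simp only [Finset.mem_union, Finset.mem_insert, Finset.mem_singleton, not_or] at hj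
      simp [hj.1.1, hj.1.2]) (by rw [k2, pt_sum]) (by rw [k3, hH, pt_bc]; simp)
  have ev := e v
  have ew := e w
  rw [(single_pos_coeff hvw).1] at ev
  rw [(single_pos_coeff hvw).2] at ew
  constructor
  · by_contra h
    rw [hk v h] at ev; linarith
  · by_contra h
    rw [hk w h] at ew; linarith

/-- An interior point of the edge `vw` does not project to a vertex. -/
theorem Geo.edge_on_vertex (G : Geo S ψ d X) {r : Finset V} (hr : r ∈ S.faces) {v w : V}
    (hvw : v ≠ w) {τ : ℝ} (h0 : 0 < τ) (h1 : τ < 1) {i j : V} (hi : i ∈ r) (hj : j ∈ r)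
    (hij : i ≠ j)
    (hL : LL ψ d r (pt (ψ v) (ψ w) τ) i = 0) (hL' : LL ψ d r (pt (ψ v) (ψ w) τ) j = 0) : False := by
  obtain ⟨k, hik, hjk, er⟩ := tri_of_mem (S.face_card r hr) hi hj hij
  obtain ⟨k1, k2, k3⟩ := G.LH_spec hr (pt (ψ v) (ψ w) τ)
  have hk : ∀ l, l ≠ k → LL ψ d r (pt (ψ v) (ψ w) τ) l = 0 := by
    intro l hl
    by_cases hlr : l ∈ r
    · rw [er] at hlr
      simp only [Finset.mem_insert, Finset.mem_singleton] at hlr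
      rcases hlr with rfl | rfl | rfl
      · exact hL
      · exact hL'
      · exact absurd rfl hl
    · exact k1 l hlr
  obtain ⟨_, e⟩ := G.gen {v, w, k} Finset.card_le_three
    (fun l => LL ψ d r (pt (ψ v) (ψ w) τ) l -
      ((1 - τ) * (Pi.single v 1 : V → ℝ) l + τ * (Pi.single w 1 : V → ℝ) l))
    (fun l hl => by
      simp only [Finset.mem_insert, Finset.mem_singleton, not_or] at hl
      simp [hk l hl.2.2, hl.1, hl.2.1])
    (by rw [Finset.sum_sub_distrib, k2, pt_sum, sub_self]) (HH ψ d r (pt (ψ v) (ψ w) τ))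
    (by rw [bc_sub, k3, ← pt_bc]; simp)
  have ev := e v
  have ew := e w
  rw [(single_pos_coeff hvw).1] at ev
  rw [(single_pos_coeff hvw).2] at ew
  by_cases hvk : v = k
  · rw [hk w (fun h => hvw (hvk.trans h.symm))] at ew; linarith
  · rw [hk v hvk] at ev; linarith

theorem Geo.G1 (G : Geo S ψ d X) {t t' v w x a} (W : Wing S t t' v w x a) :
    KK S ψ d t v w + KK S ψ d t w v = nn S ψ {v, w} := by
  have hv : v ∈ t := by rw [W.et]; simp
  have hw : w ∈ t := by rw [W.et]; simp
  have hv' : v ∈ t' := by rw [W.et']; simp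
  have hw' : w ∈ t' := by rw [W.et']; simp
  have hrest : ∀ f : Finset V → ZMod 2, f t = 0 → f t' = 0 →
      ∑ r ∈ (S.faces.erase t).erase t', f r = ∑ r ∈ S.faces, f r := by
    intro f h1 h2
    rw [Finset.sum_erase _ h2, Finset.sum_erase _ h1]
  rw [G.K_split W, G.K_split W.flip]
  have h1 : ∑ r ∈ (S.faces.erase t).erase t', (ind (Germ ψ d r r (ψ v) (ψ w)) +
      ind (Germ ψ d r r (ψ w) (ψ v)) + ind (Cr ψ d r r (ψ v) (ψ w)) +
      ∑ i ∈ r, ind (EO ψ d (r.erase i) (r.erase i) (ψ v) (ψ w))) = 0 := by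
    refine Finset.sum_eq_zero fun r hr => ?_
    obtain ⟨hr, hn⟩ := W.not_sub hr
    apply G.GL hr r (Finset.Subset.refl r)
    · intro τ h0 h1 i hi j hj hij e1 e2
      exact G.edge_on_vertex hr W.vw h0 h1 hi hj hij e1 e2
    · intro τ h0 h1 i hi e1 e2 _
      obtain ⟨k1, k2⟩ := G.edge_on_edge hr W.vw h0 h1 hi e1 e2
      exact hn ⟨Finset.mem_of_mem_erase k1, Finset.mem_of_mem_erase k2⟩
    · intro i hi e1 e2
      exact hn ⟨Finset.mem_of_mem_erase (G.LL_zero hr hi e1),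
        Finset.mem_of_mem_erase (G.LL_zero hr hi e2)⟩
    · intro _ e1 e2
      exact hn ⟨G.HH_zero hr e1, G.HH_zero hr e2⟩
  have h2 : ∑ r ∈ (S.faces.erase t).erase t', ∑ i ∈ r,
      ind (EO ψ d (r.erase i) (r.erase i) (ψ v) (ψ w)) = 0 := by
    rw [hrest, edge_parity S (fun e => ind (EO ψ d e e (ψ v) (ψ w)))]
    · exact Finset.sum_eq_zero fun i _ => ind_false (G.EO_false W.ht (Finset.erase_subset _ _)
        (G.LH_vert W.ht hv).2.2 (G.LH_vert W.ht hw).2.2)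
    · exact Finset.sum_eq_zero fun i _ => ind_false (G.EO_false W.ht' (Finset.erase_subset _ _)
        (G.LH_vert W.ht' hv').2.2 (G.LH_vert W.ht' hw').2.2)
  have h3 : ∑ r ∈ (S.faces.erase t).erase t', ind (Cr ψ d r r (ψ v) (ψ w)) = nn S ψ {v, w} := by
    have hs : ∀ r ∈ S.faces, v ∈ r → w ∈ r → ¬ Pierce ψ {v, w} r := by
      intro r hr hv hw h
      have := G.pierce_disj hr hr (by
        intro z hz; simp at hz; rcases hz with rfl | rfl <;> assumption) (Finset.card_pair W.vw) h
      exact Finset.disjoint_left.1 this hv hv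
    unfold nn
    rw [← hrest _ (ind_false (hs t W.ht hv hw)) (ind_false (hs t' W.ht' hv' hw'))]
    refine Finset.sum_congr rfl fun r hr => ind_congr ?_
    exact G.Cr_iff (W.not_sub hr).1 W.vw
  rw [Finset.sum_add_distrib, Finset.sum_add_distrib, Finset.sum_add_distrib, h2, h3] at h1
  linear_combination h1 + add_self2 (ind (FO ψ d t' a x)) - add_self2 (nn S ψ {v, w})

end Corner
end NoTriple

namespace NoTriple

set_option linter.unusedSectionVars false

section Corner2
variable {V : Type*} [DecidableEq V] [Fintype V]
variable {S : CombClosedSurface V} {ψ : V → E3} {d : E3} {X : Set E3}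

theorem Geo.lex_swap (G : Geo S ψ d X) {r v} (hr : r ∈ S.faces) (h : v ∉ r) (w x : V) :
    Lex ψ d r v w x ↔ Lex ψ d r v x w := by
  have h1 : ∀ i ∈ r, LL ψ d r (ψ v) i ≠ 0 := fun i hi h' =>
    h (Finset.mem_of_mem_erase (G.LL_zero hr hi h'))
  have h2 : HH ψ d r (ψ v) ≠ 0 := fun h' => h (G.HH_zero hr h')
  unfold Lex lex3
  refine and_congr (forall₂_congr fun i hi => ?_) ?_
  · have := h1 i hi
    tauto
  · tauto

theorem Geo.lex_germ2 (G : Geo S ψ d X) {r v} (hr : r ∈ S.faces) (h : v ∈ r) (w x : V) :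
    Lex ψ d r v w x ↔ Germ ψ d r (r.erase v) (ψ w) (ψ x) := by
  obtain ⟨h1, h2, h3⟩ := G.LH_vert hr h
  unfold Lex Germ
  refine and_congr ?_ ?_
  · constructor
    · intro H i hi
      rw [Finset.mem_erase] at hi
      have := H i hi.2
      rw [h2 i hi.1] at this
      simpa [lex3] using this
    · intro H i hi
      by_cases hiv : i = v
      · subst hiv; left; rw [h1]; norm_num
      · right
        exact ⟨h2 i hiv, H i (Finset.mem_erase.2 ⟨hiv, hi⟩)⟩
  · rw [h3]
    simp [lex3]

theorem Geo.no_cr (G : Geo S ψ d X) {t r : Finset V} {v w x : V} (ht : t ∈ S.faces)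
    (hr : r ∈ S.faces) (hv : v ∈ r) (et : t = {v, w, x}) (vw : v ≠ w) (vx : v ≠ x) (wx : w ≠ x)
    (htr : r ≠ t) : ¬ Cr ψ d r (r.erase v) (ψ w) (ψ x) := by
  rintro ⟨τ, h0, h1, hH, hL⟩
  set q := pt (ψ w) (ψ x) τ with hq
  obtain ⟨k1, k2, k3⟩ := G.LH_spec hr q
  have hvt : v ∈ t := by rw [et]; simp
  have hwt : w ∈ t := by rw [et]; simp
  have hxt : x ∈ t := by rw [et]; simp
  set ε : ℝ := 1 / (2 + |LL ψ d r q v|) with hε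
  have hpos : 0 < 2 + |LL ψ d r q v| := by positivity
  have ε0 : 0 < ε := by rw [hε]; positivity
  have ε1 : ε * (2 + |LL ψ d r q v|) = 1 := by rw [hε]; field_simp
  have ε2 : ε < 1 := by
    have := mul_nonneg ε0.le (abs_nonneg (LL ψ d r q v)); nlinarith
  have ε3 : 0 ≤ 1 - ε + ε * LL ψ d r q v := by
    have := neg_abs_le (LL ψ d r q v)
    nlinarith
  have heq := G.imm_eq ht hr (Finset.not_disjoint_iff.2 ⟨v, hvt, hv⟩)
    (l := fun i => (1 - ε) * (Pi.single v 1 : V → ℝ) i +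
      ε * ((1 - τ) * (Pi.single w 1 : V → ℝ) i + τ * (Pi.single x 1 : V → ℝ) i))
    (m := fun i => (1 - ε) * (Pi.single v 1 : V → ℝ) i + ε * LL ψ d r q i)
    (fun i hi => by
      have a1 : i ≠ v := fun h => hi (h ▸ hvt)
      have a2 : i ≠ w := fun h => hi (h ▸ hwt)
      have a3 : i ≠ x := fun h => hi (h ▸ hxt)
      simp [a1, a2, a3])
    (fun i => by
      have s : ∀ z, 0 ≤ (Pi.single z 1 : V → ℝ) i := fun z => by
        by_cases h : i = z
        · subst h; simp
        · simp [h]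
      have := s v
      have := s w
      have := s x
      have e1 : 0 ≤ 1 - ε := by linarith
      have e2 : 0 ≤ 1 - τ := by linarith
      positivity)
    (by rw [Finset.sum_add_distrib, ← Finset.mul_sum, ← Finset.mul_sum, pt_sum, sum_single]; ring)
    (fun i hi => by
      have a1 : i ≠ v := fun h => hi (h ▸ hv)
      simp [a1, k1 i hi])
    (fun i => by
      by_cases hiv : i = v
      · subst hiv; simpa using ε3
      · by_cases hir : i ∈ r
        · have := (hL i (Finset.mem_erase.2 ⟨hiv, hir⟩)).le
          simp [hiv]; positivity
        · simp [hiv, k1 i hir])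
    (by rw [Finset.sum_add_distrib, ← Finset.mul_sum, ← Finset.mul_sum, k2, sum_single]; ring)
    (by rw [bc_add, bc_add, bc_smul, bc_smul, bc_smul, ← pt_bc, k3, hH, hq]; simp)
  have hw : w ∈ r := by
    by_contra h
    have := heq w
    simp [vw.symm, wx, k1 w h] at this
    rcases this with h | h <;> linarith
  have hx : x ∈ r := by
    by_contra h
    have := heq x
    simp [vx.symm, wx.symm, k1 x h] at this
    rcases this with h | h <;> linarith
  refine htr (face_eq_of_subset S ht hr ?_).symm
  rw [et]
  intro z hz
  simp only [Finset.mem_insert, Finset.mem_singleton] at hz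
  rcases hz with rfl | rfl | rfl <;> assumption

theorem Geo.G2 (G : Geo S ψ d X) {t : Finset V} {v w x : V} (ht : t ∈ S.faces)
    (et : t = {v, w, x}) (vw : v ≠ w) (vx : v ≠ x) (wx : w ≠ x) :
    KK S ψ d t v w = KK S ψ d t v x := by
  have hw : w ∈ t := by rw [et]; simp
  have hx : x ∈ t := by rw [et]; simp
  have hsub : ∀ r ∈ S.faces, r ≠ t → v ∈ r → ¬ (w ∈ r ∧ x ∈ r) := by
    rintro r hr hne hv ⟨h1, h2⟩
    refine hne (face_eq_of_subset S ht hr ?_).symm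
    rw [et]
    intro z hz
    simp only [Finset.mem_insert, Finset.mem_singleton] at hz
    rcases hz with rfl | rfl | rfl <;> assumption
  let Φ : Finset V → ZMod 2 := fun e => if v ∈ e then ind (EO ψ d e (e.erase v) (ψ w) (ψ x)) else 0
  have key : ∀ r ∈ S.faces.erase t, ind (Lex ψ d r v w x) + ind (Lex ψ d r v x w) +
      ∑ i ∈ r, Φ (r.erase i) = 0 := by
    intro r hr
    rw [Finset.mem_erase] at hr
    obtain ⟨hne, hr⟩ := hr
    by_cases hv : v ∈ r
    · have e : ∑ i ∈ r, Φ (r.erase i) =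
          ∑ i ∈ r.erase v, ind (EO ψ d (r.erase i) ((r.erase v).erase i) (ψ w) (ψ x)) := by
        rw [← Finset.add_sum_erase _ _ hv]
        have : Φ (r.erase v) = 0 := by simp [Φ]
        rw [this, zero_add]
        refine Finset.sum_congr rfl fun i hi => ?_
        rw [Finset.mem_erase] at hi
        have hvi : v ∈ r.erase i := Finset.mem_erase.2 ⟨hi.1.symm, hv⟩
        simp only [Φ, if_pos hvi]
        rw [Finset.erase_right_comm]
      rw [e, ind_congr (G.lex_germ2 hr hv w x), ind_congr (G.lex_germ2 hr hv x w)]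
      have := G.GL hr (r.erase v) (Finset.erase_subset _ _) (ψ w) (ψ x) ?_ ?_ ?_ ?_
      · rw [ind_false (G.no_cr ht hr hv et vw vx wx hne), add_zero] at this
        exact this
      · intro τ h0 h1 i hi j hj hij e1 e2
        exact G.edge_on_vertex hr wx h0 h1 (Finset.mem_of_mem_erase hi)
          (Finset.mem_of_mem_erase hj) hij e1 e2
      · intro τ h0 h1 i hi e1 e2 _
        obtain ⟨k1, k2⟩ := G.edge_on_edge hr wx h0 h1 (Finset.mem_of_mem_erase hi) e1 e2
        exact hsub r hr hne hv ⟨Finset.mem_of_mem_erase k1, Finset.mem_of_mem_erase k2⟩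
      · intro i hi e1 e2
        have hi := Finset.mem_of_mem_erase hi
        exact hsub r hr hne hv ⟨Finset.mem_of_mem_erase (G.LL_zero hr hi e1),
          Finset.mem_of_mem_erase (G.LL_zero hr hi e2)⟩
      · intro _ e1 e2
        exact hsub r hr hne hv ⟨G.HH_zero hr e1, G.HH_zero hr e2⟩
    · rw [ind_congr (G.lex_swap hr hv w x), add_self2, zero_add]
      refine Finset.sum_eq_zero fun i _ => ?_
      simp [Φ, hv]
  have h1 := Finset.sum_eq_zero key
  have h2 : ∑ r ∈ S.faces.erase t, ∑ i ∈ r, Φ (r.erase i) = 0 := by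
    rw [Finset.sum_erase, edge_parity S Φ]
    refine Finset.sum_eq_zero fun i _ => ?_
    simp only [Φ]
    split_ifs
    · exact ind_false (G.EO_false ht (Finset.erase_subset _ _)
        (G.LH_vert ht hw).2.2 (G.LH_vert ht hx).2.2)
    · rfl
  rw [Finset.sum_add_distrib, Finset.sum_add_distrib, h2, add_zero] at h1
  rw [G.K_eq et vx wx, G.K_eq (x := w) (by rw [et, Finset.pair_comm]) vw wx.symm]
  exact eq_of_add2 h1

/-- The overlap parity at a corner. -/
noncomputable def oo (S : CombClosedSurface V) (ψ : V → E3) (d : E3) (t : Finset V) (v : V) :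
    ZMod 2 := if h : ∃ w ∈ t, w ≠ v then KK S ψ d t v h.choose else 0

theorem Geo.oo_eq (G : Geo S ψ d X) {t : Finset V} {v w : V} (ht : t ∈ S.faces) (hv : v ∈ t)
    (hw : w ∈ t) (hvw : v ≠ w) : oo S ψ d t v = KK S ψ d t v w := by
  have h : ∃ w ∈ t, w ≠ v := ⟨w, hw, hvw.symm⟩
  unfold oo
  rw [dif_pos h]
  obtain ⟨h1, h2⟩ := h.choose_spec
  generalize h.choose = y at h1 h2
  by_cases hyw : y = w
  · rw [hyw]
  obtain ⟨x, k1, k2, k3⟩ := tri_of_mem (S.face_card t ht) hv h1 h2.symm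
  have : w = x := by
    rw [k3] at hw
    simp only [Finset.mem_insert, Finset.mem_singleton] at hw
    rcases hw with rfl | rfl | rfl
    · exact absurd rfl hvw
    · exact absurd rfl hyw
    · rfl
  subst this
  exact G.G2 ht k3 h2.symm k1 k2

theorem Geo.h2 (G : Geo S ψ d X) : ∀ t ∈ S.faces, ∀ v ∈ t, ∀ w ∈ t, v ≠ w →
    oo S ψ d t v + oo S ψ d t w = nn S ψ {v, w} := by
  intro t ht v hv w hw hvw
  obtain ⟨t', x, a, W⟩ := exists_wing ht hv hw hvw
  rw [G.oo_eq ht hv hw hvw, G.oo_eq ht hw hv hvw.symm]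
  exact G.G1 W

theorem Geo.oo_fold (G : Geo S ψ d X) {t t' v w x a} (W : Wing S t t' v w x a) :
    ∑ r ∈ S.faces.filter (fun r => {v, w} ⊆ r), oo S ψ d r v =
      ind (FO ψ d t' a x) + ind (FO ψ d t x a) := by
  rw [W.hf, Finset.sum_pair W.ne, G.oo_eq W.ht (w := w) (by rw [W.et]; simp) (by rw [W.et]; simp)
    W.vw, G.oo_eq W.ht' (w := w) (by rw [W.et']; simp) (by rw [W.et']; simp) W.vw]
  exact G.K_fold W

end Corner2
end NoTriple

namespace NoTriple

set_option linter.unusedSectionVars false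

section Fold
variable {V : Type*} [DecidableEq V] [Fintype V]
variable {S : CombClosedSurface V} {ψ : V → E3} {d : E3} {X : Set E3}

theorem Geo.FO_sum (G : Geo S ψ d X) {t t' v w x a} (W : Wing S t t' v w x a) :
    ind (FO ψ d t' a x) + ind (FO ψ d t x a) = ind (0 < LL ψ d t' (ψ x) a) ∧
      LL ψ d t' (ψ x) a ≠ 0 := by
  have ha : a ∈ t' := by rw [W.et']; simp
  have hx' : x ∉ t' := by rw [W.et']; simp [W.vx.symm, W.wx.symm, W.xa]
  have hx : x ∈ t := by rw [W.et]; simp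
  have l0 : LL ψ d t' (ψ x) a ≠ 0 := fun h => hx' (Finset.mem_of_mem_erase (G.LL_zero W.ht' ha h))
  have h0 : HH ψ d t' (ψ x) ≠ 0 := fun h => hx' (G.HH_zero W.ht' h)
  obtain ⟨k1, k2, k3⟩ := G.LH_spec W.ht' (ψ x)
  unfold FO
  generalize hL : LL ψ d t' (ψ x) = L at *
  generalize hH : HH ψ d t' (ψ x) = h at *
  obtain ⟨e1, e2⟩ := G.LH_uniq W.ht (ψ a)
    (fun i => (L a)⁻¹ * ((Pi.single x 1 : V → ℝ) i - L i) + (Pi.single a 1 : V → ℝ) i)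
    (-(L a)⁻¹ * h) (fun i hi => by
      by_cases hia : i = a
      · subst hia; simp [l0, W.xa.symm]
      · have hix : i ≠ x := fun h => hi (h ▸ hx)
        have : i ∉ t' := by
          rw [W.et] at hi
          rw [W.et']
          simp only [Finset.mem_insert, Finset.mem_singleton, not_or] at hi ⊢
          exact ⟨hi.1, hi.2.1, hia⟩
        simp [hia, hix, k1 i this])
    (by rw [Finset.sum_add_distrib, ← Finset.mul_sum, Finset.sum_sub_distrib, k2, sum_single,
      sum_single]; ring)
    (by rw [bc_add, bc_smul, bc_sub, k3, bc_single, bc_single]; module)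
  have e1 := e1 x
  rw [k1 x hx'] at e1
  simp [W.xa] at e1
  rw [e1, e2]
  refine ⟨?_, l0⟩
  rcases lt_or_gt_of_ne l0 with h1 | h1
  · have : (L a)⁻¹ < 0 := inv_lt_zero.2 h1
    rw [ind_false (by rintro ⟨h, _⟩; linarith), ind_false (by rintro ⟨h, _⟩; linarith),
      ind_false (by linarith), add_zero]
  · have i0 : 0 < (L a)⁻¹ := inv_pos.2 h1
    rw [ind_true h1]
    rcases lt_or_gt_of_ne h0 with h2 | h2
    · rw [ind_false (by rintro ⟨_, h⟩; linarith), ind_true ⟨i0, by nlinarith⟩, zero_add]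
    · rw [ind_false (P := _ ∧ 0 < -(L a)⁻¹ * h) (by rintro ⟨_, h⟩; nlinarith), ind_true ⟨h1, h2⟩,
        add_zero]

/-- Orientation of the projected triangle. -/
noncomputable def dt (p q r : E3) : ℝ :=
  p 0 * (q 1 * r 2 - q 2 * r 1) - p 1 * (q 0 * r 2 - q 2 * r 0) + p 2 * (q 0 * r 1 - q 1 * r 0)

noncomputable def ort (ψ : V → E3) (d : E3) (i j k : V) : ℝ := dt (ψ j - ψ i) (ψ k - ψ i) d

theorem ort_swap (i j k : V) : ort ψ d j i k = - ort ψ d i j k := by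
  simp [ort, dt]; ring
theorem Geo.ort_ne (G : Geo S ψ d X) {i j k : V} (hij : i ≠ j) (hik : i ≠ k) (hjk : j ≠ k) :
    ort ψ d i j k ≠ 0 := by
  intro h
  let M : Matrix (Fin 3) (Fin 3) ℝ := ![fun n => (ψ j - ψ i) n, fun n => (ψ k - ψ i) n, fun n => d n]
  have hM : M.det = 0 := by
    rw [← h, Matrix.det_fin_three]
    simp [M, ort, dt]; ring
  obtain ⟨c, hc, hz⟩ := Matrix.exists_vecMul_eq_zero_iff.2 hM
  have hz' : c 0 • (ψ j - ψ i) + c 1 • (ψ k - ψ i) + c 2 • d = 0 := by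
    ext n
    have := congrFun hz n
    simp [Matrix.vecMul, dotProduct, Fin.sum_univ_three, M] at this
    simp
    linarith
  obtain ⟨e1, e2⟩ := G.gen {i, j, k} Finset.card_le_three
    (fun n => c 0 * ((Pi.single j 1 : V → ℝ) n - (Pi.single i 1 : V → ℝ) n) +
      c 1 * ((Pi.single k 1 : V → ℝ) n - (Pi.single i 1 : V → ℝ) n))
    (fun n hn => by
      simp only [Finset.mem_insert, Finset.mem_singleton, not_or] at hn
      simp [hn.1, hn.2.1, hn.2.2])
    (by rw [Finset.sum_add_distrib, ← Finset.mul_sum, ← Finset.mul_sum, Finset.sum_sub_distrib,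
      Finset.sum_sub_distrib, sum_single, sum_single, sum_single]; ring) (-c 2)
    (by
      rw [bc_add, bc_smul, bc_smul, bc_sub, bc_sub, bc_single, bc_single, bc_single]
      rw [← sub_eq_zero, ← hz']
      module)
  have ej := e2 j
  have ek := e2 k
  simp [hij.symm, hjk, hik.symm, hjk.symm] at ej ek
  apply hc
  ext n
  fin_cases n
  · exact ej
  · exact ek
  · simpa using e1

theorem Geo.ort_wing (G : Geo S ψ d X) {t t' v w x a} (W : Wing S t t' v w x a) :
    ort ψ d v w x = LL ψ d t' (ψ x) a * ort ψ d v w a := by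
  obtain ⟨k1, k2, k3⟩ := G.LH_spec W.ht' (ψ x)
  generalize hL : LL ψ d t' (ψ x) = L at *
  generalize hH : HH ψ d t' (ψ x) = h at *
  have s1 : L v + (L w + L a) = 1 := by
    rw [← k2, ← Finset.sum_subset (Finset.subset_univ t') fun i _ hi => k1 i hi, W.et',
      Finset.sum_insert (by simp [W.vw, W.va]), Finset.sum_pair W.wa]
  have s2 : L v • ψ v + (L w • ψ w + L a • ψ a) = ψ x + h • d := by
    rw [← k3, bc, ← Finset.sum_subset (Finset.subset_univ t') fun i _ hi => by
      rw [k1 i hi, zero_smul], W.et',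
      Finset.sum_insert (by simp [W.vw, W.va]), Finset.sum_pair W.wa]
  have hx : ψ x - ψ v = L w • (ψ w - ψ v) + L a • (ψ a - ψ v) - h • d := by
    have e : ψ x = L v • ψ v + (L w • ψ w + L a • ψ a) - h • d := by rw [s2]; simp
    have : L v = 1 - L w - L a := by linarith
    rw [e, this]
    module
  unfold ort
  rw [hx]
  simp [dt]
  ring

theorem Geo.face_sign (G : Geo S ψ d X) (O : Ord S) {t : Finset V} (ht : t ∈ S.faces) {v w x : V}
    (et : t = {v, w, x}) (vw : v ≠ w) (vx : v ≠ x) (wx : w ≠ x) :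
    (if ({v, w} : Finset V) = {O.a t, O.c t} then 1 else 0) +
      ind (ort ψ d (O.a t) (O.b t) (O.c t) < 0) =
      ind (ort ψ d v w x < 0) + ind (O.rk w < O.rk v) := by
  have h1 := O.hab t ht
  have h2 := O.hbc t ht
  have n1 := O.ne_ab ht
  have n2 := O.ne_bc ht
  have n3 := O.ne_ac ht
  have hv : v ∈ t := by rw [et]; simp
  have hw : w ∈ t := by rw [et]; simp
  have hx : x ∈ t := by rw [et]; simp
  rw [O.mem_iff ht] at hv hw hx
  have hn := G.ort_ne n1 n3 n2
  generalize O.a t = a at *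
  generalize O.b t = b at *
  generalize O.c t = c at *
  have f1 : ∀ z : ℝ, z ≠ 0 → ind (-z < 0) = 1 + ind (z < 0) := by
    intro z hz
    rcases lt_or_gt_of_ne hz with h | h
    · rw [ind_true h, ind_false (by linarith)]; rfl
    · rw [ind_true (P := -z < 0) (by linarith), ind_false (P := z < 0) (by linarith)]; rfl
  have f2 : ∀ {m n : ℕ}, m < n → ind (m < n) = 1 := fun h => ind_true h
  have f3 : ∀ {m n : ℕ}, m < n → ind (n < m) = 0 := fun h => ind_false (by omega)
  have g1 : ({a, b} : Finset V) ≠ {a, c} := by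
    intro h
    have : b ∈ ({a, c} : Finset V) := by rw [← h]; simp
    simp [n1.symm, n2] at this
  have g2 : ({b, c} : Finset V) ≠ {a, c} := by
    intro h
    have : b ∈ ({a, c} : Finset V) := by rw [← h]; simp
    simp [n1.symm, n2] at this
  have h3 := h1.trans h2
  rcases hv with rfl | rfl | rfl <;> rcases hw with rfl | rfl | rfl <;>
    rcases hx with rfl | rfl | rfl <;>
    (try exact absurd rfl vw) <;> (try exact absurd rfl vx) <;> (try exact absurd rfl wx)
  · rw [if_neg g1, f3 h1]; ring
  · have e : ort ψ d v w x = - ort ψ d v x w := by simp [ort, dt]; ring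
    rw [if_pos rfl, f3 h3, e, f1 _ hn]; ring
  · have e : ort ψ d v w x = - ort ψ d w v x := ort_swap _ _ _
    rw [Finset.pair_comm, if_neg g1, f2 h1, e, f1 _ hn]
    linear_combination -(add_self2 (1 : ZMod 2))
  · have e : ort ψ d v w x = ort ψ d x v w := by simp [ort, dt]; ring
    rw [if_neg g2, f3 h2, e]; ring
  · have e : ort ψ d v w x = ort ψ d w x v := by simp [ort, dt]; ring
    rw [Finset.pair_comm, if_pos rfl, f2 h3, e]; ring
  · have e : ort ψ d v w x = - ort ψ d x w v := by simp [ort, dt]; ring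
    rw [Finset.pair_comm, if_neg g2, f2 h2, e, f1 _ hn]
    linear_combination -(add_self2 (1 : ZMod 2))

noncomputable def fold (S : CombClosedSurface V) (ψ : V → E3) (d : E3) (O : Ord S)
    (e : Finset V) : ZMod 2 :=
  1 + ∑ t ∈ S.faces.filter (fun t => e ⊆ t), ((if e = {O.a t, O.c t} then 1 else 0) +
    ind (ort ψ d (O.a t) (O.b t) (O.c t) < 0))

theorem Geo.fold_eq (G : Geo S ψ d X) (O : Ord S) {t t' v w x a} (W : Wing S t t' v w x a) :
    fold S ψ d O {v, w} = ind (FO ψ d t' a x) + ind (FO ψ d t x a) := by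
  obtain ⟨h1, h2⟩ := G.FO_sum W
  rw [h1]
  unfold fold
  rw [W.hf, Finset.sum_pair W.ne, G.face_sign O W.ht W.et W.vw W.vx W.wx,
    G.face_sign O W.ht' W.et' W.vw W.va W.wa, G.ort_wing W]
  have h3 := G.ort_ne W.vw W.va W.wa
  generalize LL ψ d t' (ψ x) a = l at *
  generalize ort ψ d v w a = m at *
  have key : 1 + (ind (l * m < 0) + ind (m < 0)) = ind (0 < l) := by
    rcases lt_or_gt_of_ne h2 with p | p <;> rcases lt_or_gt_of_ne h3 with q | q
    · rw [ind_false (P := l * m < 0) (by nlinarith), ind_true q, ind_false (P := 0 < l) (by linarith)]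
      rfl
    · rw [ind_true (P := l * m < 0) (by nlinarith), ind_false (P := m < 0) (by linarith),
        ind_false (P := 0 < l) (by linarith)]
      rfl
    · rw [ind_true (P := l * m < 0) (by nlinarith), ind_true q, ind_true p]
      rfl
    · rw [ind_false (P := l * m < 0) (by nlinarith), ind_false (P := m < 0) (by linarith),
        ind_true p]
      rfl
  linear_combination key + add_self2 (ind (O.rk w < O.rk v))

theorem Geo.h1 (G : Geo S ψ d X) (O : Ord S) : ∀ e ∈ S.edgeSet, ∀ v ∈ e, fold S ψ d O e =
    ∑ t ∈ S.faces.filter (fun t => e ⊆ t), oo S ψ d t v := by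
  intro e he v hv
  obtain ⟨hc, t, ht, het⟩ := (mem_edgeSet S).1 he
  obtain ⟨w, hw⟩ := Finset.card_eq_one.1
    (show (e.erase v).card = 1 by rw [Finset.card_erase_of_mem hv, hc])
  have ee : e = {v, w} := by rw [← Finset.insert_erase hv, hw]
  have hvw : v ≠ w := by
    rintro rfl
    rw [ee] at hc; simp at hc
  obtain ⟨t', x, a, W⟩ := exists_wing ht (het hv) (het (by rw [ee]; simp)) hvw
  rw [ee, G.fold_eq O W, G.oo_fold W]

end Fold
end NoTriple

namespace NoTriple

set_option linter.unusedSectionVars false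

section Pair
variable {V : Type*} [DecidableEq V] [Fintype V]
variable {S : CombClosedSurface V} {ψ : V → E3} {d : E3} {X : Set E3}

/-- Pairs of affine combinations on `t` and `s` representing the same point. -/
structure Aff (ψ : V → E3) (t s : Finset V) (c : ℝ) (g : V → ℝ) : Prop where
  supp : ∀ i, i ∉ t ∪ s → g i = 0
  st : ∑ i ∈ t, g i = c
  ss : ∑ i ∈ s, g i = c
  eq : ∑ i ∈ t, g i • ψ i = ∑ i ∈ s, g i • ψ i

theorem Aff.add_smul {t s : Finset V} {c : ℝ} {g ν : V → ℝ} (hg : Aff ψ t s c g)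
    (hν : Aff ψ t s 0 ν) (τ : ℝ) : Aff ψ t s c (fun i => g i + τ * ν i) where
  supp i hi := by rw [hg.supp i hi, hν.supp i hi]; simp
  st := by rw [Finset.sum_add_distrib, ← Finset.mul_sum, hg.st, hν.st]; simp
  ss := by rw [Finset.sum_add_distrib, ← Finset.mul_sum, hg.ss, hν.ss]; simp
  eq := by
    simp only [_root_.add_smul, mul_smul, Finset.sum_add_distrib, ← Finset.smul_sum]
    rw [hg.eq, hν.eq]

theorem Aff.sub {t s : Finset V} {c : ℝ} {g g' : V → ℝ} (hg : Aff ψ t s c g)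
    (hg' : Aff ψ t s c g') : Aff ψ t s 0 (fun i => g i - g' i) where
  supp i hi := by rw [hg.supp i hi, hg'.supp i hi]; simp
  st := by rw [Finset.sum_sub_distrib, hg.st, hg'.st]; simp
  ss := by rw [Finset.sum_sub_distrib, hg.ss, hg'.ss]; simp
  eq := by
    simp only [sub_smul, Finset.sum_sub_distrib]
    rw [hg.eq, hg'.eq]

theorem Geo.two_zeros (G : Geo S ψ d X) {t s : Finset V} (ht : t ∈ S.faces) (hs : s ∈ S.faces)
    (hd : Disjoint t s) {c : ℝ} {g : V → ℝ} (hg : Aff ψ t s c g) {i j : V} (hi : i ∈ t ∪ s)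
    (hj : j ∈ t ∪ s) (hij : i ≠ j) (gi : g i = 0) (gj : g j = 0) : ∀ k, g k = 0 := by
  have hc : (((t ∪ s).erase i).erase j).card ≤ 4 := by
    rw [Finset.card_erase_of_mem (Finset.mem_erase.2 ⟨hij.symm, hj⟩), Finset.card_erase_of_mem hi,
      Finset.card_union_of_disjoint hd, S.face_card t ht, S.face_card s hs]
  have hu : ∀ {M : Type} [AddCommGroup M] (f : V → M), (∀ k, k ∉ t ∪ s → f k = 0) →
      ∑ k, f k = ∑ k ∈ t, f k + ∑ k ∈ s, f k := by
    intro M _ f hf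
    rw [← Finset.sum_union hd]
    exact (Finset.sum_subset (Finset.subset_univ _) fun k _ hk => hf k hk).symm
  have hnt : ∀ k ∈ s, k ∉ t := fun k hk hk' => Finset.disjoint_left.1 hd hk' hk
  have key := G.indep _ hc (fun k => if k ∈ t then g k else - g k) (by
    intro k hk
    have : g k = 0 := by
      by_cases hki : k = i
      · rw [hki, gi]
      by_cases hkj : k = j
      · rw [hkj, gj]
      exact hg.supp k fun h => hk (by simp only [Finset.mem_erase]; exact ⟨hkj, hki, h⟩)
    simp [this]) (by
    rw [hu]
    · rw [Finset.sum_congr rfl (g := g) (fun k hk => if_pos hk),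
        Finset.sum_congr (s₁ := s) rfl (g := fun k => - g k) (fun k hk => if_neg (hnt k hk)),
        Finset.sum_neg_distrib, hg.st, hg.ss, add_neg_cancel]
    · intro k hk
      simp [hg.supp k hk]) (by
    unfold bc
    rw [hu]
    · rw [Finset.sum_congr rfl (g := fun k => g k • ψ k) (fun k hk => by simp [hk]),
        Finset.sum_congr (s₁ := s) rfl (g := fun k => - (g k • ψ k))
          (fun k hk => by simp [hnt k hk]),
        Finset.sum_neg_distrib, hg.eq, add_neg_cancel]
    · intro k hk
      simp [hg.supp k hk])
  intro k
  have := key k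
  split_ifs at this
  · exact this
  · linarith

theorem exists_dir {t s : Finset V} (ht : t ∈ S.faces) (hs : s ∈ S.faces)
    (hd : Disjoint t s) : ∃ ν : V → ℝ, Aff ψ t s 0 ν ∧ ∃ i ∈ t ∪ s, ν i ≠ 0 := by
  let ex : (↥(t ∪ s) → ℝ) →ₗ[ℝ] V → ℝ :=
    { toFun := fun x i => if h : i ∈ t ∪ s then x ⟨i, h⟩ else 0
      map_add' := fun x y => by
        ext i
        by_cases h : i ∈ t ∪ s <;> simp only [h, dite_true, dite_false, Pi.add_apply, Pi.smul_apply, smul_zero, add_zero, RingHom.id_apply]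
      map_smul' := fun c x => by
        ext i
        by_cases h : i ∈ t ∪ s <;> simp only [h, dite_true, dite_false, Pi.add_apply, Pi.smul_apply, smul_zero, add_zero, RingHom.id_apply] }
  let f : (↥(t ∪ s) → ℝ) →ₗ[ℝ] (E3 × ℝ × ℝ) :=
    { toFun := fun x => (∑ i ∈ t, ex x i • ψ i - ∑ i ∈ s, ex x i • ψ i,
        ∑ i ∈ t, ex x i, ∑ i ∈ s, ex x i)
      map_add' := fun x y => by
        simp only [map_add, Pi.add_apply, _root_.add_smul, Finset.sum_add_distrib, Prod.mk_add_mk]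
        congr 1
        abel
      map_smul' := fun c x => by
        simp only [map_smul, Pi.smul_apply, smul_eq_mul, mul_smul, ← Finset.smul_sum,
          ← Finset.mul_sum, RingHom.id_apply, Prod.smul_mk, smul_sub] }
  have hk : LinearMap.ker f ≠ ⊥ := by
    apply LinearMap.ker_ne_bot_of_finrank_lt
    simp only [Module.finrank_prod, Module.finrank_self, finrank_euclideanSpace,
      Module.finrank_fintype_fun_eq_card, Fintype.card_fin, Fintype.card_coe]
    rw [Finset.card_union_of_disjoint hd, S.face_card t ht, S.face_card s hs]
    norm_num
  obtain ⟨x, hx, hx0⟩ := Submodule.exists_mem_ne_zero_of_ne_bot hk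
  rw [LinearMap.mem_ker] at hx
  refine ⟨ex x, ⟨fun i hi => ?_, ?_, ?_, ?_⟩, ?_⟩
  · show (if h : i ∈ t ∪ s then x ⟨i, h⟩ else 0) = 0
    rw [dif_neg hi]
  · exact congrArg (fun z => z.2.1) hx
  · exact congrArg (fun z => z.2.2) hx
  · exact sub_eq_zero.1 (congrArg (fun z => z.1) hx)
  · by_contra! h
    apply hx0
    ext ⟨i, hi⟩
    have := h i hi
    simp only [ex, LinearMap.coe_mk, AddHom.coe_mk, dif_pos hi] at this
    exact this

theorem Aff.exists_neg {t s : Finset V} {ν : V → ℝ} (hν : Aff ψ t s 0 ν)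
    (h : ∃ i ∈ t ∪ s, ν i ≠ 0) : ∃ i ∈ t ∪ s, ν i < 0 := by
  by_contra! hn
  obtain ⟨i, hi, hne⟩ := h
  rw [Finset.mem_union] at hi
  rcases hi with hi | hi
  · exact hne ((Finset.sum_eq_zero_iff_of_nonneg fun j hj =>
      hn j (Finset.mem_union_left _ hj)).1 hν.st i hi)
  · exact hne ((Finset.sum_eq_zero_iff_of_nonneg fun j hj =>
      hn j (Finset.mem_union_right _ hj)).1 hν.ss i hi)

theorem Aff.move {t s : Finset V} {g ν : V → ℝ} (hg0 : ∀ i, 0 ≤ g i)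
    (hν : Aff ψ t s 0 ν) (h : ∃ i ∈ t ∪ s, ν i ≠ 0) :
    ∃ τ : ℝ, 0 ≤ τ ∧ ∃ k ∈ t ∪ s, ν k < 0 ∧ (∀ i, 0 ≤ g i + τ * ν i) ∧ g k + τ * ν k = 0 := by
  obtain ⟨i0, hi0, hn0⟩ := hν.exists_neg h
  obtain ⟨k, hk, hmin⟩ := Finset.exists_min_image ((t ∪ s).filter fun i => ν i < 0)
    (fun i => g i / (- ν i)) ⟨i0, Finset.mem_filter.2 ⟨hi0, hn0⟩⟩
  rw [Finset.mem_filter] at hk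
  have hpos : 0 < - ν k := by linarith [hk.2]
  have hτ : 0 ≤ g k / (- ν k) := div_nonneg (hg0 k) hpos.le
  refine ⟨g k / (- ν k), hτ, k, hk.1, hk.2, fun i => ?_, ?_⟩
  · by_cases hi : ν i < 0
    · have hi' : i ∈ t ∪ s := by
        by_contra h'
        rw [hν.supp i h'] at hi
        exact lt_irrefl _ hi
      have h1 := hmin i (Finset.mem_filter.2 ⟨hi', hi⟩)
      have h2 : 0 < - ν i := by linarith
      rw [le_div_iff₀ h2] at h1
      linarith
    · have := hg0 i
      have := mul_nonneg hτ (not_lt.1 hi)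
      linarith
  · have : ν k ≠ 0 := hk.2.ne
    field_simp
    ring

def IsN (ψ : V → E3) (t s : Finset V) (g : V → ℝ) (k : V) : Prop :=
  Aff ψ t s 1 g ∧ k ∈ t ∪ s ∧ g k = 0 ∧ ∀ i ∈ t ∪ s, i ≠ k → 0 < g i

theorem IsN.nonneg {t s : Finset V} {g : V → ℝ} {k : V} (h : IsN ψ t s g k) (i : V) : 0 ≤ g i := by
  by_cases hi : i ∈ t ∪ s
  · by_cases hik : i = k
    · rw [hik, h.2.2.1]
    · exact (h.2.2.2 i hi hik).le
  · rw [h.1.supp i hi]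

theorem Aff.ne {t s : Finset V} {g : V → ℝ} (h : Aff ψ t s 1 g) : ¬ ∀ k, g k = 0 := by
  intro h0
  have := h.st
  rw [Finset.sum_eq_zero fun i _ => h0 i] at this
  exact zero_ne_one this

theorem Geo.isN_of (G : Geo S ψ d X) {t s : Finset V} (ht : t ∈ S.faces) (hs : s ∈ S.faces)
    (hd : Disjoint t s) {g : V → ℝ} (hg : Aff ψ t s 1 g) (h0 : ∀ i, 0 ≤ g i) {k : V}
    (hk : k ∈ t ∪ s) (gk : g k = 0) : IsN ψ t s g k := by
  refine ⟨hg, hk, gk, fun i hi hik => lt_of_le_of_ne (h0 i) fun h => ?_⟩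
  exact hg.ne (G.two_zeros ht hs hd hg hi hk hik h.symm gk)

theorem Geo.exists_node (G : Geo S ψ d X) {t s : Finset V} (ht : t ∈ S.faces) (hs : s ∈ S.faces)
    (hd : Disjoint t s) {g : V → ℝ} (hg : Aff ψ t s 1 g) (h0 : ∀ i, 0 ≤ g i) :
    ∃ g' k, IsN ψ t s g' k := by
  obtain ⟨ν, hν, hne⟩ := exists_dir (ψ := ψ) ht hs hd
  obtain ⟨τ, _, k, hk, _, h1, h2⟩ := hν.move h0 hne
  exact ⟨_, k, G.isN_of ht hs hd (hg.add_smul hν τ) h1 hk h2⟩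

/-- At a node no direction is stationary. -/
theorem Geo.dir_ne (G : Geo S ψ d X) {t s : Finset V} (ht : t ∈ S.faces) (hs : s ∈ S.faces)
    (hd : Disjoint t s) {g : V → ℝ} {k : V} (hg : IsN ψ t s g k) {ν : V → ℝ}
    (hν : Aff ψ t s 0 ν) (h0 : ν k = 0) : ∀ i, ν i = 0 := by
  by_contra! hne
  obtain ⟨i, hi⟩ := hne
  have hi' : i ∈ t ∪ s := by
    by_contra h
    exact hi (hν.supp i h)
  obtain ⟨τ, _, j, hj, hneg, h1, h2⟩ := hν.move hg.nonneg ⟨i, hi', hi⟩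
  have hjk : j ≠ k := by
    rintro rfl
    rw [h0] at hneg
    exact lt_irrefl _ hneg
  have ha := hg.1.add_smul hν τ
  exact ha.ne (G.two_zeros ht hs hd ha hj hg.2.1 hjk h2 (by rw [h0, hg.2.2.1]; simp))

theorem Geo.second_node (G : Geo S ψ d X) {t s : Finset V} (ht : t ∈ S.faces) (hs : s ∈ S.faces)
    (hd : Disjoint t s) {g : V → ℝ} {k : V} (hg : IsN ψ t s g k) :
    ∃ g' k', k' ≠ k ∧ IsN ψ t s g' k' ∧ ∀ g'' k'', IsN ψ t s g'' k'' → k'' = k ∨ k'' = k' := by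
  obtain ⟨ν, hν, hνk, hne⟩ : ∃ ν, Aff ψ t s 0 ν ∧ 0 < ν k ∧ ∃ i ∈ t ∪ s, ν i ≠ 0 := by
    obtain ⟨ν, hν, hne⟩ := exists_dir (ψ := ψ) ht hs hd
    have h0 : ν k ≠ 0 := fun h => by
      obtain ⟨i, _, hi⟩ := hne
      exact hi (G.dir_ne ht hs hd hg hν h i)
    rcases lt_or_gt_of_ne h0 with h | h
    · have hz : Aff ψ t s 0 (fun i => ν i - ν i) := hν.sub hν
      have := (hz.add_smul hν (-1))
      refine ⟨_, this, ?_, k, hg.2.1, ?_⟩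
      · linarith
      · intro h'; linarith
    · exact ⟨ν, hν, h, hne⟩
  obtain ⟨τ, hτ, k', hk', hneg, h1, h2⟩ := hν.move hg.nonneg hne
  have hkk : k' ≠ k := by
    rintro rfl
    linarith
  have hN := G.isN_of ht hs hd (hg.1.add_smul hν τ) h1 hk' h2
  refine ⟨_, k', hkk, hN, ?_⟩
  intro g2 k2 h3
  have hD := (h3.1.sub hg.1).add_smul hν (-((g2 k - g k) / ν k))
  have h4 := G.dir_ne ht hs hd hg hD (by field_simp; ring)
  generalize (g2 k - g k) / ν k = c at h4
  have h5 : ∀ i, g2 i = g i + c * ν i := fun i => by linarith [h4 i]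
  have hc : 0 ≤ c := by
    have := h3.nonneg k
    rw [h5, hg.2.2.1] at this
    by_contra hc
    nlinarith
  have hcτ : c ≤ τ := by
    have := h3.nonneg k'
    rw [h5] at this
    by_contra hc
    nlinarith
  by_contra! hne2
  have p1 := hg.2.2.2 k2 h3.2.1 hne2.1
  have p2 : 0 < g k2 + τ * ν k2 := hN.2.2.2 k2 h3.2.1 hne2.2
  have p3 := h3.2.2.1
  rw [h5] at p3
  by_cases h : ν k2 < 0
  · nlinarith
  · nlinarith [mul_nonneg hc (not_lt.1 h)]

/-- The segment of intersection of `t` and `s` ends at `k`. -/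
def Node (ψ : V → E3) (t s : Finset V) (k : V) (p : E3) : Prop :=
  Rel ψ (t.erase k) p ∧ Rel ψ (s.erase k) p

theorem sum_supp {M : Type*} [AddCommMonoid M] {t : Finset V} (f : V → M)
    (h : ∀ i, i ∉ t → f i = 0) : ∑ i, f i = ∑ i ∈ t, f i :=
  (Finset.sum_subset (Finset.subset_univ t) fun i _ hi => h i hi).symm

theorem aff_of {t s : Finset V} (hd : Disjoint t s) {p : E3} {l m : V → ℝ}
    (l1 : ∀ i, i ∉ t → l i = 0) (l3 : ∑ i, l i = 1) (l4 : bc ψ l = p)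
    (m1 : ∀ i, i ∉ s → m i = 0) (m3 : ∑ i, m i = 1) (m4 : bc ψ m = p) :
    Aff ψ t s 1 (fun i => l i + m i) := by
  have hm : ∀ i ∈ t, m i = 0 := fun i hi => m1 i (Finset.disjoint_left.1 hd hi)
  have hl : ∀ i ∈ s, l i = 0 := fun i hi => l1 i (Finset.disjoint_right.1 hd hi)
  refine ⟨fun i hi => ?_, ?_, ?_, ?_⟩
  · rw [Finset.mem_union, not_or] at hi
    simp [l1 i hi.1, m1 i hi.2]
  · rw [← l3, sum_supp l l1]
    exact Finset.sum_congr rfl fun i hi => by simp [hm i hi]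
  · rw [← m3, sum_supp m m1]
    exact Finset.sum_congr rfl fun i hi => by simp [hl i hi]
  · have e1 : ∑ i ∈ t, (l i + m i) • ψ i = bc ψ l := by
      rw [bc, sum_supp (t := t) _ (fun i hi => by simp [l1 i hi])]
      exact Finset.sum_congr rfl fun i hi => by simp [hm i hi]
    have e2 : ∑ i ∈ s, (l i + m i) • ψ i = bc ψ m := by
      rw [bc, sum_supp (t := s) _ (fun i hi => by simp [m1 i hi])]
      exact Finset.sum_congr rfl fun i hi => by simp [hl i hi]
    rw [e1, e2, l4, m4]

theorem Node.isN {t s : Finset V} (hd : Disjoint t s) {k : V} {p : E3} (hk : k ∈ t ∪ s)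
    (h : Node ψ t s k p) : ∃ g, IsN ψ t s g k := by
  obtain ⟨⟨l, l1, l2, l3, l4⟩, m, m1, m2, m3, m4⟩ := h
  have hl : ∀ i, 0 ≤ l i := fun i => by
    by_cases hi : i ∈ t.erase k
    · exact (l2 i hi).le
    · rw [l1 i hi]
  have hm : ∀ i, 0 ≤ m i := fun i => by
    by_cases hi : i ∈ s.erase k
    · exact (m2 i hi).le
    · rw [m1 i hi]
  refine ⟨_, aff_of hd (fun i hi => l1 i fun h => hi (Finset.mem_of_mem_erase h)) l3 l4
    (fun i hi => m1 i fun h => hi (Finset.mem_of_mem_erase h)) m3 m4, hk, ?_, ?_⟩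
  · rw [l1 k (by simp), m1 k (by simp), add_zero]
  · intro i hi hik
    rw [Finset.mem_union] at hi
    rcases hi with hi | hi
    · have := l2 i (Finset.mem_erase.2 ⟨hik, hi⟩)
      have := hm i
      linarith
    · have := m2 i (Finset.mem_erase.2 ⟨hik, hi⟩)
      have := hl i
      linarith

theorem IsN.node {t s : Finset V} (hd : Disjoint t s) {k : V} {g : V → ℝ} (h : IsN ψ t s g k) :
    ∃ p, Node ψ t s k p := by
  have aux : ∀ u : Finset V, u ⊆ t ∪ s → ∑ i ∈ u, g i = 1 →
      Rel ψ (u.erase k) (∑ i ∈ u, g i • ψ i) := by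
    intro u hu hsum
    refine ⟨fun i => if i ∈ u then g i else 0, fun i hi => ?_, fun i hi => ?_, ?_, ?_⟩
    · dsimp only
      split_ifs with hiu
      · have : i = k := by
          by_contra hik
          exact hi (Finset.mem_erase.2 ⟨hik, hiu⟩)
        rw [this, h.2.2.1]
      · rfl
    · rw [Finset.mem_erase] at hi
      simp only [hi.2, if_true]
      exact h.2.2.2 i (hu hi.2) hi.1
    · rw [Finset.sum_ite_mem, Finset.univ_inter, hsum]
    · unfold bc
      simp only [ite_smul, zero_smul]
      rw [Finset.sum_ite_mem, Finset.univ_inter]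
  refine ⟨∑ i ∈ t, g i • ψ i, aux t Finset.subset_union_left h.1.st, ?_⟩
  rw [h.1.eq]
  exact aux s Finset.subset_union_right h.1.ss

theorem Geo.pair_second (G : Geo S ψ d X) {t s : Finset V} (ht : t ∈ S.faces) (hs : s ∈ S.faces)
    (hd : Disjoint t s) {k : V} (hk : k ∈ t ∪ s) (h : ∃ p, Node ψ t s k p) :
    ∃ k' ∈ t ∪ s, k' ≠ k ∧ (∃ p, Node ψ t s k' p) ∧
      ∀ k'' ∈ t ∪ s, (∃ p, Node ψ t s k'' p) → k'' = k ∨ k'' = k' := by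
  obtain ⟨p, hp⟩ := h
  obtain ⟨g, hg⟩ := hp.isN hd hk
  obtain ⟨g', k', h1, h2, h3⟩ := G.second_node ht hs hd hg
  refine ⟨k', h2.2.1, h1, h2.node hd, fun k'' hk'' ⟨p'', hp''⟩ => ?_⟩
  obtain ⟨g'', hg''⟩ := hp''.isN hd hk''
  exact h3 _ _ hg''

theorem Geo.pair_first (G : Geo S ψ d X) {t s : Finset V} (ht : t ∈ S.faces) (hs : s ∈ S.faces)
    (hd : Disjoint t s) {p : E3} (h1 : Hull ψ t p) (h2 : Hull ψ s p) :
    ∃ k ∈ t ∪ s, ∃ p, Node ψ t s k p := by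
  obtain ⟨l, l1, l2, l3, l4⟩ := h1
  obtain ⟨m, m1, m2, m3, m4⟩ := h2
  obtain ⟨g, k, hg⟩ := G.exists_node ht hs hd (aff_of hd l1 l3 l4 m1 m3 m4)
    (fun i => add_nonneg (l2 i) (m2 i))
  exact ⟨k, hg.2.1, hg.node hd⟩

/-- The edge of the pair `t, s` containing the node `k`. -/
def ed (t s : Finset V) (k : V) : Finset V := if k ∈ t then t.erase k else s.erase k

theorem ed_inj (S : CombClosedSurface V) {t s : Finset V} (ht : t ∈ S.faces) (hs : s ∈ S.faces)
    (hd : Disjoint t s) {k k' : V} (hk : k ∈ t ∪ s) (hk' : k' ∈ t ∪ s) (h : ed t s k = ed t s k') :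
    k = k' := by
  by_contra hne
  have c1 := S.face_card t ht
  have c2 := S.face_card s hs
  have aux : ∀ {t s : Finset V}, Disjoint t s → t.card = 3 → ∀ k k', k ∈ t → t.erase k = s.erase k' →
      False := by
    intro t s hd c1 k k' hk he
    have : (t.erase k).Nonempty := by
      rw [← Finset.card_pos, Finset.card_erase_of_mem hk, c1]; norm_num
    obtain ⟨i, hi⟩ := this
    have hi2 := hi
    rw [he] at hi2
    exact Finset.disjoint_left.1 hd (Finset.mem_of_mem_erase hi) (Finset.mem_of_mem_erase hi2)
  have aux2 : ∀ {t : Finset V}, k' ∈ t → t.erase k = t.erase k' → False := by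
    intro t hk' he
    have : k' ∈ t.erase k := Finset.mem_erase.2 ⟨Ne.symm hne, hk'⟩
    rw [he] at this
    simp at this
  rw [Finset.mem_union] at hk hk'
  unfold ed at h
  split_ifs at h with h1 h2 h2
  · exact aux2 h2 h
  · exact aux hd c1 _ _ h1 h
  · exact aux hd c1 _ _ h2 h.symm
  · exact aux2 (hk'.resolve_left h2) h

theorem Node.symm {t s : Finset V} {k : V} {p : E3} (h : Node ψ t s k p) : Node ψ s t k p :=
  ⟨h.2, h.1⟩

theorem Geo.node_free (G : Geo S ψ d X) {t s : Finset V} (ht : t ∈ S.faces) (hs : s ∈ S.faces)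
    (hd : Disjoint t s) {k : V} (hk : k ∈ t) {p : E3} (h : Node ψ t s k p) {r : Finset V}
    (hr : r ∈ S.faces) (her : t.erase k ⊆ r) (hrt : r ≠ t) (hsub : r ⊆ t ∪ s) : False := by
  have hks : k ∉ s := Finset.disjoint_left.1 hd hk
  have hP : Pierce ψ (t.erase k) s := ⟨p, h.1, by
    have := h.2
    rwa [Finset.erase_eq_of_notMem hks] at this⟩
  have h1 := G.pierce_disj hr hs her (by rw [Finset.card_erase_of_mem hk, S.face_card t ht]) hP
  refine hrt (face_eq_of_subset S hr ht fun i hi => ?_)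
  have := hsub hi
  rw [Finset.mem_union] at this
  exact this.resolve_right (Finset.disjoint_left.1 h1 hi)

theorem Geo.piercing (G : Geo S ψ d X) {t s : Finset V} (ht : t ∈ S.faces) (hs : s ∈ S.faces)
    (hd : Disjoint t s) {p : E3} (h1 : Hull ψ t p) (h2 : Hull ψ s p) : S.PiercingCond t s := by
  obtain ⟨k, hk, hn⟩ := G.pair_first ht hs hd h1 h2
  obtain ⟨k', hk', hne, hn', _⟩ := G.pair_second ht hs hd hk hn
  have c1 := S.face_card t ht
  have c2 := S.face_card s hs
  set U := Finset.powersetCard 2 t ∪ Finset.powersetCard 2 s with hU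
  have hUc : U.card ≤ 6 := by
    refine le_trans (Finset.card_union_le _ _) ?_
    rw [Finset.card_powersetCard, Finset.card_powersetCard, c1, c2]
    decide
  have hmem : ∀ k ∈ t ∪ s, ed t s k ∈ U := by
    intro k hk
    rw [Finset.mem_union] at hk
    unfold ed
    split_ifs with h
    · exact Finset.mem_union_left _ (Finset.mem_powersetCard.2
        ⟨Finset.erase_subset _ _, by rw [Finset.card_erase_of_mem h, c1]⟩)
    · exact Finset.mem_union_right _ (Finset.mem_powersetCard.2
        ⟨Finset.erase_subset _ _, by rw [Finset.card_erase_of_mem (hk.resolve_left h), c2]⟩)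
  have hfree : ∀ k ∈ t ∪ s, (∃ p, Node ψ t s k p) → ¬ ∃ r ∈ S.faces, ed t s k ⊆ r ∧ r ≠ t ∧ r ≠ s ∧
      r ⊆ t ∪ s := by
    rintro k hk ⟨p, hp⟩ ⟨r, hr, her, hrt, hrs, hsub⟩
    rw [Finset.mem_union] at hk
    unfold ed at her
    split_ifs at her with h
    · exact G.node_free ht hs hd h hp hr her hrt hsub
    · exact G.node_free hs ht hd.symm (hk.resolve_left h) hp.symm hr her hrs
        (by rwa [Finset.union_comm])
  have hsub : (U.filter fun e => ∃ r ∈ S.faces, e ⊆ r ∧ r ≠ t ∧ r ≠ s ∧ r ⊆ t ∪ s) ⊆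
      (U.erase (ed t s k)).erase (ed t s k') := by
    intro e he
    rw [Finset.mem_filter] at he
    rw [Finset.mem_erase, Finset.mem_erase]
    refine ⟨?_, ?_, he.1⟩
    · rintro rfl; exact hfree k' hk' hn' he.2
    · rintro rfl; exact hfree k hk hn he.2
  have h3 := Finset.card_le_card hsub
  rw [Finset.card_erase_of_mem (Finset.mem_erase.2
    ⟨fun h => hne (ed_inj S ht hs hd hk' hk h), hmem k' hk'⟩),
    Finset.card_erase_of_mem (hmem k hk)] at h3
  unfold CombClosedSurface.PiercingCond
  rw [← hU]
  omega

end Pair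
end NoTriple

namespace NoTriple

set_option linter.unusedSectionVars false

section Triple
variable {V : Type*} [DecidableEq V] [Fintype V]
variable {S : CombClosedSurface V} {ψ : V → E3} {d : E3} {X : Set E3}

/-- The combinatorial hypothesis of the main theorem. -/
def NoT (S : CombClosedSurface V) : Prop :=
  ¬ ∃ t₁ ∈ S.faces, ∃ t₂ ∈ S.faces, ∃ t₃ ∈ S.faces,
      Disjoint t₁ t₂ ∧ Disjoint t₁ t₃ ∧ Disjoint t₂ t₃ ∧
      S.PiercingCond t₁ t₂ ∧ S.PiercingCond t₁ t₃ ∧ S.PiercingCond t₂ t₃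

theorem Geo.sub_of_meet (G : Geo S ψ d X) {t r e : Finset V} (ht : t ∈ S.faces) (hr : r ∈ S.faces)
    (het : e ⊆ t) {p : E3} (he : Rel ψ e p) (hp : Hull ψ r p) (hd : ¬ Disjoint t r) : e ⊆ r := by
  obtain ⟨l, l1, l2, l3, l4⟩ := he
  obtain ⟨m, m1, m2, m3, m4⟩ := hp
  have hl : ∀ i, 0 ≤ l i := fun i => by
    by_cases hi : i ∈ e
    · exact (l2 i hi).le
    · rw [l1 i hi]
  have heq := G.imm_eq ht hr hd (fun i hi => l1 i fun h => hi (het h)) hl l3 m1 m2 m3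
    (by rw [l4, m4])
  intro i hi
  by_contra hir
  have h1 := l2 i hi
  rw [heq i, m1 i hir] at h1
  exact lt_irrefl _ h1

theorem Geo.trip (G : Geo S ψ d X) (N : NoT S) {t s r e s' : Finset V} (ht : t ∈ S.faces)
    (hs : s ∈ S.faces) (hr : r ∈ S.faces) (hd : Disjoint t s) (het : e ⊆ t) (hss : s' ⊆ s) {p : E3}
    (he : Rel ψ e p) (hs' : Rel ψ s' p) (hp : Hull ψ r p) (her : ¬ e ⊆ r) (hsr : ¬ s' ⊆ r) :
    False := by
  have d1 : Disjoint t r := by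
    by_contra h
    exact her (G.sub_of_meet ht hr het he hp h)
  have d2 : Disjoint s r := by
    by_contra h
    exact hsr (G.sub_of_meet hs hr hss hs' hp h)
  have h1 : Hull ψ t p := he.hull.mono het
  have h2 : Hull ψ s p := hs'.hull.mono hss
  exact N ⟨t, ht, s, hs, r, hr, hd, d1, d2, G.piercing ht hs hd h1 h2, G.piercing ht hr d1 h1 hp,
    G.piercing hs hr d2 h2 hp⟩

theorem Geo.LLp_ne (G : Geo S ψ d X) {r e : Finset V} (hr : r ∈ S.faces) (he : e.card = 2)
    {p : E3} (hX : p ∈ X) (hp : Rel ψ e p) {i : V} (hi : i ∈ r) (h0 : LL ψ d r p i = 0) :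
    e ⊆ r.erase i := by
  obtain ⟨k1, k2, k3⟩ := G.LH_spec hr p
  have hk : ∀ j, j ∉ r.erase i → LL ψ d r p j = 0 := by
    intro j hj
    by_cases hji : j = i
    · rw [hji, h0]
    · exact k1 j fun h => hj (Finset.mem_erase.2 ⟨hji, h⟩)
  have hc : (r.erase i).card = 2 := by rw [Finset.card_erase_of_mem hi, S.face_card r hr]
  obtain ⟨a, b, hab, hr2⟩ := Finset.card_eq_two.1 hc
  have s1 : LL ψ d r p a + LL ψ d r p b = 1 := by
    rw [← k2, sum_supp _ hk, hr2, Finset.sum_pair hab]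
  have s2 : LL ψ d r p a • ψ a + LL ψ d r p b • ψ b = p + HH ψ d r p • d := by
    rw [← k3]
    unfold bc
    rw [sum_supp (t := r.erase i) _ (fun j hj => by rw [hk j hj, zero_smul]), hr2,
      Finset.sum_pair hab]
  have hH : HH ψ d r p = 0 := by
    refine G.hd _ (G.hψ a) _ hX _ (G.hψ b) (LL ψ d r p a) (LL ψ d r p b) _ ?_
    have : LL ψ d r p a • (ψ a - p) + LL ψ d r p b • (ψ b - p) =
        (LL ψ d r p a • ψ a + LL ψ d r p b • ψ b) - (LL ψ d r p a + LL ψ d r p b) • p := by module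
    rw [this, s1, s2]
    module
  obtain ⟨l, l1, l2, l3, l4⟩ := hp
  have heq := G.indep2 (e ∪ r.erase i) (le_trans (Finset.card_union_le _ _) (by rw [he, hc]))
    l (LL ψ d r p) (fun j hj => l1 j fun h => hj (Finset.mem_union_left _ h))
    (fun j hj => hk j fun h => hj (Finset.mem_union_right _ h)) (by rw [l3, k2])
    (by rw [l4, k3, hH]; simp)
  intro j hj
  by_contra hjr
  have h1 := l2 j hj
  rw [heq j, hk j hjr] at h1
  exact lt_irrefl _ h1

theorem Geo.germ_indep (G : Geo S ψ d X) (N : NoT S) {t s r e : Finset V} (ht : t ∈ S.faces)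
    (hs : s ∈ S.faces) (hr : r ∈ S.faces) (hd : Disjoint t s) (het : e ⊆ t) (hec : e.card = 2)
    {p : E3} (hX : p ∈ X) (he : Rel ψ e p) (hps : Rel ψ s p) (her : ¬ e ⊆ r) (hsr : r ≠ s) (y : E3) :
    Germ ψ d r r p y ↔ (∀ i ∈ r, 0 < LL ψ d r p i) ∧ 0 < HH ψ d r p := by
  have h1 : ∀ i ∈ r, LL ψ d r p i ≠ 0 := fun i hi h =>
    her ((G.LLp_ne hr hec hX he hi h).trans (Finset.erase_subset _ _))
  constructor
  · rintro ⟨g1, g2⟩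
    have g1' : ∀ i ∈ r, 0 < LL ψ d r p i := fun i hi => by
      rcases g1 i hi with h | h
      · exact h
      · exact absurd h.1 (h1 i hi)
    refine ⟨g1', ?_⟩
    rcases g2 with h | h
    · exact h
    · exact (G.trip N ht hs hr hd het (Finset.Subset.refl s) he hps
        (G.hull_of hr h.1 fun i hi => (g1' i hi).le) her
        fun h' => hsr (face_eq_of_subset S hs hr h').symm).elim
  · rintro ⟨g1, g2⟩
    exact ⟨fun i hi => Or.inl (g1 i hi), Or.inl g2⟩

/-- Parity of the number of further faces above the double curve of `t, s` near a node. -/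
noncomputable def bb (S : CombClosedSurface V) (ψ : V → E3) (d : E3) (p : E3) (t s : Finset V)
    (k : V) : ZMod 2 :=
  ∑ r ∈ (S.faces.erase t).erase s, ind (Germ ψ d r r p (ψ k))

theorem bb_symm (p : E3) (t s : Finset V) (k : V) : bb S ψ d p t s k = bb S ψ d p s t k := by
  unfold bb
  rw [Finset.erase_right_comm]

theorem Geo.germ_FO (G : Geo S ψ d X) {t t' v w x a} (W : Wing S t t' v w x a) {p : E3}
    (hp : Rel ψ {v, w} p) : Germ ψ d t' t' p (ψ x) ↔ FO ψ d t' a x := by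
  obtain ⟨l, l1, l2, l3, l4⟩ := hp
  have hsub : ({v, w} : Finset V) ⊆ t' := by
    rw [W.et']; intro z hz; simp at hz ⊢; tauto
  obtain ⟨e1, e2⟩ := G.LH_of_bc W.ht' (fun i hi => l1 i fun h => hi (hsub h)) l3 l4
  have la : l a = 0 := l1 a (by simp [W.va.symm, W.wa.symm])
  unfold Germ FO
  simp only [e1, e2, lt_irrefl, false_or, true_and]
  refine and_congr ?_ Iff.rfl
  constructor
  · intro h
    have := h a (by rw [W.et']; simp)
    simpa [la] using this
  · intro h i hi
    by_cases hiv : i ∈ ({v, w} : Finset V)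
    · exact Or.inl (l2 i hiv)
    · have : i = a := by
        rw [W.et'] at hi
        simp at hi hiv
        tauto
      subst this
      exact Or.inr ⟨la, h⟩

theorem Geo.C_eq (G : Geo S ψ d X) (N : NoT S) (O : Ord S) {t t' v w x a}
    (W : Wing S t t' v w x a) {s : Finset V} (hs : s ∈ S.faces) (hP : Pierce ψ {v, w} s) :
    bb S ψ d (pp ψ {v, w} s) t s x + bb S ψ d (pp ψ {v, w} s) t' s a = fold S ψ d O {v, w} := by
  obtain ⟨p1, p2⟩ := pp_spec hP
  have hX := G.hpp _ _ hP
  set p := pp ψ {v, w} s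
  have hsub : ({v, w} : Finset V) ⊆ t := by
    rw [W.et]; intro z hz; simp at hz ⊢; tauto
  have hsub' : ({v, w} : Finset V) ⊆ t' := by
    rw [W.et']; intro z hz; simp at hz ⊢; tauto
  have hc := Finset.card_pair W.vw
  have d1 := G.pierce_disj W.ht hs hsub hc hP
  have d2 := G.pierce_disj W.ht' hs hsub' hc hP
  have n1 : t ≠ s := by
    rintro rfl
    exact Finset.disjoint_left.1 d1 (hsub (show v ∈ _ by simp)) (hsub (show v ∈ _ by simp))
  have n2 : t' ≠ s := by
    rintro rfl
    exact Finset.disjoint_left.1 d2 (hsub' (show v ∈ _ by simp)) (hsub' (show v ∈ _ by simp))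
  have split : ∀ {t t' x a}, Wing S t t' v w x a → t' ≠ s → bb S ψ d p t s x = ind (FO ψ d t' a x) +
      ∑ r ∈ ((S.faces.erase t).erase s).erase t', ind (Germ ψ d r r p (ψ x)) := by
    intro t t' x a W n2
    unfold bb
    rw [← Finset.add_sum_erase _ _ (show t' ∈ (S.faces.erase t).erase s from
      Finset.mem_erase.2 ⟨n2, Finset.mem_erase.2 ⟨W.ne.symm, W.ht'⟩⟩)]
    congr 1
    exact ind_congr (G.germ_FO W p1)
  rw [split W n2, split W.swap n1, G.fold_eq O W]
  have hset : ((S.faces.erase t').erase s).erase t = ((S.faces.erase t).erase s).erase t' := by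
    ext r; simp only [Finset.mem_erase]; tauto
  have hsum : ∑ r ∈ ((S.faces.erase t').erase s).erase t, ind (Germ ψ d r r p (ψ a)) =
      ∑ r ∈ ((S.faces.erase t).erase s).erase t', ind (Germ ψ d r r p (ψ x)) := by
    rw [hset]
    refine Finset.sum_congr rfl fun r hr => ind_congr ?_
    simp only [Finset.mem_erase] at hr
    have hns := W.not_sub (r := r) (by simp only [Finset.mem_erase]; tauto)
    have her : ¬ ({v, w} : Finset V) ⊆ r := fun h => hns.2 ⟨h (by simp), h (by simp)⟩
    rw [G.germ_indep N W.ht hs hns.1 d1 hsub hc hX p1 p2 her hr.2.1,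
      G.germ_indep N W.ht hs hns.1 d1 hsub hc hX p1 p2 her hr.2.1]
  rw [hsum]
  linear_combination add_self2
    (∑ r ∈ ((S.faces.erase t).erase s).erase t', ind (Germ ψ d r r p (ψ x)))

theorem Geo.germ_node (G : Geo S ψ d X) (N : NoT S) {t s r : Finset V} (ht : t ∈ S.faces)
    (hs : s ∈ S.faces) (hr : r ∈ S.faces) (hd : Disjoint t s) (hrs : r ≠ s)
    {k k' : V} (hk : k ∈ t) (hkk : k' ≠ k) {p p' : E3} (hX : p ∈ X) (h0 : Rel ψ (t.erase k) p)
    (hps : Rel ψ s p) (h1 : Rel ψ (t.erase k') p') :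
    Germ ψ d r r p p' ↔ Germ ψ d r r p (ψ k) := by
  by_cases her : t.erase k ⊆ r
  · obtain ⟨l, l1, l2, l3, l4⟩ := h0
    obtain ⟨m, m1, m2, m3, m4⟩ := h1
    have mk : 0 < m k := m2 k (Finset.mem_erase.2 ⟨hkk.symm, hk⟩)
    obtain ⟨e1, e2⟩ := G.LH_of_bc hr (fun i hi => l1 i fun h => hi (her h)) l3 l4
    obtain ⟨f1, f2⟩ := G.LH_bc hr m m3
    rw [m4] at f1 f2
    have red : ∀ f : V → ℝ, (∀ j ∈ t.erase k, f j = 0) → ∑ j, m j * f j = m k * f k := by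
      intro f hf
      refine Finset.sum_eq_single k (fun j _ hjk => ?_) (by simp)
      by_cases hj : j ∈ t
      · rw [hf j (Finset.mem_erase.2 ⟨hjk, hj⟩), mul_zero]
      · rw [m1 j fun h => hj (Finset.mem_of_mem_erase h), zero_mul]
    have gH : HH ψ d r p' = m k * HH ψ d r (ψ k) := by
      rw [f2, red (fun j => HH ψ d r (ψ j)) fun j hj => (G.LH_vert hr (her hj)).2.2]
    have gL : ∀ i, i ∉ t.erase k → LL ψ d r p' i = m k * LL ψ d r (ψ k) i := by
      intro i hi
      rw [f1, red (fun j => LL ψ d r (ψ j) i) fun j hj =>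
        (G.LH_vert hr (her hj)).2.1 i fun h => hi (h ▸ hj)]
    unfold Germ
    refine and_congr (forall₂_congr fun i hi => ?_) ?_
    · by_cases hie : i ∈ t.erase k
      · have := l2 i hie
        simp [e1, this]
      · rw [e1, l1 i hie, gL i hie, mul_pos_iff_of_pos_left mk]
    · rw [e2, gH, mul_pos_iff_of_pos_left mk]
  · have hc : (t.erase k).card = 2 := by rw [Finset.card_erase_of_mem hk, S.face_card t ht]
    rw [G.germ_indep N ht hs hr hd (Finset.erase_subset _ _) hc hX h0 hps her hrs,
      G.germ_indep N ht hs hr hd (Finset.erase_subset _ _) hc hX h0 hps her hrs]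

theorem Geo.germ_node' (G : Geo S ψ d X) (N : NoT S) {t s r : Finset V} (ht : t ∈ S.faces)
    (hs : s ∈ S.faces) (hr : r ∈ S.faces) (hd : Disjoint t s) (hrt : r ≠ t) (hrs : r ≠ s)
    {k k' : V} (hk : k ∈ t ∪ s) (hkk : k' ≠ k) {p p' : E3} (hX : p ∈ X) (h0 : Node ψ t s k p)
    (h1 : Node ψ t s k' p') :
    Germ ψ d r r p p' ↔ Germ ψ d r r p (ψ k) := by
  rcases Finset.mem_union.1 hk with hk | hk
  · have h2 := h0.2
    rw [Finset.erase_eq_of_notMem (Finset.disjoint_left.1 hd hk)] at h2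
    exact G.germ_node N ht hs hr hd hrs hk hkk hX h0.1 h2 h1.1
  · have h2 := h0.1
    rw [Finset.erase_eq_of_notMem (Finset.disjoint_right.1 hd hk)] at h2
    exact G.germ_node N hs ht hr hd.symm hrt hk hkk hX h0.2 h2 h1.2

theorem rel_between {t : Finset V} {k k' : V} (hkk : k' ≠ k) {p p' : E3}
    (h0 : Rel ψ (t.erase k) p) (h1 : Rel ψ (t.erase k') p') {τ : ℝ} (t0 : 0 < τ) (t1 : τ < 1) :
    Rel ψ t (pt p p' τ) := by
  obtain ⟨l, l1, l2, l3, l4⟩ := h0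
  obtain ⟨m, m1, m2, m3, m4⟩ := h1
  have hl : ∀ i, 0 ≤ l i := fun i => by
    by_cases hi : i ∈ t.erase k
    · exact (l2 i hi).le
    · rw [l1 i hi]
  have hm : ∀ i, 0 ≤ m i := fun i => by
    by_cases hi : i ∈ t.erase k'
    · exact (m2 i hi).le
    · rw [m1 i hi]
  have t2 : 0 < 1 - τ := by linarith
  refine ⟨fun i => (1 - τ) * l i + τ * m i, fun i hi => ?_, fun i hi => ?_, ?_, ?_⟩
  · dsimp only
    rw [l1 i fun h => hi (Finset.mem_of_mem_erase h), m1 i fun h => hi (Finset.mem_of_mem_erase h)]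
    ring
  · by_cases hik : i = k
    · have := m2 i (Finset.mem_erase.2 ⟨fun h => hkk (h ▸ hik), hi⟩)
      have := hl i
      positivity
    · have := l2 i (Finset.mem_erase.2 ⟨hik, hi⟩)
      have := hm i
      positivity
  · rw [Finset.sum_add_distrib, ← Finset.mul_sum, ← Finset.mul_sum, l3, m3]; ring
  · rw [bc_add, bc_smul, bc_smul, l4, m4]; rfl

theorem Geo.HH_hull (G : Geo S ψ d X) {t : Finset V} (ht : t ∈ S.faces) {k : V} {p : E3}
    (h : Rel ψ (t.erase k) p) : HH ψ d t p = 0 := by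
  obtain ⟨l, l1, l2, l3, l4⟩ := h
  exact (G.LH_of_bc ht (fun i hi => l1 i fun h => hi (Finset.mem_of_mem_erase h)) l3 l4).2

theorem node_ed {t s : Finset V} (ht : t ∈ S.faces) (hs : s ∈ S.faces) {k : V} (hk : k ∈ t ∪ s)
    {p : E3} (h : Node ψ t s k p) : (ed t s k).card = 2 ∧ Rel ψ (ed t s k) p := by
  unfold ed
  split_ifs with hkt
  · exact ⟨by rw [Finset.card_erase_of_mem hkt, S.face_card t ht], h.1⟩
  · have hks : k ∈ s := (Finset.mem_union.1 hk).resolve_left hkt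
    exact ⟨by rw [Finset.card_erase_of_mem hks, S.face_card s hs], h.2⟩

theorem Geo.G3 (G : Geo S ψ d X) (N : NoT S) {t s : Finset V} (ht : t ∈ S.faces)
    (hs : s ∈ S.faces) (hd : Disjoint t s) {k k' : V} (hk : k ∈ t ∪ s) (hk' : k' ∈ t ∪ s)
    (hkk : k' ≠ k) {p p' : E3} (hX : p ∈ X) (hX' : p' ∈ X) (h0 : Node ψ t s k p)
    (h1 : Node ψ t s k' p') : bb S ψ d p t s k = bb S ψ d p' t s k' := by
  let Φ : Finset V → ZMod 2 := fun e => ind (EO ψ d e e p p')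
  have hne : t ≠ s := by
    rintro rfl
    have := (S.face_card t ht)
    rw [disjoint_self.1 hd] at this
    simp at this
  have key : ∀ r ∈ (S.faces.erase t).erase s, ind (Germ ψ d r r p (ψ k)) +
      ind (Germ ψ d r r p' (ψ k')) + ∑ i ∈ r, Φ (r.erase i) = 0 := by
    intro r hr
    simp only [Finset.mem_erase] at hr
    obtain ⟨hrs, hrt, hr⟩ := hr
    have ntr : ¬ t ⊆ r := fun h => hrt (face_eq_of_subset S ht hr h).symm
    have nsr : ¬ s ⊆ r := fun h => hrs (face_eq_of_subset S hs hr h).symm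
    have hrel : ∀ τ : ℝ, 0 < τ → τ < 1 → Rel ψ t (pt p p' τ) ∧ Rel ψ s (pt p p' τ) :=
      fun τ a b => ⟨rel_between hkk h0.1 h1.1 a b, rel_between hkk h0.2 h1.2 a b⟩
    have htrip : ∀ τ : ℝ, 0 < τ → τ < 1 → HH ψ d r (pt p p' τ) = 0 →
        (∀ i ∈ r, 0 ≤ LL ψ d r (pt p p' τ) i) → False := fun τ a b c e =>
      G.trip N ht hs hr hd (Finset.Subset.refl t) (Finset.Subset.refl s) (hrel τ a b).1
        (hrel τ a b).2 (G.hull_of hr c e) ntr nsr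
    have hCr : ¬ Cr ψ d r r p p' := by
      rintro ⟨τ, a, b, c, e⟩
      exact htrip τ a b c fun i hi => (e i hi).le
    have gl := G.GL hr r (Finset.Subset.refl r) p p' ?_ ?_ ?_ (fun h => (hCr h).elim)
    · rw [ind_false hCr, ind_congr (G.germ_node' N ht hs hr hd hrt hrs hk hkk hX h0 h1),
        ind_congr (G.germ_node' N ht hs hr hd hrt hrs hk' hkk.symm hX' h1 h0), add_zero] at gl
      exact gl
    · intro τ a b i hi j hj hij hLi hLj
      obtain ⟨c, hic, hjc, er⟩ := tri_of_mem (S.face_card r hr) hi hj hij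
      obtain ⟨k1, k2, k3⟩ := G.LH_spec hr (pt p p' τ)
      have hz : ∀ l, l ≠ c → LL ψ d r (pt p p' τ) l = 0 := by
        intro l hl
        by_cases hlr : l ∈ r
        · rw [er] at hlr
          simp at hlr
          rcases hlr with rfl | rfl | rfl
          · exact hLi
          · exact hLj
          · exact absurd rfl hl
        · exact k1 l hlr
      have hone : LL ψ d r (pt p p' τ) c = 1 := by
        rw [← k2, Finset.sum_eq_single c (fun l _ hl => hz l hl) (by simp)]
      have hbc : ψ c = pt p p' τ + HH ψ d r (pt p p' τ) • d := by
        rw [← k3]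
        unfold bc
        rw [Finset.sum_eq_single c (fun l _ hl => by rw [hz l hl, zero_smul]) (by simp), hone,
          one_smul]
      have hH : HH ψ d r (pt p p' τ) = 0 := by
        have := G.hd _ hX _ (G.hψ c) _ hX' (-(1 - τ)) (-τ) (HH ψ d r (pt p p' τ)) (by
          have e : HH ψ d r (pt p p' τ) • d = ψ c - pt p p' τ := by rw [hbc]; module
          rw [e]
          unfold pt
          module)
        exact this
      rw [hH, zero_smul, add_zero] at hbc
      obtain ⟨l, l1, l2, l3, l4⟩ := (hrel τ a b).1
      have heq := G.indep2 (insert c t) (le_trans (Finset.card_insert_le _ _)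
        (by rw [S.face_card t ht])) l (Pi.single c 1)
        (fun i hi => l1 i fun h => hi (Finset.mem_insert_of_mem h))
        (fun i hi => by
          have : i ≠ c := fun h => hi (by rw [h]; simp)
          simp [this])
        (by rw [l3, sum_single]) (by rw [l4, bc_single, hbc])
      have hts : t ⊆ {c} := by
        intro z hz
        by_contra hzc
        have h3 := l2 z hz
        simp at hzc
        rw [heq z] at h3
        simp [hzc] at h3
      have := Finset.card_le_card hts
      rw [S.face_card t ht] at this
      simp at this
    · intro τ a b i hi _ hH hL
      exact htrip τ a b hH hL
    · intro i hi ha hb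
      obtain ⟨c1, c2⟩ := node_ed ht hs hk h0
      obtain ⟨c3, c4⟩ := node_ed ht hs hk' h1
      have hc : (r.erase i).card = 2 := by rw [Finset.card_erase_of_mem hi, S.face_card r hr]
      have e1 := Finset.eq_of_subset_of_card_le (G.LLp_ne hr c1 hX c2 hi ha) (by rw [hc, c1])
      have e2 := Finset.eq_of_subset_of_card_le (G.LLp_ne hr c3 hX' c4 hi hb) (by rw [hc, c3])
      exact hkk (ed_inj S ht hs hd hk hk' (e1.trans e2.symm)).symm
  have tot : ∑ r ∈ (S.faces.erase t).erase s, ∑ i ∈ r, Φ (r.erase i) = 0 := by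
    rw [Finset.sum_erase, Finset.sum_erase]
    · exact edge_parity S Φ
    · exact Finset.sum_eq_zero fun i _ => ind_false
        (G.EO_false ht (Finset.erase_subset _ _) (G.HH_hull ht h0.1) (G.HH_hull ht h1.1))
    · exact Finset.sum_eq_zero fun i _ => ind_false
        (G.EO_false hs (Finset.erase_subset _ _) (G.HH_hull hs h0.2) (G.HH_hull hs h1.2))
  have := Finset.sum_congr rfl key
  rw [Finset.sum_add_distrib, Finset.sum_add_distrib, tot, add_zero, Finset.sum_const_zero] at this
  exact eq_of_add2 this

end Triple
end NoTriple

namespace NoTriple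

set_option linter.unusedSectionVars false

section Final
variable {V : Type*} [DecidableEq V] [Fintype V]
variable {S : CombClosedSurface V} {ψ : V → E3} {d : E3} {X : Set E3}

/-- Contribution of the nodes on the boundary of `t`. -/
noncomputable def Gam (S : CombClosedSurface V) (ψ : V → E3) (d : E3) (t s : Finset V) : ZMod 2 :=
  ∑ k ∈ t, ind (Pierce ψ (t.erase k) s) * bb S ψ d (pp ψ (t.erase k) s) t s k

theorem Geo.fold_sum (G : Geo S ψ d X) (N : NoT S) (O : Ord S) {s : Finset V} (hs : s ∈ S.faces) :
    ∑ e ∈ S.edgeSet, fold S ψ d O e * ind (Pierce ψ e s) = ∑ t ∈ S.faces, Gam S ψ d t s := by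
  let φ : Finset V → Finset V → ZMod 2 := fun e t =>
    ind (Pierce ψ e s) * ∑ k ∈ t \ e, bb S ψ d (pp ψ e s) t s k
  have h1 : ∀ t ∈ S.faces, Gam S ψ d t s = ∑ i ∈ t, φ (t.erase i) t := by
    intro t ht
    refine Finset.sum_congr rfl fun i hi => ?_
    have : t \ t.erase i = {i} := by
      ext z
      simp only [Finset.mem_sdiff, Finset.mem_erase, Finset.mem_singleton]
      constructor
      · rintro ⟨a, b⟩
        by_contra h
        exact b ⟨h, a⟩
      · rintro rfl
        exact ⟨hi, fun h => h.1 rfl⟩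
    simp only [φ, this, Finset.sum_singleton]
  rw [Finset.sum_congr rfl h1, ← edge_face_sum S φ]
  refine Finset.sum_congr rfl fun e he => ?_
  by_cases hP : Pierce ψ e s
  · obtain ⟨hc, t, ht, het⟩ := (mem_edgeSet S).1 he
    obtain ⟨v, w, hvw, rfl⟩ := Finset.card_eq_two.1 hc
    obtain ⟨t', x, a, W⟩ := exists_wing ht (het (show v ∈ _ by simp))
      (het (show w ∈ _ by simp)) hvw
    rw [W.hf, Finset.sum_pair W.ne]
    have e1 : t \ {v, w} = {x} := by
      rw [W.et]
      ext z
      have := W.vx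
      have := W.wx
      simp only [Finset.mem_sdiff, Finset.mem_insert, Finset.mem_singleton]
      grind
    have e2 : t' \ {v, w} = {a} := by
      rw [W.et']
      ext z
      have := W.va
      have := W.wa
      simp only [Finset.mem_sdiff, Finset.mem_insert, Finset.mem_singleton]
      grind
    simp only [φ, e1, e2, Finset.sum_singleton, ind_true hP, one_mul, mul_one]
    exact (G.C_eq N O W hs hP).symm
  · simp [φ, ind_false hP]

theorem Geo.Gam_nd (G : Geo S ψ d X) {t s : Finset V} (ht : t ∈ S.faces) (hs : s ∈ S.faces)
    (hd : ¬ Disjoint t s) : Gam S ψ d t s = 0 := by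
  refine Finset.sum_eq_zero fun k hk => ?_
  rw [ind_false, zero_mul]
  intro hP
  exact hd (G.pierce_disj ht hs (Finset.erase_subset _ _)
    (by rw [Finset.card_erase_of_mem hk, S.face_card t ht]) hP)

theorem Geo.Gam_add (G : Geo S ψ d X) (N : NoT S) {t s : Finset V} (ht : t ∈ S.faces)
    (hs : s ∈ S.faces) : Gam S ψ d t s + Gam S ψ d s t = 0 := by
  by_cases hd : Disjoint t s
  swap
  · rw [G.Gam_nd ht hs hd, G.Gam_nd hs ht fun h => hd h.symm, add_zero]
  let F : V → ZMod 2 := fun k =>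
    if k ∈ t then ind (Pierce ψ (t.erase k) s) * bb S ψ d (pp ψ (t.erase k) s) t s k
    else ind (Pierce ψ (s.erase k) t) * bb S ψ d (pp ψ (s.erase k) t) t s k
  have hsum : Gam S ψ d t s + Gam S ψ d s t = ∑ k ∈ t ∪ s, F k := by
    rw [Finset.sum_union hd]
    congr 1
    · exact Finset.sum_congr rfl fun k hk => by simp only [F, if_pos hk]
    · refine Finset.sum_congr rfl fun k hk => ?_
      simp only [F, if_neg (Finset.disjoint_right.1 hd hk)]
      rw [bb_symm]
  have hF : ∀ k ∈ t ∪ s, (∃ p, Node ψ t s k p) →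
      ∃ p ∈ X, Node ψ t s k p ∧ F k = bb S ψ d p t s k := by
    intro k hk hn
    obtain ⟨q, hq1, hq2⟩ := hn
    by_cases hkt : k ∈ t
    · have es : s.erase k = s := Finset.erase_eq_of_notMem (Finset.disjoint_left.1 hd hkt)
      rw [es] at hq2
      have hP : Pierce ψ (t.erase k) s := ⟨q, hq1, hq2⟩
      refine ⟨_, G.hpp _ _ hP, ⟨(pp_spec hP).1, ?_⟩, ?_⟩
      · rw [es]; exact (pp_spec hP).2
      · simp only [F, if_pos hkt, ind_true hP, one_mul]
    · have et : t.erase k = t := Finset.erase_eq_of_notMem hkt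
      rw [et] at hq1
      have hP : Pierce ψ (s.erase k) t := ⟨q, hq2, hq1⟩
      refine ⟨_, G.hpp _ _ hP, ⟨?_, (pp_spec hP).1⟩, ?_⟩
      · rw [et]; exact (pp_spec hP).2
      · simp only [F, if_neg hkt, ind_true hP, one_mul]
  have hF0 : ∀ k ∈ t ∪ s, (¬ ∃ p, Node ψ t s k p) → F k = 0 := by
    intro k hk hn
    by_cases hkt : k ∈ t
    · have es : s.erase k = s := Finset.erase_eq_of_notMem (Finset.disjoint_left.1 hd hkt)
      simp only [F, if_pos hkt]
      rw [ind_false, zero_mul]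
      rintro ⟨q, h1, h2⟩
      exact hn ⟨q, h1, by rw [es]; exact h2⟩
    · have et : t.erase k = t := Finset.erase_eq_of_notMem hkt
      simp only [F, if_neg hkt]
      rw [ind_false, zero_mul]
      rintro ⟨q, h1, h2⟩
      exact hn ⟨q, by rw [et]; exact h2, h1⟩
  rw [hsum]
  by_cases hex : ∃ k ∈ t ∪ s, ∃ p, Node ψ t s k p
  · obtain ⟨k, hk, hn⟩ := hex
    obtain ⟨k', hk', hkk, hn', hall⟩ := G.pair_second ht hs hd hk hn
    have h2 : ∑ i ∈ t ∪ s, F i = ∑ i ∈ {k, k'}, F i := by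
      symm
      refine Finset.sum_subset ?_ fun i hi hi' => hF0 i hi fun h => hi' ?_
      · intro z hz
        simp only [Finset.mem_insert, Finset.mem_singleton] at hz
        rcases hz with rfl | rfl <;> assumption
      · rcases hall i hi h with rfl | rfl <;> simp
    rw [h2, Finset.sum_pair hkk.symm]
    obtain ⟨p, hX, np, ep⟩ := hF k hk hn
    obtain ⟨p', hX', np', ep'⟩ := hF k' hk' hn'
    rw [ep, ep', G.G3 N ht hs hd hk hk' hkk hX hX' np np']
    exact add_self2 _
  · push Not at hex
    exact Finset.sum_eq_zero fun k hk => hF0 k hk fun ⟨p, h⟩ => hex k hk p h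

theorem Geo.h3 (G : Geo S ψ d X) (N : NoT S) (O : Ord S) :
    ∑ e ∈ S.edgeSet, fold S ψ d O e * nn S ψ e = 0 := by
  have h1 : ∑ e ∈ S.edgeSet, fold S ψ d O e * nn S ψ e =
      ∑ s ∈ S.faces, ∑ t ∈ S.faces, Gam S ψ d t s := by
    unfold nn
    simp only [Finset.mul_sum]
    rw [Finset.sum_comm]
    exact Finset.sum_congr rfl fun s hs => G.fold_sum N O hs
  rw [h1, ← Finset.sum_product']
  refine Finset.sum_involution (fun a _ => (a.2, a.1)) ?_ ?_ ?_ ?_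
  · rintro ⟨s, t⟩ h
    rw [Finset.mem_product] at h
    exact G.Gam_add N h.2 h.1
  · rintro ⟨s, t⟩ h hne heq
    rw [Finset.mem_product] at h
    have hts : t = s := (Prod.mk.inj heq).1
    subst hts
    refine hne (G.Gam_nd h.1 h.1 fun hd => ?_)
    have hc : t.card = 3 := S.face_card t h.1
    have ht0 : t = ⊥ := disjoint_self.1 hd
    rw [ht0] at hc
    simp at hc
  · rintro ⟨s, t⟩ h
    rw [Finset.mem_product] at h ⊢
    exact ⟨h.2, h.1⟩
  · rintro ⟨s, t⟩ h
    rfl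

theorem Geo.even (G : Geo S ψ d X) (N : NoT S) :
    Even ((Fintype.card V : ℤ) - S.edgeSet.card + S.faces.card) := by
  obtain ⟨O⟩ := exists_ord S
  exact O.euler_even (fold S ψ d O) (fun t => ind (ort ψ d (O.a t) (O.b t) (O.c t) < 0))
    (oo S ψ d) (nn S ψ) (fun e _ => rfl) (G.h1 O) G.h2 (G.h3 N O)

theorem exists_geo (S : CombClosedSurface V) (ψ : V → E3)
    (gp : ∀ s : Finset V, s.card = 4 → AffineIndependent ℝ (fun v : s => ψ v.1))
    (imm : ∀ t₁ ∈ S.faces, ∀ t₂ ∈ S.faces, t₁ ≠ t₂ → ¬ Disjoint t₁ t₂ →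
        convexHull ℝ (ψ '' ↑t₁) ∩ convexHull ℝ (ψ '' ↑t₂) ⊆
          convexHull ℝ (ψ '' ↑(t₁ ∩ t₂))) : ∃ d X, Geo S ψ d X := by
  let Y : Finset E3 := Finset.univ.image ψ ∪
    Finset.univ.image (fun es : Finset V × Finset V => pp ψ es.1 es.2)
  let W : E3 × E3 × E3 → Submodule ℝ E3 := fun a =>
    Submodule.span ℝ ({a.1 - a.2.1, a.2.2 - a.2.1} : Set E3)
  have hW : ∀ a, W a ≠ ⊤ := by
    intro a h
    have h1 := finrank_span_finset_le_card (R := ℝ) ({a.1 - a.2.1, a.2.2 - a.2.1} : Finset E3)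
    have h2 : Module.finrank ℝ (W a) = 3 := by rw [h, finrank_top]; simp
    have h3 := Finset.card_le_two (a := a.1 - a.2.1) (b := a.2.2 - a.2.1)
    rw [Finset.coe_insert, Finset.coe_singleton] at h1
    change Module.finrank ℝ (W a) ≤ _ at h1
    omega
  have hu := Subspace.biUnion_ne_univ_of_top_notMem (k := ℝ) (E := E3)
    (s := (Y ×ˢ Y ×ˢ Y).image W) (by
      intro h
      obtain ⟨a, _, ha⟩ := Finset.mem_image.1 h
      exact hW a ha)
  obtain ⟨d, hd⟩ := (Set.ne_univ_iff_exists_notMem _).1 hu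
  refine ⟨d, ↑Y, gp, imm, fun v => ?_, fun e s _ => ?_, ?_⟩
  · simp [Y]
  · simp only [Y, Finset.coe_union, Finset.coe_image]
    exact Or.inr ⟨(e, s), by simp, rfl⟩
  · intro x hx y hy z hz α β γ h
    by_contra hγ
    refine hd (Set.mem_iUnion₂.2 ⟨W (x, y, z), Finset.mem_image.2 ⟨(x, y, z), ?_, rfl⟩, ?_⟩)
    · exact Finset.mem_product.2 ⟨hx, Finset.mem_product.2 ⟨hy, hz⟩⟩
    · have e : d = γ⁻¹ • (α • (x - y) + β • (z - y)) := by rw [h, inv_smul_smul₀ hγ]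
      rw [e]
      exact (W (x, y, z)).smul_mem _ ((W (x, y, z)).add_mem
        ((W (x, y, z)).smul_mem _ (Submodule.subset_span (by simp)))
        ((W (x, y, z)).smul_mem _ (Submodule.subset_span (by simp))))

end Final
end NoTriple

/-- Let `Δ` be a triangulation of a closed surface with odd Euler
characteristic (hence non-orientable).  If `Δ` contains no three pairwise vertex-disjoint
triangles such that each of the three pairs satisfies the piercing condition, then `Δ`
admits no simplexwise linear immersion into `ℝ³` with vertices in general position
(general position: every four vertex images are affinely independent; immersion:
two faces sharing a vertex intersect only in the image of their common face). -/
theorem no_immersion_of_no_triple_point {V : Type*} [DecidableEq V] [Fintype V]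
    (S : CombClosedSurface V)
    (h_odd : Odd ((Fintype.card V : ℤ) - S.edgeSet.card + S.faces.card))
    (h_no_triple : ¬ ∃ t₁ ∈ S.faces, ∃ t₂ ∈ S.faces, ∃ t₃ ∈ S.faces,
      Disjoint t₁ t₂ ∧ Disjoint t₁ t₃ ∧ Disjoint t₂ t₃ ∧
      S.PiercingCond t₁ t₂ ∧ S.PiercingCond t₁ t₃ ∧ S.PiercingCond t₂ t₃) :
    ¬ ∃ ψ : V → EuclideanSpace ℝ (Fin 3),
      (∀ s : Finset V, s.card = 4 → AffineIndependent ℝ (fun v : s => ψ v.1)) ∧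
      (∀ t₁ ∈ S.faces, ∀ t₂ ∈ S.faces, t₁ ≠ t₂ → ¬ Disjoint t₁ t₂ →
        convexHull ℝ (ψ '' ↑t₁) ∩ convexHull ℝ (ψ '' ↑t₂) ⊆
          convexHull ℝ (ψ '' ↑(t₁ ∩ t₂))) := by
  rintro ⟨ψ, gp, imm⟩
  obtain ⟨d, X, G⟩ := NoTriple.exists_geo S ψ gp imm
  exact (Int.not_even_iff_odd.2 h_odd) (G.even h_no_triple)
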